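/- arXiv:1801.10485 — 4 statements merged into one kernel-verified Lean document; each statement's English description precedes it below -/
import Mathlib

section
/- Let X be a smooth projective variety of dimension 2d over ℂ and let ℰ ∈ D^b(X) be a ℙ^d-object with associated ℙ^d-twist P_ℰ. Then for every real number t ≤ 0, the categorical entropy satisfies h_t(P_ℰ) = -2dt. -/
open CategoryTheory CategoryTheory.Limits CategoryTheory.Pretriangulated Filter

universe v u

variable (C : Type u) [Category.{v} C] [Preadditive C] [HasZeroObject C]
  [HasShift C ℤ] [∀ n : ℤ, (shiftFunctor C n).Additive] [Pretriangulated C]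
  [HasFiniteBiproducts C] [CategoryTheory.Linear ℂ C]
  [∀ X Y : C, Module.Finite ℂ (X ⟶ Y)]

/-- `BuildVal E t B r` : the object `B` can be built from the zero object by a tower of
`k` distinguished triangles whose successive cones are shifts `E⟦nᵢ⟧` of `E`,
with total weight `r = ∑ᵢ exp(nᵢ t)`. -/
inductive BuildVal (E : C) (t : ℝ) : C → ℝ → Prop
  | zero (Z : C) (hZ : IsZero Z) : BuildVal E t Z 0
  | step (A B : C) (n : ℤ) (r : ℝ)
      (f : A ⟶ B) (g : B ⟶ (shiftFunctor C n).obj E)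
      (h : (shiftFunctor C n).obj E ⟶ (shiftFunctor C (1 : ℤ)).obj A)
      (hT : Triangle.mk f g h ∈ distTriang C)
      (hA : BuildVal E t A r) :
      BuildVal E t B (r + Real.exp ((n : ℝ) * t))

/-- The set of weights `∑ᵢ exp(nᵢ t)` of towers of distinguished triangles with cones
shifts of `E`, ending at an object isomorphic to `F ⊕ F'` for some `F'`. -/
def complexitySet (E F : C) (t : ℝ) : Set ℝ :=
  {r | ∃ B F' : C, BuildVal C E t B r ∧ Nonempty (B ≅ F ⊞ F')}

/-- The complexity `δ_t(E, F)` of `F` relative to `E` (Dimitrov–Haiden–Katzarkov–Kontsevich). -/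
noncomputable def complexity (E F : C) (t : ℝ) : ℝ :=
  sInf (complexitySet C E F t)

/-- `F` lies in the split closure `⟨E⟩` of `E` (expressed via towers). -/
def InSplitClosure (E F : C) : Prop :=
  (complexitySet C E F 0).Nonempty

/-- `G` is a split generator of the triangulated category. -/
def IsSplitGenerator (G : C) : Prop :=
  ∀ F : C, InSplitClosure C G F

/-- The right orthogonal `E^⊥ = {F : Hom^*(E,F) = 0}`. -/
def rightOrthogonal (E : C) : Set C :=
  {F | ∀ (n : ℤ) (f : E ⟶ (shiftFunctor C n).obj F), f = 0}

/-- A `ℙ^d`-object in a ℂ-linear triangulated category (an abstract model of a `ℙ^d`-object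
in `D^b(X)` for `X` smooth projective of dimension `2d` over `ℂ`, in the sense of
Huybrechts–Thomas): `E` is a `2d`-Calabi–Yau object (the Serre-duality reformulation of
`E ⊗ ω_X ≅ E`) and the graded ring `Hom^*(E,E)` is isomorphic to
`H^*(ℙ^d; ℂ) = ℂ[h]/(h^{d+1})`, `deg h = 2`: the graded pieces `Hom^{2k}(E,E)`, `0 ≤ k ≤ d`,
are one-dimensional, spanned by the powers `h^k`, and all other graded pieces vanish. -/
structure PdObject (d : ℕ) where
  E : C
  nonzero : ¬ IsZero E
  /-- Serre-duality form of `E ⊗ ω_X ≅ E` on a `2d`-dimensional variety: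
  `Hom(E, F) ≅ Hom(F, E[2d])^∨` for every `F`. -/
  CY : ∀ F : C, (E ⟶ F) ≃ₗ[ℂ] Module.Dual ℂ (F ⟶ (shiftFunctor C (2 * (d : ℤ))).obj E)
  /-- a generator `h ∈ Hom²(E, E)`. -/
  h : E ⟶ (shiftFunctor C (2 : ℤ)).obj E
  /-- the powers `h^k ∈ Hom^{2k}(E, E)` of `h`. -/
  hpow : ∀ k : ℕ, (E ⟶ (shiftFunctor C (2 * (k : ℤ))).obj E)
  hpow_zero : hpow 0 = (shiftFunctorZero' C (2 * ((0 : ℕ) : ℤ)) (by simp)).inv.app E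
  hpow_succ : ∀ k : ℕ,
    hpow (k + 1) = h ≫ (shiftFunctor C (2 : ℤ)).map (hpow k) ≫
      (shiftFunctorAdd' C (2 * (k : ℤ)) (2 : ℤ) (2 * ((k + 1 : ℕ) : ℤ))
        (by push_cast; ring)).inv.app E
  /-- `Hom^{2k}(E,E)` is one-dimensional for `0 ≤ k ≤ d`. -/
  hom_rank_one : ∀ k : ℕ, k ≤ d →
    Module.finrank ℂ (E ⟶ (shiftFunctor C (2 * (k : ℤ))).obj E) = 1
  /-- all other graded pieces of `Hom^*(E,E)` vanish. -/
  hom_rank_zero : ∀ n : ℤ, (¬ ∃ k : ℕ, k ≤ d ∧ n = 2 * (k : ℤ)) →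
    ∀ f : E ⟶ (shiftFunctor C n).obj E, f = 0
  /-- the powers `h^k`, `k ≤ d`, are nonzero (so they span the graded pieces). -/
  hpow_ne_zero : ∀ k : ℕ, k ≤ d → hpow k ≠ 0

/-- The `ℙ^d`-twist `P_E` associated to a `ℙ^d`-object `E` (Huybrechts–Thomas):
an autoequivalence `P` such that each `P(F)` is obtained by the double cone construction
`P(F) = Cone(Cone(Hom^{*-2}(E,F) ⊗ E → Hom^*(E,F) ⊗ E) → F)`.
Here `H F` models the object `Hom^*(E,F) ⊗ E`, i.e. the finite direct sum of shifts
`E[-n]` with multiplicity `dim Hom^n(E,F)`, so that `Hom^{*-2}(E,F) ⊗ E = (H F)[-2]`;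
`θ F` models the map `h^∨·id − id·h`; `T F` models its cone; and `P F` is the cone of
the induced evaluation map `T F → F`. -/
structure PdTwist (d : ℕ) extends PdObject C d where
  /-- the twist autoequivalence. -/
  P : C ≌ C
  /-- the twist commutes with the shift functors. -/
  commShift : P.functor.CommShift ℤ
  /-- `H F` models `Hom^*(E,F) ⊗ E`. -/
  H : C → C
  /-- `H F` is a finite direct sum of shifts `E[-n]`, with multiplicity
  `dim_ℂ Hom^n(E,F)` for each `n`. -/
  H_iso : ∀ F : C, ∃ (k : ℕ) (ns : Fin k → ℤ),
    Nonempty (H F ≅ biproduct (fun i => (shiftFunctor C (ns i)).obj E)) ∧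
    ∀ n : ℤ, (Finset.univ.filter fun i => ns i = -n).card
        = Module.finrank ℂ (E ⟶ (shiftFunctor C n).obj F)
  /-- the map `h^∨·id − id·h : Hom^{*-2}(E,F) ⊗ E → Hom^*(E,F) ⊗ E`. -/
  θ : ∀ F : C, (shiftFunctor C (-2 : ℤ)).obj (H F) ⟶ H F
  /-- the inner cone `T F = Cone(θ F)`. -/
  T : C → C
  ι : ∀ F : C, H F ⟶ T F
  π : ∀ F : C, T F ⟶ (shiftFunctor C (1 : ℤ)).obj ((shiftFunctor C (-2 : ℤ)).obj (H F))
  innerTri : ∀ F : C, Triangle.mk (θ F) (ι F) (π F) ∈ distTriang C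
  /-- the map `T F → F` induced by the evaluation `Hom^*(E,F) ⊗ E → F`. -/
  ev : ∀ F : C, T F ⟶ F
  η : ∀ F : C, F ⟶ P.functor.obj F
  dl : ∀ F : C, P.functor.obj F ⟶ (shiftFunctor C (1 : ℤ)).obj (T F)
  /-- `P F = Cone(T F → F)`. -/
  outerTri : ∀ F : C, Triangle.mk (ev F) (η F) (dl F) ∈ distTriang C

namespace PdAux

section PartA

open scoped ZeroObject

universe v' u'

variable {C : Type u'} [Category.{v'} C] [Preadditive C] [HasZeroObject C]
  [HasShift C ℤ] [∀ n : ℤ, (shiftFunctor C n).Additive] [Pretriangulated C]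

/-- Unbundled distinguished triangles. -/
def DT {A B K : C} (f : A ⟶ B) (g : B ⟶ K) (h : K ⟶ A⟦(1 : ℤ)⟧) : Prop :=
  Triangle.mk f g h ∈ distTriang C

section basics

variable {A B K : C} {f : A ⟶ B} {g : B ⟶ K} {h : K ⟶ A⟦(1 : ℤ)⟧}
  {A' B' K' : C} {f' : A' ⟶ B'} {g' : B' ⟶ K'} {h' : K' ⟶ A'⟦(1 : ℤ)⟧}

lemma DT.comp12 (H : DT f g h) : f ≫ g = 0 := comp_distTriang_mor_zero₁₂ _ H
lemma DT.comp23 (H : DT f g h) : g ≫ h = 0 := comp_distTriang_mor_zero₂₃ _ H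
lemma DT.comp31 (H : DT f g h) : h ≫ f⟦(1 : ℤ)⟧' = 0 := comp_distTriang_mor_zero₃₁ _ H

lemma DT.rot (H : DT f g h) : DT g h (-f⟦(1 : ℤ)⟧') := rot_of_distTriang _ H

lemma DT.tr3 (H : DT f g h) (H' : DT f' g' h') (a : A ⟶ A') (b : B ⟶ B') (e : f ≫ b = a ≫ f') :
    ∃ c : K ⟶ K', g ≫ c = b ≫ g' ∧ h ≫ a⟦(1 : ℤ)⟧' = c ≫ h' :=
  complete_distinguished_triangle_morphism _ _ H H' a b e

lemma DT.tr3m (H : DT f g h) (H' : DT f' g' h') (a : A ⟶ A') (c : K ⟶ K')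
    (e : h ≫ a⟦(1 : ℤ)⟧' = c ≫ h') :
    ∃ b : B ⟶ B', f ≫ b = a ≫ f' ∧ g ≫ c = b ≫ g' :=
  complete_distinguished_triangle_morphism₂ _ _ H H' a c e

lemma DT.yo2 (H : DT f g h) {X : C} (x : B ⟶ X) (e : f ≫ x = 0) : ∃ y : K ⟶ X, x = g ≫ y :=
  Triangle.yoneda_exact₂ _ H x e

lemma DT.yo3 (H : DT f g h) {X : C} (x : K ⟶ X) (e : g ≫ x = 0) :
    ∃ y : A⟦(1 : ℤ)⟧ ⟶ X, x = h ≫ y :=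
  Triangle.yoneda_exact₃ _ H x e

lemma DT.co1 (H : DT f g h) {X : C} (x : X ⟶ A⟦(1 : ℤ)⟧) (e : x ≫ f⟦(1 : ℤ)⟧' = 0) :
    ∃ y : X ⟶ K, x = y ≫ h :=
  Triangle.coyoneda_exact₁ _ H x e

lemma DT.co2 (H : DT f g h) {X : C} (x : X ⟶ B) (e : x ≫ g = 0) : ∃ y : X ⟶ A, x = y ≫ f :=
  Triangle.coyoneda_exact₂ _ H x e

lemma DT.co3 (H : DT f g h) {X : C} (x : X ⟶ K) (e : x ≫ h = 0) : ∃ y : X ⟶ B, x = y ≫ g :=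
  Triangle.coyoneda_exact₃ _ H x e

lemma exists_DT₁ (f : A ⟶ B) : ∃ (K : C) (g : B ⟶ K) (h : K ⟶ A⟦(1 : ℤ)⟧), DT f g h :=
  distinguished_cocone_triangle f

lemma exists_DT₃ (h : K ⟶ A⟦(1 : ℤ)⟧) : ∃ (B : C) (f : A ⟶ B) (g : B ⟶ K), DT f g h :=
  distinguished_cocone_triangle₂ h

lemma DT.iso2 (H : DT f g h) (H' : DT f' g' h') (a : A ⟶ A') (b : B ⟶ B') (c : K ⟶ K')
    (e1 : f ≫ b = a ≫ f') (e2 : g ≫ c = b ≫ g') (e3 : h ≫ a⟦(1 : ℤ)⟧' = c ≫ h')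
    [IsIso a] [IsIso c] : IsIso b :=
  isIso₂_of_isIso₁₃ (T := Triangle.mk f g h) (T' := Triangle.mk f' g' h')
    (Triangle.homMk _ _ a b c e1 e2 e3) H H' (by assumption) (by assumption)

lemma DT.of_iso (H : DT f g h) (a : A ≅ A') (b : B ≅ B') (c : K ≅ K')
    (e1 : f ≫ b.hom = a.hom ≫ f') (e2 : g ≫ c.hom = b.hom ≫ g')
    (e3 : h ≫ a.hom⟦(1 : ℤ)⟧' = c.hom ≫ h') : DT f' g' h' := by
  refine isomorphic_distinguished _ H _ (Triangle.isoMk _ _ a b c e1 e2 e3).symm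

lemma DT.ext1 (H : DT f g h) {X : C} (x : A ⟶ X) (e : h ≫ x⟦(1 : ℤ)⟧' = 0) :
    ∃ y : B ⟶ X, f ≫ y = x := by
  have H' : DT (𝟙 X) (0 : X ⟶ 0) (0 : (0 : C) ⟶ X⟦(1 : ℤ)⟧) := contractible_distinguished X
  obtain ⟨y, h1, -⟩ := H.tr3m H' x 0 (by simp [e])
  exact ⟨y, by simpa using h1⟩

lemma DT.shift (H : DT f g h) (n : ℤ) :
    ∃ h' : K⟦n⟧ ⟶ (A⟦n⟧)⟦(1 : ℤ)⟧, DT (f⟦n⟧') (g⟦n⟧') h' := by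
  have H1 : (shiftFunctor (Triangle C) n).obj (Triangle.mk f g h) ∈ distTriang C :=
    Triangle.shift_distinguished _ H n
  obtain ⟨h', H2⟩ : ∃ h' : K⟦n⟧ ⟶ (A⟦n⟧)⟦(1 : ℤ)⟧,
    DT (n.negOnePow • f⟦n⟧') (n.negOnePow • g⟦n⟧') h' := ⟨_, H1⟩
  refine ⟨h', ?_⟩
  rcases Int.even_or_odd n with hn | hn
  · simpa [Int.negOnePow_even n hn] using H2
  · rw [Int.negOnePow_odd n hn] at H2
    refine H2.of_iso (Iso.refl _) ⟨-𝟙 _, -𝟙 _, by simp, by simp⟩ (Iso.refl _) ?_ ?_ ?_ <;>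
      simp

lemma DT.biprod (X Y : C) : DT (biprod.inl : X ⟶ X ⊞ Y) biprod.snd 0 :=
  binaryBiproductTriangle_distinguished X Y

end basics

/-- Retracts of middle terms. -/
lemma DT.retract {A B K A' B' K' : C} {f : A ⟶ B} {g : B ⟶ K} {h : K ⟶ A⟦(1 : ℤ)⟧}
    {f' : A' ⟶ B'} {g' : B' ⟶ K'} {h' : K' ⟶ A'⟦(1 : ℤ)⟧}
    (H : DT f g h) (H' : DT f' g' h') (rA : Retract A A') (rK : Retract K K')
    (e1 : h ≫ rA.i⟦(1 : ℤ)⟧' = rK.i ≫ h') (e2 : h' ≫ rA.r⟦(1 : ℤ)⟧' = rK.r ≫ h) :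
    Nonempty (Retract B B') := by
  obtain ⟨b, hb1, hb2⟩ := H.tr3m H' _ _ e1
  obtain ⟨b', hb1', hb2'⟩ := H'.tr3m H _ _ e2
  have : IsIso (b ≫ b') := by
    refine H.iso2 H (𝟙 A) (b ≫ b') (𝟙 K) ?_ ?_ ?_
    · rw [← Category.assoc, hb1, Category.assoc, hb1', ← Category.assoc, rA.retract]
    · rw [Category.assoc, ← hb2', ← Category.assoc, ← hb2, Category.assoc, rK.retract]
    · simp
  exact ⟨⟨b, b' ≫ inv (b ≫ b'), by rw [← Category.assoc, IsIso.hom_inv_id]⟩⟩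

variable (G : C) (t : ℝ)

/-- `F` is a retract of an object built from `G` with weight at most `r`. -/
def Cx (F : C) (r : ℝ) : Prop :=
  ∃ (B : C) (r' : ℝ), r' ≤ r ∧ BuildVal C G t B r' ∧ Nonempty (Retract F B)

/-- Attaching `K` costs at most `s`. -/
def Qx (K : C) (s : ℝ) : Prop :=
  ∀ ⦃A B : C⦄ ⦃r : ℝ⦄ (f : A ⟶ B) (g : B ⟶ K) (h : K ⟶ A⟦(1 : ℤ)⟧), DT f g h →
    Cx G t A r → Cx G t B (r + s)

variable {G t}

lemma Cx.mono {F : C} {r s : ℝ} (h : Cx G t F r) (hrs : r ≤ s) : Cx G t F s := by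
  obtain ⟨B, r', h1, h2, h3⟩ := h
  exact ⟨B, r', h1.trans hrs, h2, h3⟩

lemma Cx.retract {F F' : C} {r : ℝ} (h : Cx G t F r) (e : Retract F' F) : Cx G t F' r := by
  obtain ⟨B, r', h1, h2, ⟨h3⟩⟩ := h
  exact ⟨B, r', h1, h2, ⟨e.trans h3⟩⟩

lemma Qx.mono {F : C} {r s : ℝ} (h : Qx G t F r) (hrs : r ≤ s) : Qx G t F s :=
  fun _ _ _ f g k H hc => (h f g k H hc).mono (by linarith)

lemma Qx.retract {K K' : C} {s : ℝ} (hQ : Qx G t K' s) (e : Retract K K') : Qx G t K s := by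
  intro A B r f g h H hc
  obtain ⟨B', f', g', H'⟩ := exists_DT₃ (e.r ≫ h)
  obtain ⟨re⟩ := H.retract H' (Retract.refl A) e (by simp) (by simp)
  exact (hQ f' g' _ H' hc).retract re

lemma Qx.of_iso {K K' : C} {s : ℝ} (hQ : Qx G t K' s) (e : K ≅ K') : Qx G t K s :=
  hQ.retract ⟨e.hom, e.inv, by simp⟩

lemma Qx.zero {Z : C} (hZ : IsZero Z) : Qx G t Z 0 := by
  intro A B r f g h H hc
  obtain ⟨s, hs⟩ := H.co2 (𝟙 B) (hZ.eq_of_tgt _ _)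
  rw [add_zero]
  exact hc.retract ⟨s, f, hs.symm⟩

lemma Qx.gen (m : ℤ) : Qx G t (G⟦m⟧) (Real.exp ((m : ℝ) * t)) := by
  intro A B r f g h H ⟨A', r', h1, h2, ⟨e⟩⟩
  obtain ⟨B', f', g', H'⟩ := exists_DT₃ (h ≫ e.i⟦(1 : ℤ)⟧')
  have hr : e.i⟦(1 : ℤ)⟧' ≫ e.r⟦(1 : ℤ)⟧' = 𝟙 _ := by
    rw [← Functor.map_comp, e.retract, CategoryTheory.Functor.map_id]
  obtain ⟨re⟩ := H.retract H' e (Retract.refl _) (by simp) (by simp [hr])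
  exact ⟨B', _, by linarith, BuildVal.step A' B' m r' f' g' _ H' h2, ⟨re⟩⟩

lemma Cx.zero {Z : C} (hZ : IsZero Z) : Cx G t Z 0 := ⟨Z, 0, le_rfl, .zero Z hZ, ⟨.refl _⟩⟩

lemma DT.id_snd (X : C) : DT (0 : (0 : C) ⟶ X) (𝟙 X) 0 := contractible_distinguished₁ X

lemma Qx.cx {K : C} {s : ℝ} (h : Qx G t K s) : Cx G t K s := by
  have := h _ _ _ (DT.id_snd K) (Cx.zero (isZero_zero C))
  rwa [zero_add] at this

lemma Cx.gen : Cx G t G 1 := by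
  have h := (Qx.gen (G := G) (t := t) 0).cx
  have e : G⟦(0 : ℤ)⟧ ≅ G := (shiftFunctorZero C ℤ).app G
  exact (h.retract ⟨e.inv, e.hom, by simp⟩).mono (by simp)

lemma Qx.ext {K1 K K3 : C} {u : K1 ⟶ K} {p : K ⟶ K3} {δ : K3 ⟶ K1⟦(1 : ℤ)⟧} (D : DT u p δ)
    {s1 s3 : ℝ} (Q1 : Qx G t K1 s1) (Q3 : Qx G t K3 s3) : Qx G t K (2 * (s1 + s3)) := by
  intro A B r a b g D0 hc
  obtain ⟨B1, a1, b1, D1⟩ := exists_DT₃ (u ≫ g)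
  have c1 := Q1 _ _ _ D1 hc
  obtain ⟨v, hv1, hv2⟩ : ∃ v : K3 ⟶ B1⟦(1 : ℤ)⟧, p ≫ v = g ≫ a1⟦(1 : ℤ)⟧' ∧
      v ≫ b1⟦(1 : ℤ)⟧' = δ := by
    obtain ⟨c, hc1, hc2⟩ := D.tr3 D1.rot.rot (𝟙 K1) g (by simp)
    refine ⟨-c, by simpa using (congrArg (fun x => -x) hc1), ?_⟩
    simpa using hc2.symm
  obtain ⟨V, q, k, DV⟩ := exists_DT₃ v
  have c2 := Q3 _ _ _ DV c1
  obtain ⟨j, hj1, hj2⟩ := D0.tr3m DV a1 p hv1.symm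
  obtain ⟨D', w, i', DD⟩ := exists_DT₁ (a1 ≫ q)
  have hi : i' ≫ a⟦(1 : ℤ)⟧' = 0 := by
    have h31 := DD.comp31
    rw [Functor.map_comp, ← Category.assoc] at h31
    obtain ⟨x, hx⟩ := DV.co1 _ h31
    have hx0 : x ≫ δ = 0 := by
      rw [← hv2, ← Category.assoc, ← hx, Category.assoc, ← Functor.map_comp, D1.comp12]
      simp
    obtain ⟨y, hy⟩ := D.co3 x hx0
    have h0 : (i' - y ≫ g) ≫ a1⟦(1 : ℤ)⟧' = 0 := by
      rw [Preadditive.sub_comp, hx, hy, Category.assoc, Category.assoc, hv1, sub_self]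
    obtain ⟨z, hz⟩ := D1.co1 _ h0
    have : i' = (y + z ≫ u) ≫ g := by
      rw [Preadditive.add_comp, Category.assoc, ← hz]; abel
    rw [this, Category.assoc, D0.comp31, comp_zero]
  obtain ⟨p', hp'⟩ := DD.ext1 a hi
  have hm0 : a ≫ (𝟙 B - j ≫ p') = 0 := by
    rw [Preadditive.comp_sub, ← Category.assoc, hj1, hp', Category.comp_id, sub_self]
  obtain ⟨m, hm⟩ := D0.yo2 _ hm0
  have R1 : Retract B (V ⊞ K) := ⟨biprod.lift j b, biprod.desc p' m, by
    rw [biprod.lift_desc, ← hm]; abel⟩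
  -- now `V ⊞ K`
  have c3 := Q1 _ _ _ (DT.biprod V K1) c2
  obtain ⟨Y, α, β, DY⟩ := exists_DT₃ (δ ≫ (biprod.inr : K1 ⟶ V ⊞ K1)⟦(1 : ℤ)⟧')
  have c4 := Q3 _ _ _ DY c3
  obtain ⟨k0, hk0, hk0'⟩ := D.tr3m DY (biprod.inr : K1 ⟶ V ⊞ K1) (𝟙 K3) (by simp)
  obtain ⟨k1, hk1, hk1'⟩ := DY.tr3m D (biprod.snd : V ⊞ K1 ⟶ K1) (𝟙 K3) (by
    rw [Category.assoc, ← Functor.map_comp]; simp)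
  obtain ⟨n, hn⟩ := DY.ext1 (biprod.fst : V ⊞ K1 ⟶ V) (by
    rw [Category.assoc, ← Functor.map_comp]; simp)
  have hiso : IsIso (k0 ≫ k1) := by
    refine D.iso2 D (𝟙 _) (k0 ≫ k1) (𝟙 _) ?_ ?_ ?_
    · rw [← Category.assoc, hk0, Category.assoc, hk1]; simp
    · rw [hk0', Category.assoc, ← hk1']; simp
    · simp
  have R2 : Retract (V ⊞ K) Y := by
    refine ⟨biprod.desc (biprod.inl ≫ α) k0,
      biprod.lift (n - k1 ≫ inv (k0 ≫ k1) ≫ k0 ≫ n) (k1 ≫ inv (k0 ≫ k1)), ?_⟩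
    have e0 : k0 ≫ k1 ≫ inv (k0 ≫ k1) = 𝟙 _ := by rw [← Category.assoc, IsIso.hom_inv_id]
    have e1 : (biprod.inl : V ⟶ V ⊞ K1) ≫ α ≫ k1 = 0 := by rw [hk1]; simp
    apply biprod.hom_ext' <;> apply biprod.hom_ext
    · simp only [biprod.inl_desc_assoc, Category.assoc, biprod.lift_fst, Preadditive.comp_sub, hn,
        Category.comp_id, biprod.inl_fst]
      rw [reassoc_of% e1]; simp
    · simp only [biprod.inl_desc_assoc, Category.assoc, biprod.lift_snd, Category.comp_id,
        biprod.inl_snd]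
      rw [reassoc_of% e1]; simp
    · simp only [biprod.inr_desc_assoc, Category.assoc, biprod.lift_fst, Preadditive.comp_sub,
        Category.comp_id, biprod.inr_fst]
      rw [reassoc_of% e0]; simp
    · simp only [biprod.inr_desc_assoc, Category.assoc, biprod.lift_snd, Category.comp_id,
        biprod.inr_snd]
      rw [e0]
  exact (c4.retract (R1.trans R2)).mono (by linarith)

lemma Qx.build {K : C} {σ : ℝ} (hK : BuildVal C G 0 K σ) :
    ∃ s : ℝ, 0 ≤ s ∧ ∀ m : ℤ, Qx G t (K⟦m⟧) (Real.exp ((m : ℝ) * t) * s) := by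
  induction hK with
  | zero Z hZ =>
    refine ⟨0, le_rfl, fun m => ?_⟩
    rw [mul_zero]
    exact Qx.zero ((shiftFunctor C m).map_isZero hZ)
  | step A B n r f g h hT hA ih =>
    obtain ⟨s, hs, ih⟩ := ih
    refine ⟨2 * (s + Real.exp ((n : ℝ) * t)), by positivity, fun m => ?_⟩
    obtain ⟨h', H'⟩ := DT.shift (f := f) (g := g) (h := h) hT m
    have hG : Qx G t ((G⟦n⟧)⟦m⟧) (Real.exp (((n + m : ℤ) : ℝ) * t)) :=
      (Qx.gen (n + m)).of_iso ((shiftFunctorAdd C n m).app G).symm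
    refine (Qx.ext H' (ih m) hG).mono (le_of_eq ?_)
    push_cast
    rw [add_mul, Real.exp_add]; ring

lemma Qx.of_gen (hG : IsSplitGenerator C G) (E : C) :
    ∃ s : ℝ, 0 ≤ s ∧ ∀ m : ℤ, Qx G t (E⟦m⟧) (Real.exp ((m : ℝ) * t) * s) := by
  obtain ⟨σ, B, F', hB, ⟨e⟩⟩ := hG E
  obtain ⟨s, hs, h⟩ := Qx.build (t := t) hB
  refine ⟨s, hs, fun m => (h m).retract ?_⟩
  exact Retract.map ⟨biprod.inl ≫ e.inv, e.hom ≫ biprod.fst, by simp⟩ (shiftFunctor C m)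

lemma Qx.bip [HasFiniteBiproducts C] (k : ℕ) : ∃ c : ℝ, 0 ≤ c ∧
    ∀ (f : Fin k → C) (s : Fin k → ℝ), (∀ i, 0 ≤ s i) → (∀ i, Qx G t (f i) (s i)) →
      Qx G t (biproduct f) (c * ∑ i, s i) := by
  induction k with
  | zero =>
    refine ⟨0, le_rfl, fun f s _ _ => ?_⟩
    rw [zero_mul]
    apply Qx.zero
    rw [IsZero.iff_id_eq_zero]
    apply biproduct.hom_ext
    intro j; exact j.elim0
  | succ k ih =>
    obtain ⟨c, hc, ih⟩ := ih
    refine ⟨2 * (1 + c), by positivity, fun f s hs hq => ?_⟩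
    have h1 := ih (fun i => f i.succ) (fun i => s i.succ) (fun i => hs _) (fun i => hq _)
    have h2 := Qx.ext (DT.biprod (f 0) (biproduct fun i : Fin k => f i.succ)) (hq 0) h1
    have R : Retract (biproduct f) (f 0 ⊞ biproduct fun i : Fin k => f i.succ) := by
      refine ⟨biprod.lift (biproduct.π f 0) (biproduct.lift fun i => biproduct.π f i.succ),
        biprod.desc (biproduct.ι f 0) (biproduct.desc fun i => biproduct.ι f i.succ), ?_⟩
      rw [biprod.lift_desc, biproduct.lift_desc, ← biproduct.total, Fin.sum_univ_succ]
    refine (h2.retract R).mono ?_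
    rw [Fin.sum_univ_succ]
    have h3 : 0 ≤ ∑ i : Fin k, s i.succ := Finset.sum_nonneg fun i _ => hs _
    have := hs 0
    nlinarith [mul_nonneg hc this]

lemma BuildVal_nonneg {B : C} {r : ℝ} (h : BuildVal C G t B r) : 0 ≤ r := by
  induction h with
  | zero => exact le_rfl
  | step => positivity

lemma Cx.mem {F : C} {r : ℝ} (h : Cx G t F r) : ∃ r' ≤ r, r' ∈ complexitySet C G F t := by
  obtain ⟨B, r', h1, h2, ⟨R⟩⟩ := h
  refine ⟨r', h1, ?_⟩
  obtain ⟨K, g, h, H⟩ := exists_DT₁ R.i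
  have h0 : h = 0 := by
    have h31 := H.comp31
    have : h = (h ≫ R.i⟦(1 : ℤ)⟧') ≫ R.r⟦(1 : ℤ)⟧' := by
      rw [Category.assoc, ← Functor.map_comp, R.retract]; simp
    rw [this, h31, zero_comp]
  obtain ⟨e, -, -⟩ := exists_iso_binaryBiproduct_of_distTriang _ H h0
  exact ⟨B, K, h2, ⟨e⟩⟩

lemma complexity_le {F : C} {r : ℝ} (h : Cx G t F r) : complexity C G F t ≤ r := by
  obtain ⟨r', h1, h2⟩ := h.mem
  refine le_trans (csInf_le ⟨0, ?_⟩ h2) h1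
  rintro x ⟨_, _, hx, -⟩
  exact BuildVal_nonneg hx

end PartA

end PdAux

namespace PdAux

section PartB

set_option linter.unusedSectionVars false

universe v' u'

variable {C : Type u'} [Category.{v'} C] [Preadditive C] [HasZeroObject C]
  [HasShift C ℤ] [∀ n : ℤ, (shiftFunctor C n).Additive] [Pretriangulated C]
  [HasFiniteBiproducts C] [CategoryTheory.Linear ℂ C]
  [∀ X Y : C, Module.Finite ℂ (X ⟶ Y)]

/-- Nonzero object all of whose nonzero endomorphisms are invertible. -/
def Brick (L : C) : Prop := ¬ IsZero L ∧ ∀ f : L ⟶ L, f ≠ 0 → IsIso f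

lemma Brick.id_ne {L : C} (h : Brick L) : 𝟙 L ≠ 0 := fun e =>
  h.1 ((IsZero.iff_id_eq_zero L).2 e)

lemma Brick.scalar {L : C} (h : Brick L) (f : L ⟶ L) : ∃ μ : ℂ, f = μ • 𝟙 L := by
  have : Nontrivial (L ⟶ L) := ⟨𝟙 L, 0, h.id_ne⟩
  obtain ⟨μ, hμ⟩ := Module.End.exists_eigenvalue (Linear.rightComp ℂ L f : (L ⟶ L) →ₗ[ℂ] (L ⟶ L))
  obtain ⟨g, hg⟩ := hμ.exists_hasEigenvector
  refine ⟨μ, ?_⟩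
  have h1 : g ≫ f = μ • g := hg.apply_eq_smul
  have := h.2 g hg.2
  have h2 : g ≫ f = g ≫ (μ • 𝟙 L) := by rw [h1, Linear.comp_smul, Category.comp_id]
  exact (cancel_epi g).1 h2

lemma Brick.map {L : C} (h : Brick L) (Φ : C ⥤ C) [Φ.Full] [Φ.Faithful]
    [Φ.PreservesZeroMorphisms] : Brick (Φ.obj L) := by
  refine ⟨fun hz => h.id_ne (Φ.map_injective (hz.eq_of_src _ _)), fun f hf => ?_⟩
  obtain ⟨g, rfl⟩ := Φ.map_surjective f
  have : IsIso g := h.2 g (by rintro rfl; simp at hf)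
  infer_instance

lemma Brick.of_iso {L L' : C} (h : Brick L) (e : L ≅ L') : Brick L' := by
  refine ⟨fun hz => h.1 (hz.of_iso e), fun f hf => ?_⟩
  have h1 : IsIso (e.hom ≫ f ≫ e.inv) := h.2 _ (fun h0 => hf (by
    have : e.inv ≫ (e.hom ≫ f ≫ e.inv) ≫ e.hom = 0 := by rw [h0]; simp
    simpa using this))
  have : f = e.inv ≫ (e.hom ≫ f ≫ e.inv) ≫ e.hom := by simp
  rw [this]; infer_instance

/-- `L` is isomorphic to the `u`-th shift of `E`. -/
def IsS (E L : C) (u : ℤ) : Prop := Nonempty (L ≅ E⟦u⟧)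

lemma IsS.shift {E L : C} {u : ℤ} (h : IsS E L u) (n : ℤ) {m : ℤ} (hm : u + n = m) :
    IsS E (L⟦n⟧) m := by
  obtain ⟨e⟩ := h
  exact ⟨(shiftFunctor C n).mapIso e ≪≫ ((shiftFunctorAdd' C u n m hm).app E).symm⟩

lemma IsS.cast {E L : C} {u v : ℤ} (h : IsS E L u) (e : u = v) : IsS E L v := e ▸ h

lemma IsS.self (E : C) : IsS E E 0 := ⟨((shiftFunctorZero C ℤ).app E).symm⟩

lemma IsS.iso0 {E L : C} (h : IsS E L 0) : Nonempty (L ≅ E) := by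
  obtain ⟨e⟩ := h
  exact ⟨e ≪≫ (shiftFunctorZero C ℤ).app E⟩

lemma IsS.mk' (E : C) (u : ℤ) : IsS E (E⟦u⟧) u := ⟨Iso.refl _⟩

lemma IsS.of_iso {E L L' : C} {u : ℤ} (h : IsS E L u) (e : L' ≅ L) : IsS E L' u := by
  obtain ⟨f⟩ := h; exact ⟨e ≪≫ f⟩

variable {d : ℕ} (o : PdObject C d)

lemma finrank_iso {X Y X' Y' : C} (e : X ≅ X') (f : Y ≅ Y') :
    Module.finrank ℂ (X ⟶ Y) = Module.finrank ℂ (X' ⟶ Y') :=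
  (Linear.homCongr ℂ e f).finrank_eq

lemma brickE : Brick o.E := by
  refine ⟨o.nonzero, fun f hf => ?_⟩
  have h1 : Module.finrank ℂ (o.E ⟶ o.E) = 1 := by
    rw [← o.hom_rank_one 0 (Nat.zero_le _)]
    exact finrank_iso (Iso.refl _) ((shiftFunctorZero' C _ (by simp)).symm.app o.E)
  have hid : 𝟙 o.E ≠ 0 := fun e => o.nonzero ((IsZero.iff_id_eq_zero _).2 e)
  obtain ⟨c, hc⟩ := exists_smul_eq_of_finrank_eq_one h1 hid f
  have hc0 : c ≠ 0 := by rintro rfl; simp at hc; exact hf hc.symm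
  refine ⟨c⁻¹ • 𝟙 _, ?_, ?_⟩ <;> rw [← hc] <;> simp [hc0, smul_smul]

lemma IsS.brick {L : C} {u : ℤ} (h : IsS o.E L u) : Brick L := by
  obtain ⟨e⟩ := h
  exact ((brickE o).map (shiftFunctor C u)).of_iso e.symm

lemma IsS.norm {L L' : C} {u v w : ℤ} (h : IsS o.E L u) (h' : IsS o.E L' v) (hw : v - u = w) :
    Nonempty (L⟦-u⟧ ≅ o.E) ∧ Nonempty (L'⟦-u⟧ ≅ o.E⟦w⟧) :=
  ⟨(h.shift (-u) (by ring)).iso0, h'.shift (-u) (by omega)⟩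

variable {o}

lemma IsS.hom_zero {L L' : C} {u v : ℤ} (h : IsS o.E L u) (h' : IsS o.E L' v)
    (hn : ¬ ∃ k : ℕ, k ≤ d ∧ v - u = 2 * (k : ℤ)) (f : L ⟶ L') : f = 0 := by
  obtain ⟨⟨e1⟩, ⟨e2⟩⟩ := h.norm o h' rfl
  have h1 := o.hom_rank_zero (v - u) hn (e1.inv ≫ f⟦-u⟧' ≫ e2.hom)
  apply (shiftFunctor C (-u)).map_injective
  have h2 : f⟦-u⟧' = e1.hom ≫ (e1.inv ≫ f⟦-u⟧' ≫ e2.hom) ≫ e2.inv := by simp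
  rw [h2, h1]; simp

lemma IsS.deg {L L' : C} {u v : ℤ} (h : IsS o.E L u) (h' : IsS o.E L' v)
    {f : L ⟶ L'} (hf : f ≠ 0) : ∃ k : ℕ, k ≤ d ∧ v - u = 2 * (k : ℤ) := by
  by_contra hn
  exact hf (h.hom_zero h' hn f)

lemma IsS.endo {L L' : C} {u v : ℤ} (h : IsS o.E L u) (h' : IsS o.E L' v)
    {f : L ⟶ L'} (hf : f ≠ 0) (g : L ⟶ L') : ∃ e : L ⟶ L, g = e ≫ f := by
  obtain ⟨k, hk, hkv⟩ := h.deg h' hf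
  obtain ⟨⟨e1⟩, ⟨e2⟩⟩ := h.norm o h' hkv
  have hf0 : e1.inv ≫ f⟦-u⟧' ≫ e2.hom ≠ 0 := by
    intro h0
    apply hf
    apply (shiftFunctor C (-u)).map_injective
    have h2 : f⟦-u⟧' = e1.hom ≫ (e1.inv ≫ f⟦-u⟧' ≫ e2.hom) ≫ e2.inv := by simp
    rw [h2, h0]; simp
  obtain ⟨c, hc⟩ := exists_smul_eq_of_finrank_eq_one (o.hom_rank_one k hk) hf0
    (e1.inv ≫ g⟦-u⟧' ≫ e2.hom)
  obtain ⟨e, he⟩ := (shiftFunctor C (-u)).map_surjective (c • 𝟙 (L⟦-u⟧))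
  refine ⟨e, (shiftFunctor C (-u)).map_injective ?_⟩
  rw [Functor.map_comp, he]
  have h2 : g⟦-u⟧' = e1.hom ≫ (e1.inv ≫ g⟦-u⟧' ≫ e2.hom) ≫ e2.inv := by simp
  rw [h2, ← hc]; simp

lemma hpow_factor (a b c : ℕ) (hc : a + b = c) :
    ∃ γ : o.E⟦2 * (a : ℤ)⟧ ⟶ o.E⟦2 * (c : ℤ)⟧, o.hpow c = o.hpow a ≫ γ := by
  induction a generalizing c with
  | zero =>
    refine ⟨(shiftFunctorZero' C (2 * ((0 : ℕ) : ℤ)) (by simp)).hom.app o.E ≫ o.hpow c, ?_⟩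
    rw [o.hpow_zero]; simp
  | succ a ih =>
    obtain ⟨c', rfl⟩ : ∃ c', c = c' + 1 := ⟨a + b, by omega⟩
    obtain ⟨γ, hγ⟩ := ih c' (by omega)
    rw [o.hpow_succ, o.hpow_succ, hγ]
    refine ⟨(shiftFunctorAdd' C (2 * (a : ℤ)) (2 : ℤ) (2 * ((a + 1 : ℕ) : ℤ))
        (by push_cast; ring)).hom.app o.E ≫ γ⟦(2 : ℤ)⟧' ≫
      (shiftFunctorAdd' C (2 * (c' : ℤ)) (2 : ℤ) (2 * ((c' + 1 : ℕ) : ℤ))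
        (by push_cast; ring)).inv.app o.E, ?_⟩
    simp

lemma comp_ne_core (a b c : ℕ) (hc : a + b = c) (hcd : c ≤ d)
    {f : o.E ⟶ o.E⟦2 * (a : ℤ)⟧} {g : o.E⟦2 * (a : ℤ)⟧ ⟶ o.E⟦2 * (c : ℤ)⟧}
    (hf : f ≠ 0) (hg : g ≠ 0) : f ≫ g ≠ 0 := by
  obtain ⟨γ, hγ⟩ := hpow_factor (o := o) a b c hc
  obtain ⟨x, hx⟩ := exists_smul_eq_of_finrank_eq_one (o.hom_rank_one a (by omega)) hf (o.hpow a)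
  obtain ⟨e, he⟩ := (IsS.mk' o.E _).endo (o := o) (IsS.mk' o.E _) hg γ
  obtain ⟨μ, hμ⟩ := ((IsS.mk' o.E (2 * (a : ℤ))).brick o).scalar e
  intro h0
  apply o.hpow_ne_zero c hcd
  rw [hγ, ← hx, he, hμ]
  simp [h0]

lemma IsS.comp_ne {L L' L'' : C} {u v w : ℤ} (h : IsS o.E L u) (h' : IsS o.E L' v)
    (h'' : IsS o.E L'' w) {f : L ⟶ L'} {g : L' ⟶ L''} (hf : f ≠ 0) (hg : g ≠ 0)
    (hd : w - u ≤ 2 * (d : ℤ)) : f ≫ g ≠ 0 := by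
  obtain ⟨a, ha, hav⟩ := h.deg h' hf
  obtain ⟨b, hb, hbv⟩ := h'.deg h'' hg
  obtain ⟨⟨e1⟩, ⟨e2⟩⟩ := h.norm o h' hav
  obtain ⟨-, ⟨e3⟩⟩ := h.norm o h'' (w := 2 * ((a + b : ℕ) : ℤ)) (by push_cast; omega)
  have hf0 : e1.inv ≫ f⟦-u⟧' ≫ e2.hom ≠ 0 := by
    intro h0
    apply hf
    apply (shiftFunctor C (-u)).map_injective
    have h2 : f⟦-u⟧' = e1.hom ≫ (e1.inv ≫ f⟦-u⟧' ≫ e2.hom) ≫ e2.inv := by simp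
    rw [h2, h0]; simp
  have hg0 : e2.inv ≫ g⟦-u⟧' ≫ e3.hom ≠ 0 := by
    intro h0
    apply hg
    apply (shiftFunctor C (-u)).map_injective
    have h2 : g⟦-u⟧' = e2.hom ≫ (e2.inv ≫ g⟦-u⟧' ≫ e3.hom) ≫ e3.inv := by simp
    rw [h2, h0]; simp
  intro h0
  apply comp_ne_core a b (a + b) rfl (by omega) hf0 hg0
  simp only [Category.assoc, Iso.hom_inv_id_assoc]
  rw [← Functor.map_comp_assoc, h0]
  simp

lemma IsS.exists_ne {L L' : C} {u v : ℤ} (h : IsS o.E L u) (h' : IsS o.E L' v) (k : ℕ)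
    (hk : k ≤ d) (hv : v - u = 2 * (k : ℤ)) : ∃ f : L ⟶ L', f ≠ 0 := by
  obtain ⟨⟨e1⟩, ⟨e2⟩⟩ := h.norm o h' hv
  obtain ⟨f, hf⟩ := (shiftFunctor C (-u)).map_surjective (e1.hom ≫ o.hpow k ≫ e2.inv)
  refine ⟨f, ?_⟩
  rintro rfl
  apply o.hpow_ne_zero k hk
  have : o.hpow k = e1.inv ≫ (e1.hom ≫ o.hpow k ≫ e2.inv) ≫ e2.hom := by simp
  rw [this, ← hf]; simp

lemma IsS.uniserial {L L' M : C} {u u' v : ℤ} (h : IsS o.E L u) (h' : IsS o.E L' u')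
    (hM : IsS o.E M v) {β : L ⟶ M} (hβ : β ≠ 0) (β' : L' ⟶ M) (huu : u' ≤ u) :
    ∃ c : L' ⟶ L, β' = c ≫ β := by
  by_cases hb : β' = 0
  · exact ⟨0, by simp [hb]⟩
  obtain ⟨k, hk, hkv⟩ := h.deg hM hβ
  obtain ⟨k', hk', hkv'⟩ := h'.deg hM hb
  obtain ⟨c0, hc0⟩ := h'.exists_ne h (k' - k) (by omega) (by omega)
  obtain ⟨e, he⟩ := h'.endo hM (h'.comp_ne h hM hc0 hβ (by omega)) β'
  exact ⟨e ≫ c0, by simpa using he⟩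

lemma kernel {ι σ : Type} [DecidableEq ι] [DecidableEq σ] {A : C} (L : ι → C) (u : ι → ℤ)
    (hL : ∀ i, IsS o.E (L i) (u i)) (r : ∀ i, A ⟶ L i) (M : σ → C) (v : σ → ℤ)
    (hM : ∀ j, IsS o.E (M j) (v j)) (b : ∀ j, A ⟶ M j) (S : Finset σ) :
    ∀ (I : Finset ι) (a : ∀ i, L i ⟶ A), S.card < I.card → (∀ i ∈ I, a i ≫ r i = 𝟙 _) →
      (∀ i ∈ I, ∀ k ∈ I, i ≠ k → a i ≫ r k = 0) →
      ∃ i ∈ I, ∃ κ : L i ⟶ A, κ ≫ r i = 𝟙 _ ∧ (∀ j ∈ S, κ ≫ b j = 0) ∧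
        ∀ (X : C) (x : A ⟶ X), (∀ i ∈ I, a i ≫ x = 0) → κ ≫ x = 0 := by
  induction S using Finset.induction_on with
  | empty =>
    intro I a hc h1 h2
    obtain ⟨i, hi⟩ := Finset.card_pos.1 (by simpa using hc)
    exact ⟨i, hi, a i, h1 i hi, by simp, fun X x hx => hx i hi⟩
  | insert j S hj ih =>
    intro I a hc h1 h2
    rw [Finset.card_insert_of_notMem hj] at hc
    by_cases hz : ∀ i ∈ I, a i ≫ b j = 0
    · obtain ⟨i, hi, κ, k1, k2, k3⟩ := ih I a (by omega) h1 h2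
      refine ⟨i, hi, κ, k1, ?_, k3⟩
      intro j' hj'
      rcases Finset.mem_insert.1 hj' with rfl | h
      · exact k3 _ _ hz
      · exact k2 _ h
    · push Not at hz
      obtain ⟨i1, hi1, hne1⟩ := hz
      classical
      obtain ⟨i0, hi0, hmax⟩ := Finset.exists_max_image (I.filter fun i => a i ≫ b j ≠ 0) u
        ⟨i1, by simp [hi1, hne1]⟩
      rw [Finset.mem_filter] at hi0
      have hcex : ∀ i, ∃ c : L i ⟶ L i0, i ∈ I → a i ≫ b j = c ≫ a i0 ≫ b j := by
        intro i
        by_cases hiI : i ∈ I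
        swap
        · exact ⟨0, fun h => absurd h hiI⟩
        by_cases hb : a i ≫ b j = 0
        · exact ⟨0, fun _ => by simp [hb]⟩
        obtain ⟨c, hc⟩ := (hL i0).uniserial (hL i) (hM j) hi0.2 (a i ≫ b j)
          (hmax i (by simp [hiI, hb]))
        exact ⟨c, fun _ => hc⟩
      choose c hcc using hcex
      obtain ⟨i, hi, κ, k1, k2, k3⟩ := ih (I.erase i0) (fun i => a i - c i ≫ a i0)
        (by rw [Finset.card_erase_of_mem hi0.1]; omega)
        (by
          intro i hi
          rw [Finset.mem_erase] at hi
          rw [Preadditive.sub_comp, h1 i hi.2, Category.assoc, h2 i0 hi0.1 i hi.2 hi.1.symm]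
          simp)
        (by
          intro i hi k hk hik
          rw [Finset.mem_erase] at hi hk
          rw [Preadditive.sub_comp, h2 i hi.2 k hk.2 hik, Category.assoc,
            h2 i0 hi0.1 k hk.2 hk.1.symm]
          simp)
      refine ⟨i, Finset.mem_of_mem_erase hi, κ, k1, ?_, ?_⟩
      · intro j' hj'
        rcases Finset.mem_insert.1 hj' with rfl | h
        · apply k3
          intro i hi
          rw [Preadditive.sub_comp, hcc i (Finset.mem_of_mem_erase hi), Category.assoc, sub_self]
        · exact k2 _ h
      · intro X x hx
        apply k3
        intro i hi
        rw [Preadditive.sub_comp, hx i (Finset.mem_of_mem_erase hi), Category.assoc,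
          hx i0 hi0.1]
        simp

end PartB

end PdAux

namespace PdAux

section PartB2

set_option linter.unusedSectionVars false

universe v' u'

variable {C : Type u'} [Category.{v'} C] [Preadditive C] [HasZeroObject C]
  [HasShift C ℤ] [∀ n : ℤ, (shiftFunctor C n).Additive] [Pretriangulated C]
  [HasFiniteBiproducts C] [CategoryTheory.Linear ℂ C]
  [∀ X Y : C, Module.Finite ℂ (X ⟶ Y)]

/-- A decomposition of `Y` as a finite direct sum of shifts of `E`. -/
structure Dec (E Y : C) {k : ℕ} (us : Fin k → ℤ) where
  L : Fin k → C
  isS : ∀ i, IsS E (L i) (us i)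
  inc : ∀ i, L i ⟶ Y
  pr : ∀ i, Y ⟶ L i
  inc_pr : ∀ i, inc i ≫ pr i = 𝟙 _
  inc_pr_ne : ∀ i j, i ≠ j → inc i ≫ pr j = 0
  total : ∑ i, pr i ≫ inc i = 𝟙 Y

noncomputable def Dec.ofBiproduct {E Y : C} {k : ℕ} {us : Fin k → ℤ} (e : Y ≅ biproduct fun i => E⟦us i⟧) :
    Dec E Y us where
  L i := E⟦us i⟧
  isS i := IsS.mk' _ _
  inc i := biproduct.ι (fun i => E⟦us i⟧) i ≫ e.inv
  pr i := e.hom ≫ biproduct.π (fun i => E⟦us i⟧) i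
  inc_pr i := by simp
  inc_pr_ne i j h := by simp [biproduct.ι_π_ne _ h]
  total := by
    have h := biproduct.total (f := fun i => E⟦us i⟧)
    have : ∑ i, (e.hom ≫ biproduct.π (fun i => E⟦us i⟧) i) ≫
        biproduct.ι (fun i => E⟦us i⟧) i ≫ e.inv =
        e.hom ≫ (∑ i, biproduct.π (fun i => E⟦us i⟧) i ≫ biproduct.ι (fun i => E⟦us i⟧) i) ≫
          e.inv := by
      simp only [Preadditive.sum_comp, Preadditive.comp_sum, Category.assoc]
    rw [this, h]; simp

noncomputable def Dec.shift {E Y : C} {k : ℕ} {us : Fin k → ℤ} (D : Dec E Y us) (n : ℤ) :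
    Dec E (Y⟦n⟧) (fun i => us i + n) where
  L i := (D.L i)⟦n⟧
  isS i := (D.isS i).shift n rfl
  inc i := (D.inc i)⟦n⟧'
  pr i := (D.pr i)⟦n⟧'
  inc_pr i := by rw [← Functor.map_comp, D.inc_pr, CategoryTheory.Functor.map_id]
  inc_pr_ne i j h := by rw [← Functor.map_comp, D.inc_pr_ne i j h, Functor.map_zero]
  total := by
    simp only [← Functor.map_comp]
    rw [← Functor.map_sum, D.total, CategoryTheory.Functor.map_id]

lemma Dec.to_zero {E Y M : C} {k : ℕ} {us : Fin k → ℤ} (D : Dec E Y us) (f : M ⟶ Y)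
    (h : ∀ i, f ≫ D.pr i = 0) : f = 0 := by
  rw [← Category.comp_id f, ← D.total, Preadditive.comp_sum]
  exact Finset.sum_eq_zero fun i _ => by rw [← Category.assoc, h, zero_comp]

lemma Dec.from_zero {E Y M : C} {k : ℕ} {us : Fin k → ℤ} (D : Dec E Y us) (f : Y ⟶ M)
    (h : ∀ i, D.inc i ≫ f = 0) : f = 0 := by
  rw [← Category.id_comp f, ← D.total, Preadditive.sum_comp]
  exact Finset.sum_eq_zero fun i _ => by rw [Category.assoc, h, comp_zero]

variable {d : ℕ} (tw : PdTwist C d)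

lemma tw_dec : ∃ (k : ℕ) (ns : Fin k → ℤ), Nonempty (Dec tw.E (tw.H tw.E) ns) ∧
    (∀ i, ∃ j : ℕ, j ≤ d ∧ ns i = - (2 * (j : ℤ))) ∧
    (∃ i, ns i = - (2 * (d : ℤ))) ∧ ∃ i, ns i = 0 ∧ ∀ i', ns i' = 0 → i' = i := by
  obtain ⟨k, ns, ⟨e⟩, hn⟩ := tw.H_iso tw.E
  refine ⟨k, ns, ⟨Dec.ofBiproduct e⟩, ?_, ?_, ?_⟩
  · intro i
    by_contra hc
    have h1 := hn (- ns i)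
    have h2 : Module.finrank ℂ (tw.E ⟶ tw.E⟦- ns i⟧) = 0 := by
      have : Subsingleton (tw.E ⟶ tw.E⟦- ns i⟧) := ⟨fun a b => by
        have := tw.hom_rank_zero (- ns i) (by
          rintro ⟨j, hj, hj'⟩; exact hc ⟨j, hj, by omega⟩)
        rw [this a, this b]⟩
      exact Module.finrank_zero_of_subsingleton
    rw [h2, Finset.card_eq_zero] at h1
    have : i ∈ Finset.univ.filter fun j => ns j = - - ns i := by simp
    rw [h1] at this
    simp at this
  · have h1 := hn (2 * (d : ℤ))
    rw [tw.hom_rank_one d le_rfl, Finset.card_eq_one] at h1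
    obtain ⟨i, hi⟩ := h1
    have : i ∈ Finset.univ.filter fun j => ns j = - (2 * (d : ℤ)) := by rw [hi]; simp
    exact ⟨i, by simpa using this⟩
  · have h1 := hn (2 * ((0 : ℕ) : ℤ))
    rw [tw.hom_rank_one 0 (Nat.zero_le _), Finset.card_eq_one] at h1
    obtain ⟨i, hi⟩ := h1
    have : i ∈ Finset.univ.filter fun j => ns j = - (2 * ((0 : ℕ) : ℤ)) := by rw [hi]; simp
    refine ⟨i, by simpa using this, fun i' h' => ?_⟩
    have : i' ∈ Finset.univ.filter fun j => ns j = - (2 * ((0 : ℕ) : ℤ)) := by simp [h']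
    rw [hi] at this
    simpa using this

lemma tw_inner (F : C) : DT (tw.θ F) (tw.ι F) (tw.π F) := tw.innerTri F
lemma tw_outer (F : C) : DT (tw.ev F) (tw.η F) (tw.dl F) := tw.outerTri F

/-- vanishing of `Hom(E, PE[m])` above degree `4d`. -/
lemma top_zero (m : ℤ) (hm : 4 * (d : ℤ) < m) (f : tw.E ⟶ (tw.P.functor.obj tw.E)⟦m⟧) : f = 0 := by
  obtain ⟨k, ns, ⟨D⟩, hns, -, -⟩ := tw_dec tw
  have hS := IsS.self tw.E
  have key : ∀ g : tw.E ⟶ ((tw.T tw.E)⟦(1 : ℤ)⟧)⟦m⟧, g = 0 := by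
    intro g
    obtain ⟨h1, D1⟩ := (tw_inner tw tw.E).rot.shift 1
    obtain ⟨h2, D2⟩ := D1.shift m
    obtain ⟨y, rfl⟩ := D2.co2 g (by
      apply (((((D.shift (-2)).shift 1).shift 1).shift m)).to_zero
      intro i
      obtain ⟨j, hj, hij⟩ := hns i
      refine hS.hom_zero (o := tw.toPdObject) (((((D.shift (-2)).shift 1).shift 1).shift m).isS i) ?_ _
      rintro ⟨l, hl, hl'⟩
      omega)
    have : y = 0 := by
      apply ((D.shift 1).shift m).to_zero
      intro i
      obtain ⟨j, hj, hij⟩ := hns i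
      refine hS.hom_zero (o := tw.toPdObject) (((D.shift 1).shift m).isS i) ?_ _
      rintro ⟨l, hl, hl'⟩
      omega
    rw [this, zero_comp]
  obtain ⟨h1, D1⟩ := (tw_outer tw tw.E).rot.shift m
  obtain ⟨y, rfl⟩ := D1.co2 f (key _)
  have : y = 0 := hS.hom_zero (o := tw.toPdObject) (IsS.mk' _ m) (by rintro ⟨l, hl, hl'⟩; omega) y
  rw [this, zero_comp]

lemma top_ne : ∃ f : tw.E ⟶ (tw.P.functor.obj tw.E)⟦4 * (d : ℤ)⟧, f ≠ 0 := by
  obtain ⟨k, ns, ⟨D⟩, hns, ⟨i, hi⟩, -⟩ := tw_dec tw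
  have hS := IsS.self tw.E
  set m : ℤ := 4 * (d : ℤ) with hm
  let D' := (((D.shift (-2)).shift 1).shift 1).shift m
  obtain ⟨a, ha⟩ := hS.exists_ne (o := tw.toPdObject) (D'.isS i) d le_rfl (by omega)
  obtain ⟨h1, D1⟩ := (tw_inner tw tw.E).rot.rot.shift 1
  obtain ⟨h2, D2⟩ := D1.shift m
  obtain ⟨g, hg⟩ := D2.co2 (a ≫ D'.inc i) (by
    apply ((D.shift 1).shift 1).shift m |>.to_zero
    intro i
    obtain ⟨j, hj, hij⟩ := hns i
    refine hS.hom_zero (o := tw.toPdObject) ((((D.shift 1).shift 1).shift m).isS i) ?_ _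
    rintro ⟨l, hl, hl'⟩
    omega)
  obtain ⟨h3, D3⟩ := (tw_outer tw tw.E).rot.rot.shift m
  obtain ⟨f, hf⟩ := D3.co2 g (by
    refine hS.hom_zero (o := tw.toPdObject) (((IsS.self tw.E).shift 1 rfl).shift m rfl) ?_ _
    rintro ⟨l, hl, hl'⟩
    omega)
  refine ⟨f, ?_⟩
  rintro rfl
  apply ha
  have h4 : a = (a ≫ D'.inc i) ≫ D'.pr i := by rw [Category.assoc, D'.inc_pr, Category.comp_id]
  rw [h4, hg, hf]; simp

lemma top_zero' {L : C} {u : ℤ} (hL : IsS tw.E L u) (m : ℤ) (hm : 4 * (d : ℤ) < m - u)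
    (f : L ⟶ (tw.P.functor.obj tw.E)⟦m⟧) : f = 0 := by
  obtain ⟨e1⟩ := (hL.shift (-u) (m := 0) (by ring)).iso0
  have e2 : ((tw.P.functor.obj tw.E)⟦m⟧)⟦-u⟧ ≅ (tw.P.functor.obj tw.E)⟦m - u⟧ :=
    ((shiftFunctorAdd' C m (-u) (m - u) (by ring)).app _).symm
  have h1 := top_zero tw (m - u) hm (e1.inv ≫ f⟦-u⟧' ≫ e2.hom)
  apply (shiftFunctor C (-u)).map_injective
  have h2 : f⟦-u⟧' = e1.hom ≫ (e1.inv ≫ f⟦-u⟧' ≫ e2.hom) ≫ e2.inv := by simp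
  rw [h2, h1]; simp

lemma selfX_zero (n : ℤ) (hn : ¬ ∃ k : ℕ, k ≤ d ∧ n = 2 * (k : ℤ))
    (f : tw.P.functor.obj tw.E ⟶ (tw.P.functor.obj tw.E)⟦n⟧) : f = 0 := by
  have := tw.commShift
  let e := (tw.P.functor.commShiftIso n).app tw.E
  obtain ⟨g, hg⟩ := tw.P.functor.map_surjective (f ≫ e.inv)
  have h0 : g = 0 := tw.hom_rank_zero n hn g
  have : f = (f ≫ e.inv) ≫ e.hom := by simp
  rw [this, ← hg, h0]; simp

lemma PE_isS : IsS tw.E (tw.P.functor.obj tw.E) (- (2 * (d : ℤ))) := by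
  obtain ⟨k, ns, ⟨D⟩, hns, -, ⟨i0, hi0, hi0u⟩⟩ := tw_dec tw
  obtain ⟨ξ, hξ⟩ := top_ne tw
  obtain ⟨e0⟩ := ((D.isS i0).cast hi0).iso0
  have Din := tw_inner tw tw.E
  have Dout := tw_outer tw tw.E
  -- the evaluation is invertible on the degree zero summand
  have hlam : IsIso (D.inc i0 ≫ tw.ι tw.E ≫ tw.ev tw.E) := by
    obtain ⟨ζ, hζ⟩ := Din.yo2 (D.pr i0 ≫ e0.hom ≫ ξ) (by
      apply (D.shift (-2)).from_zero
      intro i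
      obtain ⟨j, hj, hij⟩ := hns i
      refine top_zero' tw ((D.shift (-2)).isS i) _ ?_ _
      omega)
    obtain ⟨ξ', hξ'⟩ := Dout.ext1 ζ (by
      have e2 : ((tw.P.functor.obj tw.E)⟦4 * (d : ℤ)⟧)⟦(1 : ℤ)⟧ ≅
          (tw.P.functor.obj tw.E)⟦4 * (d : ℤ) + 1⟧ :=
        ((shiftFunctorAdd' C (4 * (d : ℤ)) 1 (4 * (d : ℤ) + 1) rfl).app _).symm
      have h0 := selfX_zero tw (4 * (d : ℤ) + 1) (by rintro ⟨l, hl, hl'⟩; omega)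
        ((tw.dl tw.E ≫ ζ⟦(1 : ℤ)⟧') ≫ e2.hom)
      rw [← cancel_mono e2.hom, h0, zero_comp])
    have hne : e0.inv ≫ (D.inc i0 ≫ tw.ι tw.E ≫ tw.ev tw.E) ≠ 0 := by
      intro h0
      apply hξ
      have h1 : (e0.inv ≫ (D.inc i0 ≫ tw.ι tw.E ≫ tw.ev tw.E)) ≫ ξ' = ξ := by
        simp only [Category.assoc]
        rw [hξ', ← hζ, ← Category.assoc (D.inc i0), D.inc_pr]
        simp
      rw [← h1, h0, zero_comp]
    have h1 := (brickE tw.toPdObject).2 _ hne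
    have h2 : D.inc i0 ≫ tw.ι tw.E ≫ tw.ev tw.E =
        e0.hom ≫ (e0.inv ≫ (D.inc i0 ≫ tw.ι tw.E ≫ tw.ev tw.E)) := by simp
    rw [h2]; infer_instance
  -- the kernel of `θ`
  obtain ⟨i, -, κ, hκ1, hκ2, -⟩ := kernel (o := tw.toPdObject) (D.shift (-2)).L
    (fun i => ns i + -2) (D.shift (-2)).isS (D.shift (-2)).pr D.L ns D.isS
    (fun j => tw.θ tw.E ≫ D.pr j) (Finset.univ.erase i0) Finset.univ (D.shift (-2)).inc
    (Finset.card_lt_card (Finset.erase_ssubset (Finset.mem_univ _)))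
    (fun i _ => (D.shift (-2)).inc_pr i) (fun i _ k _ h => (D.shift (-2)).inc_pr_ne i k h)
  have hκθ : κ ≫ tw.θ tw.E = (κ ≫ tw.θ tw.E ≫ D.pr i0) ≫ D.inc i0 := by
    rw [← Category.comp_id (κ ≫ tw.θ tw.E), ← D.total, Preadditive.comp_sum,
      Finset.sum_eq_single i0]
    · simp
    · intro j _ hj
      have := hκ2 j (by simp [hj])
      simp only [Category.assoc]
      rw [reassoc_of% this, zero_comp]
    · simp
  have hκ0 : κ ≫ tw.θ tw.E ≫ D.pr i0 = 0 := by
    rw [← cancel_mono (D.inc i0 ≫ tw.ι tw.E ≫ tw.ev tw.E), ← Category.assoc, ← hκθ, zero_comp,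
      Category.assoc, ← Category.assoc (tw.θ tw.E), Din.comp12]
    simp
  rw [hκ0, zero_comp] at hκθ
  obtain ⟨μ, hμ⟩ := Din.co1 (κ⟦(1 : ℤ)⟧') (by rw [← Functor.map_comp, hκθ, Functor.map_zero])
  obtain ⟨j, hj, hij⟩ := hns i
  have hμev : μ ≫ tw.ev tw.E = 0 := by
    refine (((D.shift (-2)).isS i).shift 1 rfl).hom_zero (o := tw.toPdObject) (IsS.self tw.E) ?_ _
    rintro ⟨l, hl, hl'⟩
    omega
  obtain ⟨ν, hν⟩ := Dout.co1 (μ⟦(1 : ℤ)⟧') (by rw [← Functor.map_comp, hμev, Functor.map_zero])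
  let ρ := tw.dl tw.E ≫ (tw.π tw.E)⟦(1 : ℤ)⟧' ≫ (((D.shift (-2)).pr i)⟦(1 : ℤ)⟧')⟦(1 : ℤ)⟧'
  have hνρ : ν ≫ ρ = 𝟙 _ := by
    simp only [ρ]
    rw [← Category.assoc, ← hν, ← Functor.map_comp, ← Functor.map_comp, ← Category.assoc, ← hμ,
      ← Functor.map_comp, hκ1]
    simp
  have hL2 : IsS tw.E ((((D.shift (-2)).L i)⟦(1 : ℤ)⟧)⟦(1 : ℤ)⟧) (ns i) :=
    (((D.shift (-2)).isS i).shift 1 rfl).shift 1 (by ring)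
  have hX : Brick (tw.P.functor.obj tw.E) := (brickE tw.toPdObject).map tw.P.functor
  have hiso : IsIso (ρ ≫ ν) := by
    apply hX.2
    intro h0
    apply (hL2.brick tw.toPdObject).id_ne
    calc 𝟙 _ = (ν ≫ ρ) ≫ (ν ≫ ρ) := by rw [hνρ]; simp
      _ = ν ≫ (ρ ≫ ν) ≫ ρ := by simp only [Category.assoc]
      _ = 0 := by rw [h0]; simp
  have hid : ρ ≫ ν = 𝟙 _ := by
    rw [← cancel_mono (ρ ≫ ν), Category.id_comp, Category.assoc, ← Category.assoc ν, hνρ,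
      Category.id_comp]
  have hXS : IsS tw.E (tw.P.functor.obj tw.E) (ns i) := hL2.of_iso ⟨ρ, ν, hid, hνρ⟩
  obtain ⟨l, hl, hl'⟩ := (IsS.self tw.E).deg (o := tw.toPdObject)
    (hXS.shift (4 * (d : ℤ)) rfl) hξ
  exact hXS.cast (by omega)

end PartB2

end PdAux

namespace PdAux

section PartD

set_option linter.unusedSectionVars false

universe v' u'

variable {C : Type u'} [Category.{v'} C] [Preadditive C] [HasZeroObject C]
  [HasShift C ℤ] [∀ n : ℤ, (shiftFunctor C n).Additive] [Pretriangulated C]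
  [HasFiniteBiproducts C] [CategoryTheory.Linear ℂ C]
  [∀ X Y : C, Module.Finite ℂ (X ⟶ Y)]

lemma Brick.finrank_le_iff {L : C} (hL : Brick L) (F : C) (k : ℕ) :
    Module.finrank ℂ (L ⟶ F) ≤ k ↔
      ∃ f : Fin k → (L ⟶ F), ∀ g : L ⟶ F, ∃ e : Fin k → (L ⟶ L), g = ∑ i, e i ≫ f i := by
  constructor
  · intro h
    let b := Module.finBasis ℂ (L ⟶ F)
    refine ⟨fun i => if hi : i.1 < Module.finrank ℂ (L ⟶ F) then b ⟨i.1, hi⟩ else 0, fun g => ?_⟩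
    refine ⟨fun i => if hi : i.1 < Module.finrank ℂ (L ⟶ F) then b.repr g ⟨i.1, hi⟩ • 𝟙 L else 0, ?_⟩
    obtain ⟨m, rfl⟩ := Nat.exists_eq_add_of_le h
    rw [Fin.sum_univ_add]
    simp only [Fin.val_castAdd, Fin.is_lt, dite_true, Fin.eta, Fin.val_natAdd, Linear.smul_comp,
      Category.id_comp, add_lt_iff_neg_left, not_lt_zero, dite_false, comp_zero,
      Finset.sum_const_zero, add_zero]
    exact (b.sum_repr g).symm
  · rintro ⟨f, hf⟩
    have h1 : Submodule.span ℂ (Set.range f) = ⊤ := by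
      rw [eq_top_iff]
      intro g _
      obtain ⟨e, rfl⟩ := hf g
      refine Submodule.sum_mem _ fun i _ => ?_
      obtain ⟨μ, hμ⟩ := hL.scalar (e i)
      rw [hμ, Linear.smul_comp, Category.id_comp]
      exact Submodule.smul_mem _ _ (Submodule.subset_span ⟨i, rfl⟩)
    have h2 := finrank_range_le_card (R := ℂ) f
    rw [Set.finrank, h1, finrank_top] at h2
    simpa using h2

lemma Brick.finrank_map {L : C} (hL : Brick L) (Φ : C ⥤ C) [Φ.Full] [Φ.Faithful] [Φ.Additive]
    (F : C) : Module.finrank ℂ (Φ.obj L ⟶ Φ.obj F) = Module.finrank ℂ (L ⟶ F) := by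
  have hL' := hL.map Φ
  apply le_antisymm
  · rw [hL'.finrank_le_iff]
    obtain ⟨f, hf⟩ := (hL.finrank_le_iff F _).1 le_rfl
    refine ⟨fun i => Φ.map (f i), fun g => ?_⟩
    obtain ⟨g, rfl⟩ := Φ.map_surjective g
    obtain ⟨e, rfl⟩ := hf g
    exact ⟨fun i => Φ.map (e i), by simp [Functor.map_sum]⟩
  · rw [hL.finrank_le_iff]
    obtain ⟨f, hf⟩ := (hL'.finrank_le_iff (Φ.obj F) _).1 le_rfl
    choose f' hf' using fun i => Φ.map_surjective (f i)
    refine ⟨f', fun g => ?_⟩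
    obtain ⟨e, he⟩ := hf (Φ.map g)
    choose e' he' using fun i => Φ.map_surjective (e i)
    refine ⟨e', Φ.map_injective ?_⟩
    rw [he, Functor.map_sum]
    exact Finset.sum_congr rfl fun i _ => by rw [Functor.map_comp, he', hf']

/-- Dimension of `Hom(E, F[-u])`. -/
noncomputable def ar (E : C) (u : ℤ) (F : C) : ℕ := Module.finrank ℂ (E ⟶ F⟦-u⟧)

lemma ar_shift (E F : C) (u n : ℤ) : ar E u (F⟦n⟧) = ar E (u - n) F :=
  finrank_iso (Iso.refl E) ((shiftFunctorAdd' C n (-u) (-(u - n)) (by ring)).app F).symm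

lemma ar_retract (E : C) {F F' : C} (e : Retract F F') (u : ℤ) : ar E u F ≤ ar E u F' := by
  have e' := e.map (shiftFunctor C (-u))
  refine LinearMap.finrank_le_finrank_of_injective (f := Linear.rightComp ℂ E e'.i) ?_
  intro a b hab
  have h : a ≫ e'.i = b ≫ e'.i := hab
  have := congrArg (· ≫ e'.r) h
  simpa [e'.retract] using this

lemma ar_tri (E : C) {A B K : C} {f : A ⟶ B} {g : B ⟶ K} {h : K ⟶ A⟦(1 : ℤ)⟧} (H : DT f g h)
    (u : ℤ) : ar E u B ≤ ar E u A + ar E u K := by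
  obtain ⟨h', H'⟩ := H.shift (-u)
  let φ := Linear.rightComp ℂ E (f⟦-u⟧')
  let ψ := Linear.rightComp ℂ E (g⟦-u⟧')
  have h1 : LinearMap.ker ψ ≤ LinearMap.range φ := by
    intro x hx
    obtain ⟨y, hy⟩ := H'.co2 x hx
    exact ⟨y, hy.symm⟩
  have h2 := LinearMap.finrank_range_add_finrank_ker ψ
  have h3 := Submodule.finrank_mono h1
  have h4 := LinearMap.finrank_range_le φ
  have h5 := Submodule.finrank_le (LinearMap.range ψ)
  unfold ar
  omega

variable {d : ℕ} (tw : PdTwist C d)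

lemma ar_P (F : C) (u : ℤ) : ar tw.E u (tw.P.functor.obj F) = ar tw.E (u + 2 * (d : ℤ)) F := by
  have := tw.commShift
  have : tw.P.functor.Additive := Functor.additive_of_preserves_binary_products _
  have e1 : tw.P.functor.obj (tw.E⟦2 * (d : ℤ)⟧) ≅ (tw.P.functor.obj tw.E)⟦2 * (d : ℤ)⟧ :=
    (tw.P.functor.commShiftIso (2 * (d : ℤ))).app tw.E
  obtain ⟨e2⟩ := ((PE_isS tw).shift (2 * (d : ℤ)) (m := 0) (by ring)).iso0
  have e3 : tw.P.functor.obj (F⟦-u⟧) ≅ (tw.P.functor.obj F)⟦-u⟧ :=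
    (tw.P.functor.commShiftIso (-u)).app F
  have e4 : (F⟦-(u + 2 * (d : ℤ))⟧)⟦2 * (d : ℤ)⟧ ≅ F⟦-u⟧ :=
    ((shiftFunctorAdd' C (-(u + 2 * (d : ℤ))) (2 * (d : ℤ)) (-u) (by ring)).app F).symm
  have hb := brickE tw.toPdObject
  unfold ar
  rw [← finrank_iso (e1 ≪≫ e2) e3,
    (hb.map (shiftFunctor C (2 * (d : ℤ)))).finrank_map tw.P.functor,
    ← finrank_iso (Iso.refl _) e4, hb.finrank_map]

/-- Weighted total dimension of `Hom^*(E, F)`. -/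
noncomputable def MM (E : C) (t : ℝ) (F : C) : ENNReal :=
  ∑' u : ℤ, (ar E u F : ENNReal) * ENNReal.ofReal (Real.exp ((u : ℝ) * t))

lemma MM_eq (E F : C) (t : ℝ) {k : ℕ} (ns : Fin k → ℤ)
    (hn : ∀ n : ℤ, (Finset.univ.filter fun i => ns i = -n).card
        = Module.finrank ℂ (E ⟶ (shiftFunctor C n).obj F)) :
    MM E t F = ENNReal.ofReal (∑ i, Real.exp ((ns i : ℝ) * t)) := by
  have h1 : ∀ u : ℤ, (ar E u F : ENNReal) * ENNReal.ofReal (Real.exp ((u : ℝ) * t)) =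
      ∑ i, if u = ns i then ENNReal.ofReal (Real.exp ((u : ℝ) * t)) else 0 := by
    intro u
    rw [ar, ← hn (-u), Finset.sum_ite, Finset.sum_const, Finset.sum_const_zero, add_zero, neg_neg,
      nsmul_eq_mul]
    simp only [eq_comm]
  unfold MM
  simp_rw [h1]
  rw [Summable.tsum_finsetSum (fun _ _ => ENNReal.summable),
    ENNReal.ofReal_sum_of_nonneg (fun _ _ => (Real.exp_pos _).le)]
  exact Finset.sum_congr rfl fun i _ =>
    tsum_ite_eq (ns i) (fun u : ℤ => ENNReal.ofReal (Real.exp ((u : ℝ) * t)))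

lemma MM_reindex (E F F' : C) (t : ℝ) (n : ℤ) (h : ∀ u, ar E u F' = ar E (u - n) F) :
    MM E t F' = ENNReal.ofReal (Real.exp ((n : ℝ) * t)) * MM E t F := by
  unfold MM
  rw [← ENNReal.tsum_mul_left, ← (Equiv.addRight n).tsum_eq]
  refine tsum_congr fun u => ?_
  simp only [Equiv.coe_addRight, h, add_sub_cancel_right]
  push_cast
  rw [add_mul, Real.exp_add, ENNReal.ofReal_mul (Real.exp_pos _).le]
  ring

lemma MM_shift (E F : C) (t : ℝ) (n : ℤ) :
    MM E t (F⟦n⟧) = ENNReal.ofReal (Real.exp ((n : ℝ) * t)) * MM E t F :=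
  MM_reindex E F _ t n fun u => ar_shift E F u n

lemma MM_P (F : C) (t : ℝ) :
    MM tw.E t (tw.P.functor.obj F) = ENNReal.ofReal (Real.exp (-2 * (d : ℝ) * t)) * MM tw.E t F := by
  rw [MM_reindex tw.E F _ t (-2 * (d : ℤ)) fun u => ?_]
  · push_cast; rfl
  · rw [ar_P]; congr 1; ring

lemma MM_tri (E : C) (t : ℝ) {A B K : C} {f : A ⟶ B} {g : B ⟶ K} {h : K ⟶ A⟦(1 : ℤ)⟧}
    (H : DT f g h) : MM E t B ≤ MM E t A + MM E t K := by
  unfold MM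
  rw [← ENNReal.tsum_add]
  refine ENNReal.tsum_le_tsum fun u => ?_
  rw [← add_mul]
  gcongr
  exact_mod_cast ar_tri E H u

lemma MM_retract (E : C) (t : ℝ) {F F' : C} (e : Retract F F') : MM E t F ≤ MM E t F' := by
  unfold MM
  refine ENNReal.tsum_le_tsum fun u => ?_
  gcongr
  exact ar_retract E e u

lemma MM_build (E : C) {G : C} {t : ℝ} {B : C} {r : ℝ} (h : BuildVal C G t B r) :
    MM E t B ≤ ENNReal.ofReal r * MM E t G := by
  induction h with
  | zero Z hZ =>
    have : MM E t Z = 0 := by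
      unfold MM
      rw [ENNReal.tsum_eq_zero]
      intro u
      have hz : IsZero (Z⟦-u⟧) := (shiftFunctor C (-u)).map_isZero hZ
      have : Subsingleton (E ⟶ Z⟦-u⟧) := ⟨fun a b => hz.eq_of_tgt a b⟩
      rw [ar, Module.finrank_zero_of_subsingleton]
      simp
    rw [this]; exact zero_le
  | step A B n r f g h hT hA ih =>
    refine (MM_tri E t (f := f) (g := g) (h := h) hT).trans ?_
    rw [MM_shift, ENNReal.ofReal_add (BuildVal_nonneg hA) (Real.exp_pos _).le, add_mul]
    gcongr

lemma MM_mem (E : C) {G F : C} {t r : ℝ} (h : r ∈ complexitySet C G F t) :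
    MM E t F ≤ ENNReal.ofReal r * MM E t G := by
  obtain ⟨B, F', hB, ⟨e⟩⟩ := h
  exact (MM_retract E t ⟨biprod.inl ≫ e.inv, e.hom ≫ biprod.fst, by simp⟩).trans (MM_build E hB)

lemma MM_ne_zero {G : C} (hG : IsSplitGenerator C G) (t : ℝ) : MM tw.E t G ≠ 0 := by
  intro h0
  have h1 : MM tw.E 0 G = 0 := by
    unfold MM at h0 ⊢
    rw [ENNReal.tsum_eq_zero] at h0 ⊢
    intro u
    have := h0 u
    rw [mul_eq_zero] at this
    rcases this with h | h
    · rw [h, zero_mul]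
    · exact absurd h (by simp [Real.exp_pos])
  obtain ⟨σ, hσ⟩ := hG tw.E
  have h2 := MM_mem tw.E hσ
  rw [h1, mul_zero] at h2
  have h3 : MM tw.E 0 tw.E = 0 := le_antisymm h2 zero_le
  unfold MM at h3
  rw [ENNReal.tsum_eq_zero] at h3
  have h4 := h3 0
  simp only [mul_zero, Real.exp_zero, ENNReal.ofReal_one, mul_one, Nat.cast_eq_zero] at h4
  unfold ar at h4
  rw [← finrank_iso (Iso.refl tw.E) ((shiftFunctorZero' C (-(0 : ℤ)) (by simp)).symm.app tw.E)] at h4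
  have h5 : Subsingleton (tw.E ⟶ tw.E) := Module.finrank_zero_iff.1 h4
  exact (brickE tw.toPdObject).id_ne (Subsingleton.elim _ _)

lemma MM_ne_top (F : C) (t : ℝ) : MM tw.E t F ≠ ⊤ := by
  obtain ⟨k, ns, -, hn⟩ := tw.H_iso F
  rw [MM_eq tw.E F t ns hn]
  exact ENNReal.ofReal_ne_top

lemma Qx.dec {G : C} {t : ℝ} {E : C} {s : ℝ} (hs : 0 ≤ s)
    (hE : ∀ m : ℤ, Qx G t (E⟦m⟧) (Real.exp ((m : ℝ) * t) * s)) (k : ℕ) : ∃ c : ℝ, 0 ≤ c ∧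
    ∀ (us : Fin k → ℤ) (Y : C) (_ : Dec E Y us),
      Qx G t Y (c * ∑ i, Real.exp ((us i : ℝ) * t)) := by
  obtain ⟨c, hc, h⟩ := Qx.bip (G := G) (t := t) k
  refine ⟨c * s, by positivity, fun us Y D => ?_⟩
  have h1 := h D.L (fun i => Real.exp ((us i : ℝ) * t) * s) (fun i => by positivity)
    (fun i => (hE (us i)).of_iso (D.isS i).some)
  have R : Retract Y (biproduct D.L) := by
    refine ⟨biproduct.lift D.pr, biproduct.desc D.inc, ?_⟩
    rw [biproduct.lift_desc, D.total]
  refine (h1.retract R).mono (le_of_eq ?_)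
  rw [← Finset.sum_mul]; ring

lemma step_P {G : C} (hG : IsSplitGenerator C G) (t : ℝ) (k : ℕ) : ∃ c : ℝ, 0 ≤ c ∧
    ∀ F : C, MM tw.E 0 F = k → ∀ r, Cx G t F r →
      Cx G t (tw.P.functor.obj F) (r + c * (MM tw.E t F).toReal) := by
  obtain ⟨s, hs, hE⟩ := Qx.of_gen (t := t) hG tw.E
  obtain ⟨c, hc, hD⟩ := Qx.dec hs hE k
  refine ⟨2 * (c * (Real.exp t + 1)), by positivity, fun F hF r hr => ?_⟩
  obtain ⟨k', ns, ⟨e⟩, hn⟩ := tw.H_iso F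
  have hk := MM_eq tw.E F 0 ns hn
  rw [hF] at hk
  simp only [mul_zero, Real.exp_zero, Finset.sum_const, Finset.card_univ, Fintype.card_fin,
    nsmul_eq_mul, mul_one, ENNReal.ofReal_natCast, Nat.cast_inj] at hk
  subst hk
  let D := Dec.ofBiproduct e
  have h1 := hD _ _ (D.shift 1)
  have h2 := hD _ _ (((D.shift (-2)).shift 1).shift 1)
  obtain ⟨h', H'⟩ := (tw_inner tw F).rot.shift 1
  have h3 := Qx.ext H' h1 h2
  have h4 := h3 _ _ _ (tw_outer tw F).rot hr
  refine h4.mono (le_of_eq ?_)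
  rw [MM_eq tw.E F t ns hn, ENNReal.toReal_ofReal (Finset.sum_nonneg fun _ _ => (Real.exp_pos _).le)]
  have e1 : ∑ i, Real.exp (((ns i + 1 : ℤ) : ℝ) * t) =
      Real.exp t * ∑ i, Real.exp ((ns i : ℝ) * t) := by
    rw [Finset.mul_sum]
    refine Finset.sum_congr rfl fun i _ => ?_
    push_cast
    rw [← Real.exp_add]; congr 1; ring
  have e2 : ∑ i, Real.exp (((ns i + -2 + 1 + 1 : ℤ) : ℝ) * t) =
      ∑ i, Real.exp ((ns i : ℝ) * t) := by
    refine Finset.sum_congr rfl fun i _ => ?_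
    push_cast
    congr 1; ring
  rw [e1, e2]; ring

lemma MM_iter (G : C) (t : ℝ) (n : ℕ) :
    MM tw.E t ((fun X => tw.P.functor.obj X)^[n] G) =
      ENNReal.ofReal (Real.exp (-2 * (d : ℝ) * t) ^ n) * MM tw.E t G := by
  induction n with
  | zero => simp
  | succ n ih =>
    rw [Function.iterate_succ_apply', MM_P, ih, pow_succ', ENNReal.ofReal_mul (Real.exp_pos _).le]
    ring

lemma upper {G : C} (hG : IsSplitGenerator C G) (t : ℝ) (ht : t ≤ 0) : ∃ c : ℝ, 0 ≤ c ∧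
    ∀ n : ℕ, Cx G t ((fun X => tw.P.functor.obj X)^[n] G)
      ((1 + n * c) * Real.exp (-2 * (d : ℝ) * t) ^ n) := by
  obtain ⟨k, ns, -, hn⟩ := tw.H_iso G
  have hk := MM_eq tw.E G 0 ns hn
  simp only [mul_zero, Real.exp_zero, Finset.sum_const, Finset.card_univ, Fintype.card_fin,
    nsmul_eq_mul, mul_one, ENNReal.ofReal_natCast] at hk
  obtain ⟨c, hc, h⟩ := step_P tw hG t k
  have hq : 1 ≤ Real.exp (-2 * (d : ℝ) * t) := by
    apply Real.one_le_exp
    have : (0 : ℝ) ≤ d := Nat.cast_nonneg d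
    nlinarith
  set q := Real.exp (-2 * (d : ℝ) * t) with hqdef
  refine ⟨c * (MM tw.E t G).toReal, by positivity, fun n => ?_⟩
  induction n with
  | zero => simpa using Cx.gen
  | succ n ih =>
    have h1 := h _ (by rw [MM_iter, hk]; simp) _ ih
    rw [Function.iterate_succ_apply']
    refine h1.mono ?_
    rw [MM_iter, ← hqdef, ENNReal.toReal_mul, ENNReal.toReal_ofReal (by positivity)]
    have hm : 0 ≤ (MM tw.E t G).toReal := ENNReal.toReal_nonneg
    have e1 : (1 + n * (c * (MM tw.E t G).toReal)) * q ^ n + c * (q ^ n * (MM tw.E t G).toReal) =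
      (1 + ((n + 1 : ℕ) : ℝ) * (c * (MM tw.E t G).toReal)) * q ^ n := by push_cast; ring
    rw [e1]
    have : q ^ n ≤ q ^ (n + 1) := pow_le_pow_right₀ hq (Nat.le_succ n)
    gcongr

lemma lower {G : C} (hG : IsSplitGenerator C G) (t : ℝ) (ht : t ≤ 0) (n : ℕ) :
    Real.exp (-2 * (d : ℝ) * t) ^ n ≤
      complexity C G ((fun X => tw.P.functor.obj X)^[n] G) t := by
  obtain ⟨c, -, h⟩ := upper tw hG t ht
  obtain ⟨r', -, hr'⟩ := (h n).mem
  refine le_csInf ⟨r', hr'⟩ fun r hr => ?_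
  have h1 := MM_mem tw.E hr
  rw [MM_iter, ENNReal.mul_le_mul_iff_left (MM_ne_zero tw hG t) (MM_ne_top tw G t)] at h1
  have hr0 : 0 ≤ r := by
    obtain ⟨_, _, hx, -⟩ := hr
    exact BuildVal_nonneg hx
  exact (ENNReal.ofReal_le_ofReal_iff hr0).1 h1

lemma squeeze {q c : ℝ} (hq : 0 < q) (hc : 0 ≤ c) {f : ℕ → ℝ} (h1 : ∀ n, q ^ n ≤ f n)
    (h2 : ∀ n : ℕ, f n ≤ (1 + n * c) * q ^ n) :
    Tendsto (fun n : ℕ => Real.log (f n) / n) atTop (nhds (Real.log q)) := by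
  have hlim : Tendsto (fun n : ℕ => Real.log q + (Real.log (1 + c) / n + Real.log n / n)) atTop
      (nhds (Real.log q + (0 + 0))) := by
    refine tendsto_const_nhds.add (Tendsto.add ?_ ?_)
    · exact tendsto_const_div_atTop_nhds_zero_nat _
    · exact Real.isLittleO_log_id_atTop.tendsto_div_nhds_zero.comp tendsto_natCast_atTop_atTop
  rw [add_zero, add_zero] at hlim
  refine tendsto_of_tendsto_of_tendsto_of_le_of_le' tendsto_const_nhds hlim ?_ ?_
  · filter_upwards [eventually_gt_atTop 0] with n hn
    have hn' : (0 : ℝ) < n := by exact_mod_cast hn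
    rw [le_div_iff₀ hn', mul_comm, ← Real.log_pow]
    exact Real.log_le_log (by positivity) (h1 n)
  · filter_upwards [eventually_gt_atTop 0] with n hn
    have hn' : (0 : ℝ) < n := by exact_mod_cast hn
    have hn1 : (1 : ℝ) ≤ n := by exact_mod_cast hn
    have h3 : Real.log (f n) ≤ Real.log ((1 + c) * n * q ^ n) := by
      apply Real.log_le_log (lt_of_lt_of_le (by positivity) (h1 n))
      refine (h2 n).trans ?_
      gcongr
      nlinarith
    rw [Real.log_mul (by positivity) (by positivity), Real.log_mul (by positivity) (by positivity),
      Real.log_pow] at h3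
    rw [div_le_iff₀ hn']
    refine h3.trans (le_of_eq ?_)
    field_simp
    ring

end PartD

end PdAux

/-- Fan. Let `X` be a smooth projective variety of dimension `2d` over `ℂ`
and `ℰ ∈ D^b(X)` a `ℙ^d`-object with `ℙ^d`-twist `P_ℰ`. For every `t ≤ 0`, the categorical
entropy satisfies `h_t(P_ℰ) = -2dt`, i.e. `(1/n) log δ_t(G, P_ℰ^n G) → -2dt` for a split
generator `G`. -/
theorem entropy_PdTwist_nonpos (d : ℕ) (tw : PdTwist C d)
    (hgen : ∃ G : C, IsSplitGenerator C G) (t : ℝ) (ht : t ≤ 0) :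
    ∀ G : C, IsSplitGenerator C G →
      Tendsto (fun n : ℕ =>
          Real.log (complexity C G ((fun X => tw.P.functor.obj X)^[n] G) t) / n)
        atTop (nhds (-2 * (d : ℝ) * t)) := by
  intro G hG
  obtain ⟨c, hc, h⟩ := PdAux.upper tw hG t ht
  have h1 := PdAux.squeeze (Real.exp_pos (-2 * (d : ℝ) * t)) hc
    (PdAux.lower tw hG t ht) (fun n => PdAux.complexity_le (h n))
  rwa [Real.log_exp] at h1
end

section
/- Let X be a smooth projective variety of dimension 2d over ℂ and let ℰ ∈ D^b(X) be a ℙ^d-object with associated ℙ^d-twist P_ℰ. Then h_0(P_ℰ) = 0 = log ρ((P_ℰ)_{H^*}), where (P_ℰ)_{H^*} is the induced Fourier–Mukai type action on H^*(X; ℂ) and ρ denotes its spectral radius; i.e., the Kikuta–Takahashi Gromov–Yomdin type conjecture holds for ℙ^d-twists. -/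
open CategoryTheory CategoryTheory.Limits CategoryTheory.Pretriangulated Filter

universe v u

variable (C : Type u) [Category.{v} C] [Preadditive C] [HasZeroObject C]
  [HasShift C ℤ] [∀ n : ℤ, (shiftFunctor C n).Additive] [Pretriangulated C]
  [HasFiniteBiproducts C] [CategoryTheory.Linear ℂ C]
  [∀ X Y : C, Module.Finite ℂ (X ⟶ Y)]

section Aux

set_option linter.unusedSectionVars false

variable {C}

section Wrap

variable {X Y Z : C} {f : X ⟶ Y} {g : Y ⟶ Z} {h : Z ⟶ X⟦(1 : ℤ)⟧}

lemma pd_fill {X' Y' Z' : C} {f' : X' ⟶ Y'} {g' : Y' ⟶ Z'} {h' : Z' ⟶ X'⟦(1 : ℤ)⟧}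
    (hT : Triangle.mk f g h ∈ distTriang C) (hT' : Triangle.mk f' g' h' ∈ distTriang C)
    (a : X ⟶ X') (c : Z ⟶ Z') (comm : h ≫ a⟦(1 : ℤ)⟧' = c ≫ h') :
    ∃ b : Y ⟶ Y', f ≫ b = a ≫ f' ∧ g ≫ c = b ≫ g' :=
  complete_distinguished_triangle_morphism₂ _ _ hT hT' a c comm

lemma pd_lift2 (hT : Triangle.mk f g h ∈ distTriang C) {W : C} (x : W ⟶ Y) (hx : x ≫ g = 0) :
    ∃ y : W ⟶ X, x = y ≫ f := Triangle.coyoneda_exact₂ _ hT x hx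

lemma pd_lift3 (hT : Triangle.mk f g h ∈ distTriang C) {W : C} (x : W ⟶ Z) (hx : x ≫ h = 0) :
    ∃ y : W ⟶ Y, x = y ≫ g := Triangle.coyoneda_exact₃ _ hT x hx

lemma pd_desc2 (hT : Triangle.mk f g h ∈ distTriang C) {W : C} (x : Y ⟶ W) (hx : f ≫ x = 0) :
    ∃ y : Z ⟶ W, x = g ≫ y := Triangle.yoneda_exact₂ _ hT x hx

lemma pd_desc3 (hT : Triangle.mk f g h ∈ distTriang C) {W : C} (x : Z ⟶ W) (hx : g ≫ x = 0) :
    ∃ y : X⟦(1 : ℤ)⟧ ⟶ W, x = h ≫ y := Triangle.yoneda_exact₃ _ hT x hx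

lemma pd_fg (hT : Triangle.mk f g h ∈ distTriang C) : f ≫ g = 0 :=
  comp_distTriang_mor_zero₁₂ _ hT

lemma pd_gh (hT : Triangle.mk f g h ∈ distTriang C) : g ≫ h = 0 :=
  comp_distTriang_mor_zero₂₃ _ hT

lemma pd_hf (hT : Triangle.mk f g h ∈ distTriang C) : h ≫ f⟦(1 : ℤ)⟧' = 0 :=
  comp_distTriang_mor_zero₃₁ _ hT

lemma pd_lift1 (hT : Triangle.mk f g h ∈ distTriang C) :
    ∃ δ : Z⟦(-1 : ℤ)⟧ ⟶ X, ∀ {W : C} (x : W ⟶ X), x ≫ f = 0 → ∃ y : W ⟶ Z⟦(-1 : ℤ)⟧, x = y ≫ δ :=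
  ⟨(Triangle.mk f g h).invRotate.mor₁, fun x hx =>
    Triangle.coyoneda_exact₂ _ (inv_rot_of_distTriang _ hT) x hx⟩

end Wrap

/-- A retract of the outer terms of distinguished triangles compatible with the connecting
maps induces a retract of the middle terms. -/
lemma pd_retract_mid {X Y Z X' Y' Z' : C} {f : X ⟶ Y} {g : Y ⟶ Z} {h : Z ⟶ X⟦(1 : ℤ)⟧}
    {f' : X' ⟶ Y'} {g' : Y' ⟶ Z'} {h' : Z' ⟶ X'⟦(1 : ℤ)⟧}
    (hT : Triangle.mk f g h ∈ distTriang C) (hT' : Triangle.mk f' g' h' ∈ distTriang C)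
    (s : X ⟶ X') (p : X' ⟶ X) (hsp : s ≫ p = 𝟙 X) (s' : Z ⟶ Z') (p' : Z' ⟶ Z)
    (hsp' : s' ≫ p' = 𝟙 Z) (c₁ : h ≫ s⟦(1 : ℤ)⟧' = s' ≫ h')
    (c₂ : h' ≫ p⟦(1 : ℤ)⟧' = p' ≫ h) :
    ∃ (σ : Y ⟶ Y') (ρ : Y' ⟶ Y), σ ≫ ρ = 𝟙 Y := by
  obtain ⟨b, hb1, hb2⟩ := pd_fill hT hT' s s' c₁
  obtain ⟨b', hb1', hb2'⟩ := pd_fill hT' hT p p' c₂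
  let φ : Triangle.mk f g h ⟶ Triangle.mk f g h :=
    { hom₁ := 𝟙 X
      hom₂ := b ≫ b'
      hom₃ := 𝟙 Z
      comm₁ := by
        change f ≫ b ≫ b' = 𝟙 X ≫ f
        rw [← Category.assoc, hb1, Category.assoc, hb1', ← Category.assoc, hsp]
      comm₂ := by
        change g ≫ 𝟙 Z = (b ≫ b') ≫ g
        rw [Category.assoc, ← hb2', ← Category.assoc, ← hb2, Category.assoc, hsp']
      comm₃ := by
        change h ≫ (𝟙 X)⟦(1 : ℤ)⟧' = 𝟙 Z ≫ h
        simp }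
  have : IsIso φ.hom₂ := isIso₂_of_isIso₁₃ φ hT hT (inferInstanceAs (IsIso (𝟙 X)))
    (inferInstanceAs (IsIso (𝟙 Z)))
  have h2 : IsIso (b ≫ b') := this
  exact ⟨b, b' ≫ inv (b ≫ b'), by rw [← Category.assoc, IsIso.hom_inv_id]⟩

/-- `F` is a retract of an object built from `G` in `k` steps. -/
def PdRt (G F : C) (k : ℕ) : Prop :=
  ∃ (B : C) (s : F ⟶ B) (p : B ⟶ F), BuildVal C G 0 B (k : ℝ) ∧ s ≫ p = 𝟙 F

lemma PdRt.retract {G F F' : C} {k : ℕ} (h : PdRt G F k) (s : F' ⟶ F) (p : F ⟶ F')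
    (hsp : s ≫ p = 𝟙 F') : PdRt G F' k := by
  obtain ⟨B, s', p', hB, h'⟩ := h
  refine ⟨B, s ≫ s', p' ≫ p, hB, ?_⟩
  rw [Category.assoc, ← Category.assoc s', h', Category.id_comp, hsp]

lemma PdRt.iso {G F F' : C} {k : ℕ} (h : PdRt G F k) (e : F ≅ F') : PdRt G F' k :=
  h.retract e.inv e.hom e.inv_hom_id

lemma pd_build_step {G A B : C} {k : ℕ} {n : ℤ} {f : A ⟶ B} {g : B ⟶ G⟦n⟧}
    {h : G⟦n⟧ ⟶ A⟦(1 : ℤ)⟧} (hT : Triangle.mk f g h ∈ distTriang C)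
    (hA : BuildVal C G 0 A (k : ℝ)) : BuildVal C G 0 B ((k + 1 : ℕ) : ℝ) := by
  have := BuildVal.step A B n _ f g h hT hA
  simpa using this

lemma PdRt.step {G X Y : C} {k : ℕ} {n : ℤ} {f : X ⟶ Y} {g : Y ⟶ G⟦n⟧}
    {h : G⟦n⟧ ⟶ X⟦(1 : ℤ)⟧} (hT : Triangle.mk f g h ∈ distTriang C)
    (hX : PdRt G X k) : PdRt G Y (k + 1) := by
  obtain ⟨B, s, p, hB, hsp⟩ := hX
  obtain ⟨Y', f', g', hT'⟩ := distinguished_cocone_triangle₂ (h ≫ s⟦(1 : ℤ)⟧')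
  obtain ⟨σ, ρ, hh⟩ := pd_retract_mid hT hT' s p hsp (𝟙 _) (𝟙 _) (by simp) (by simp)
    (by simp [← Functor.map_comp, hsp])
  exact ⟨Y', σ, ρ, pd_build_step hT' hB, hh⟩

lemma PdRt.add_shift {G X : C} {k : ℕ} (n : ℤ) (hX : PdRt G X k) :
    PdRt G (X ⊞ G⟦n⟧) (k + 1) :=
  PdRt.step (binaryBiproductTriangle_distinguished X (G⟦n⟧)) hX

/-- the weak octahedral property -/
lemma pd_weak_oct {X Y Z Z' G : C} {f : X ⟶ Y} {g : Y ⟶ Z} {h : Z ⟶ X⟦(1 : ℤ)⟧}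
    (hT : Triangle.mk f g h ∈ distTriang C)
    {a : Z' ⟶ Z} {b : Z ⟶ G} {c : G ⟶ Z'⟦(1 : ℤ)⟧}
    (hS : Triangle.mk a b c ∈ distTriang C)
    {Y' : C} {f' : X ⟶ Y'} {g' : Y' ⟶ Z'} (hT' : Triangle.mk f' g' (a ≫ h) ∈ distTriang C)
    {Y'' : C} {i : Y'' ⟶ Y} {w : G ⟶ Y''⟦(1 : ℤ)⟧}
    (hT'' : Triangle.mk i (g ≫ b) w ∈ distTriang C) :
    ∃ (s : Y'' ⟶ Y' ⊞ G⟦(-1 : ℤ)⟧) (p : Y' ⊞ G⟦(-1 : ℤ)⟧ ⟶ Y''), s ≫ p = 𝟙 Y'' := by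
  -- j : Y' ⟶ Y
  obtain ⟨j, hj1, hj2⟩ := pd_fill hT' hT (𝟙 X) a
    (by rw [(shiftFunctor C (1 : ℤ)).map_id, Category.comp_id])
  rw [Category.id_comp] at hj1
  have hab : a ≫ b = 0 := pd_fg hS
  have hgh : g ≫ h = 0 := pd_gh hT
  have hi : i ≫ g ≫ b = 0 := pd_fg hT''
  obtain ⟨χ, hχ⟩ : ∃ χ : Y' ⟶ Y'', j = χ ≫ i :=
    pd_lift2 hT'' j (by
      rw [← Category.assoc, ← hj2, Category.assoc, hab, comp_zero])
  obtain ⟨φ, hφ⟩ : ∃ φ : Y'' ⟶ Z', i ≫ g = φ ≫ a :=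
    pd_lift2 hS (i ≫ g) (by rw [Category.assoc]; exact hi)
  obtain ⟨ψ₀, hψ₀⟩ : ∃ ψ : Y'' ⟶ Y', φ = ψ ≫ g' :=
    pd_lift3 hT' φ (by
      rw [← Category.assoc, ← hφ, Category.assoc, hgh, comp_zero])
  obtain ⟨t, ht⟩ : ∃ t : Y'' ⟶ X, i - ψ₀ ≫ j = t ≫ f :=
    pd_lift2 hT (i - ψ₀ ≫ j) (by
      rw [Preadditive.sub_comp, hφ, hψ₀, Category.assoc, Category.assoc, hj2, sub_self])
  let ψ := ψ₀ + t ≫ f'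
  have hψ : ψ ≫ j = i := by
    simp only [ψ, Preadditive.add_comp, Category.assoc, hj1]
    rw [← ht]; abel
  obtain ⟨δ, hδ⟩ := pd_lift1 hT''
  obtain ⟨s, hs⟩ := hδ (𝟙 Y'' - ψ ≫ χ) (by
      rw [Preadditive.sub_comp, Category.assoc, ← hχ, hψ, Category.id_comp, sub_self])
  refine ⟨biprod.lift ψ s, biprod.desc χ δ, ?_⟩
  rw [biprod.lift_desc, ← hs]; abel

lemma PdRt.ext_build {G Z : C} {r : ℝ} (hZ : BuildVal C G 0 Z r) :
    ∃ l : ℕ, r = l ∧ ∀ (X Y : C) (f : X ⟶ Y) (g : Y ⟶ Z) (h : Z ⟶ X⟦(1 : ℤ)⟧)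
      (_ : Triangle.mk f g h ∈ distTriang C) (k : ℕ), PdRt G X k → PdRt G Y (k + 2 * l) := by
  induction hZ with
  | zero Z hZ =>
    refine ⟨0, by simp, fun X Y f g h hT k hX => ?_⟩
    have : IsIso f := (Triangle.isZero₃_iff_isIso₁ _ hT).1 hZ
    exact hX.iso (asIso f)
  | step A B n r a b c hS hA ih =>
    obtain ⟨l, rfl, ih⟩ := ih
    refine ⟨l + 1, by simp, fun X Y f g h hT k hX => ?_⟩
    obtain ⟨Y', f', g', hT'⟩ := distinguished_cocone_triangle₂ (a ≫ h)
    obtain ⟨Y'', i, w, hT''⟩ := distinguished_cocone_triangle₁ (g ≫ b)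
    obtain ⟨s, p, hsp⟩ := pd_weak_oct hT hS hT' hT''
    have h1 : PdRt G Y' (k + 2 * l) := ih _ _ _ _ _ hT' k hX
    have h2 := h1.add_shift (n + (-1))
    have e : G⟦n + (-1)⟧ ≅ (G⟦n⟧)⟦(-1 : ℤ)⟧ := (shiftFunctorAdd C n (-1)).app G
    have h3 := (h2.iso (biprod.mapIso (Iso.refl _) e)).retract s p hsp
    exact h3.step hT''

lemma PdRt.ext {G X Y Z : C} {k l : ℕ} {f : X ⟶ Y} {g : Y ⟶ Z} {h : Z ⟶ X⟦(1 : ℤ)⟧}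
    (hT : Triangle.mk f g h ∈ distTriang C) (hX : PdRt G X k) (hZ : PdRt G Z l) :
    PdRt G Y (k + 2 * l) := by
  obtain ⟨B, s, p, hB, hsp⟩ := hZ
  obtain ⟨l', hl, H⟩ := PdRt.ext_build hB
  obtain rfl : l = l' := by exact_mod_cast hl
  obtain ⟨Y', f', g', hT'⟩ := distinguished_cocone_triangle₂ (p ≫ h)
  obtain ⟨σ, ρ, hh⟩ := pd_retract_mid hT hT' (𝟙 X) (𝟙 X) (by simp) s p hsp
    (by simp [← Category.assoc, hsp]) (by simp)
  exact (H _ _ _ _ _ hT' k hX).retract σ ρ hh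

lemma PdRt.biprod {G X Y : C} {k l : ℕ} (hX : PdRt G X k) (hY : PdRt G Y l) :
    PdRt G (X ⊞ Y) (k + 2 * l) :=
  PdRt.ext (binaryBiproductTriangle_distinguished X Y) hX hY

lemma PdRt.zero {G Z : C} (hZ : IsZero Z) : PdRt G Z 0 :=
  ⟨Z, 𝟙 Z, 𝟙 Z, by simpa using BuildVal.zero Z hZ, by simp⟩

lemma PdRt.shift_gen (G : C) (n : ℤ) : PdRt G (G⟦n⟧) 1 := by
  have h := (PdRt.zero (G := G) (isZero_zero C)).add_shift n
  exact h.retract biprod.inr biprod.snd (by simp)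

lemma pd_build_nat {G B : C} {r : ℝ} (hB : BuildVal C G 0 B r) :
    ∃ k : ℕ, r = k ∧ (k = 0 → IsZero B) ∧ (IsZero G → IsZero B) := by
  induction hB with
  | zero Z hZ => exact ⟨0, by simp, fun _ => hZ, fun _ => hZ⟩
  | step A B n r a b c hS hA ih =>
    obtain ⟨l, rfl, ih, ih'⟩ := ih
    exact ⟨l + 1, by simp, by simp, fun hG => Triangle.isZero₂_of_isZero₁₃ _ hS (ih' hG)
      (Functor.map_isZero _ hG)⟩

lemma PdRt.shift_build {G B : C} {r : ℝ} (hB : BuildVal C G 0 B r) (m : ℤ) :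
    ∃ k : ℕ, r = k ∧ PdRt G (B⟦m⟧) (2 * k) := by
  induction hB with
  | zero Z hZ => exact ⟨0, by simp, PdRt.zero (Functor.map_isZero _ hZ)⟩
  | step A B n r a b c hS hA ih =>
    obtain ⟨l, rfl, ih⟩ := ih
    refine ⟨l + 1, by simp, ?_⟩
    have hS' := Triangle.shift_distinguished _ hS m
    have e : G⟦n + m⟧ ≅ (G⟦n⟧)⟦m⟧ := (shiftFunctorAdd C n m).app G
    exact PdRt.ext hS' ih ((PdRt.shift_gen G (n + m)).iso e)

lemma PdRt.shift {G X : C} {k : ℕ} (hX : PdRt G X k) (m : ℤ) : PdRt G (X⟦m⟧) (2 * k) := by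
  obtain ⟨B, s, p, hB, hsp⟩ := hX
  obtain ⟨l, hl, H⟩ := PdRt.shift_build hB m
  obtain rfl : k = l := by exact_mod_cast hl
  exact H.retract (s⟦m⟧') (p⟦m⟧') (by rw [← Functor.map_comp, hsp, CategoryTheory.Functor.map_id])

lemma PdRt.mem {G F : C} {k : ℕ} (h : PdRt G F k) : (k : ℝ) ∈ complexitySet C G F 0 := by
  obtain ⟨B, s, p, hB, hsp⟩ := h
  obtain ⟨Q, q, w, hT⟩ := distinguished_cocone_triangle s
  have : Mono s := by
    have : Mono (s ≫ p) := by rw [hsp]; infer_instance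
    exact mono_of_mono s p
  have h0 : w = 0 := Triangle.mor₃_eq_zero_of_mono₁ _ hT this
  obtain ⟨e, -⟩ := exists_iso_binaryBiproduct_of_distTriang _ hT h0
  exact ⟨B, Q, hB, ⟨e⟩⟩

lemma pd_of_mem {G F : C} {r : ℝ} (h : r ∈ complexitySet C G F 0) :
    ∃ k : ℕ, r = k ∧ PdRt G F k := by
  obtain ⟨B, F', hB, ⟨e⟩⟩ := h
  obtain ⟨k, rfl, -⟩ := pd_build_nat hB
  exact ⟨k, rfl, B, biprod.inl ≫ e.inv, e.hom ≫ biprod.fst, hB, by simp⟩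

/-- finite sums -/
lemma PdRt.finite_sum {G E W : C} {c : ℕ} (hE : ∀ n : ℤ, PdRt G (E⟦n⟧) c) {k : ℕ}
    (ns : Fin k → ℤ) (e : W ≅ biproduct (fun i => E⟦ns i⟧)) : PdRt G W (2 * c * k) := by
  have key : ∀ S : Finset (Fin k), ∃ (B : C) (s : W ⟶ B) (p : B ⟶ W),
      PdRt G B (2 * c * S.card) ∧
      s ≫ p = ∑ i ∈ S, e.hom ≫ biproduct.π _ i ≫ biproduct.ι (fun i => E⟦ns i⟧) i ≫ e.inv := by
    intro S
    classical
    induction S using Finset.induction_on with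
    | empty => exact ⟨_, 0, 0, PdRt.zero (isZero_zero C), by simp⟩
    | insert i S hi ih =>
      obtain ⟨B, s, p, hB, hsp⟩ := ih
      refine ⟨B ⊞ E⟦ns i⟧, biprod.lift s (e.hom ≫ biproduct.π _ i),
        biprod.desc p (biproduct.ι (fun i => E⟦ns i⟧) i ≫ e.inv), ?_, ?_⟩
      · have := hB.biprod (hE (ns i))
        rw [Finset.card_insert_of_notMem hi]
        convert this using 1
        ring
      · rw [biprod.lift_desc, Finset.sum_insert hi, hsp, add_comm, Category.assoc]
  obtain ⟨B, s, p, hB, hsp⟩ := key Finset.univ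
  rw [Finset.card_univ, Fintype.card_fin] at hB
  refine hB.retract s p ?_
  rw [hsp]
  have : ∑ i, e.hom ≫ biproduct.π (fun i => E⟦ns i⟧) i ≫ biproduct.ι (fun i => E⟦ns i⟧) i ≫ e.inv
      = e.hom ≫ (∑ i, biproduct.π (fun i => E⟦ns i⟧) i ≫ biproduct.ι (fun i => E⟦ns i⟧) i) ≫ e.inv := by
    rw [Preadditive.sum_comp, Preadditive.comp_sum]
    simp
  rw [this, biproduct.total]
  simp

/-- all morphisms vanish -/
def PdHZ (X Y : C) : Prop := ∀ f : X ⟶ Y, f = 0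

lemma PdHZ.iso {X Y X' Y' : C} (h : PdHZ X Y) (e : X ≅ X') (e' : Y ≅ Y') : PdHZ X' Y' := by
  intro f
  have := h (e.hom ≫ f ≫ e'.inv)
  have h2 : f = e.inv ≫ (e.hom ≫ f ≫ e'.inv) ≫ e'.hom := by simp
  rw [h2, this]; simp

lemma PdHZ.shift {X Y : C} (h : PdHZ X Y) (k : ℤ) : PdHZ (X⟦k⟧) (Y⟦k⟧) := by
  intro f
  obtain ⟨g, rfl⟩ := (shiftFunctor C k).map_surjective f
  rw [h g]; simp

/-- the isomorphism `X⟦m⟧⟦k⟧ ≅ X⟦l⟧` -/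
noncomputable def pdAdd (X : C) (m k l : ℤ) (h : m + k = l) : (X⟦m⟧)⟦k⟧ ≅ X⟦l⟧ :=
  ((shiftFunctorAdd' C m k l h).app X).symm

/-- the isomorphism `X⟦0⟧ ≅ X` -/
noncomputable def pdZero (X : C) : X⟦(0 : ℤ)⟧ ≅ X := (shiftFunctorZero C ℤ).app X

lemma PdHZ.shift' {X Y : C} {m n : ℤ} (h : PdHZ (X⟦m⟧) (Y⟦n⟧)) {m' n' : ℤ}
    (he : m' - m = n' - n) : PdHZ (X⟦m'⟧) (Y⟦n'⟧) :=
  (h.shift (m' - m)).iso (pdAdd X _ _ _ (by ring)) (pdAdd Y _ _ _ (by rw [he]; ring))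

lemma pdHZ_id {M : C} (h : PdHZ M M) : IsZero M := (IsZero.iff_id_eq_zero M).2 (h _)

section Core

variable {E : C}

/-- the properties of the object used below. -/
structure PdCore (E : C) : Prop where
  neg : ∀ m n : ℤ, n < m → PdHZ (E⟦m⟧) (E⟦n⟧)
  one : ∀ m n : ℤ, n = m + 1 → PdHZ (E⟦m⟧) (E⟦n⟧)
  div : ∀ (m : ℤ) (f : E⟦m⟧ ⟶ E⟦m⟧), f ≠ 0 → IsIso f

lemma pd_B1 (hE : PdCore E) (b : ℤ) : ∀ (r : ℕ) (M : C), Module.finrank ℂ (E⟦b⟧ ⟶ M) = r →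
    (∀ m : ℤ, b < m → PdHZ (E⟦m⟧) M) → ∃ (M' : C) (u : M ⟶ M'),
      (∀ m : ℤ, b ≤ m → PdHZ (E⟦m⟧) M') ∧
      ∀ N : C, PdHZ N (E⟦b⟧) → ∀ x : N ⟶ M, x ≫ u = 0 → x = 0 := by
  intro r
  induction r using Nat.strong_induction_on with
  | _ r ih =>
  intro M hr hM
  by_cases h0 : PdHZ (E⟦b⟧) M
  · refine ⟨M, 𝟙 M, fun m hm => ?_, fun N _ x hx => by simpa using hx⟩
    rcases hm.lt_or_eq with h | rfl
    · exact hM m h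
    · exact h0
  · obtain ⟨g, hg⟩ : ∃ g : E⟦b⟧ ⟶ M, g ≠ 0 := by simpa [PdHZ] using h0
    obtain ⟨M', u, w, hT⟩ := distinguished_cocone_triangle g
    have hlt : Module.finrank ℂ (E⟦b⟧ ⟶ M') < r := by
      let φ : (E⟦b⟧ ⟶ M) →ₗ[ℂ] (E⟦b⟧ ⟶ M') := Linear.rightComp ℂ (E⟦b⟧) u
      have hs : Function.Surjective φ := by
        intro x
        obtain ⟨y, hy⟩ := pd_lift3 hT x
          (((hE.one b (b + 1) rfl).iso (Iso.refl _) (pdAdd E b 1 (b + 1) rfl).symm) _)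
        exact ⟨y, hy.symm⟩
      have hk : LinearMap.ker φ ≠ ⊥ := by
        intro hk
        apply hg
        have : g ∈ LinearMap.ker φ := pd_fg hT
        rw [hk] at this
        simpa using this
      have h1 := LinearMap.finrank_range_add_finrank_ker φ
      rw [LinearMap.range_eq_top.2 hs, finrank_top] at h1
      have h2 : 0 < Module.finrank ℂ (LinearMap.ker φ) := by
        rw [Module.finrank_pos_iff]
        exact Submodule.nontrivial_iff_ne_bot.2 hk
      omega
    have hM' : ∀ m : ℤ, b < m → PdHZ (E⟦m⟧) M' := by
      intro m hm x
      have hxw : x ≫ w = 0 := by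
        by_cases hm1 : m = b + 1
        · subst hm1
          by_contra hne
          have hne' : x ≫ w ≫ (pdAdd E b 1 (b + 1) rfl).hom ≠ 0 := by
            intro h
            apply hne
            rw [← Category.assoc] at h
            exact (Preadditive.IsIso.comp_right_eq_zero _ _).1 h
          have hiso := hE.div (b + 1) _ hne'
          have hxw' : IsIso (x ≫ w) := by
            have : x ≫ w = (x ≫ w ≫ (pdAdd E b 1 (b + 1) rfl).hom) ≫
              (pdAdd E b 1 (b + 1) rfl).inv := by simp
            rw [this]; infer_instance
          have hz : (x ≫ w) ≫ g⟦(1 : ℤ)⟧' = 0 := by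
            rw [Category.assoc, pd_hf hT, comp_zero]
          have hz2 : g⟦(1 : ℤ)⟧' = 0 := (Preadditive.IsIso.comp_left_eq_zero _ _).1 hz
          exact hg ((Functor.map_eq_zero_iff (shiftFunctor C (1 : ℤ))).1 hz2)
        · exact ((hE.neg m (b + 1) (by omega)).iso (Iso.refl _)
            (pdAdd E b 1 (b + 1) rfl).symm) _
      obtain ⟨y, hy⟩ := pd_lift3 hT x hxw
      rw [hy, hM m hm y, zero_comp]
    obtain ⟨M'', u', h1, h2⟩ := ih _ hlt M' rfl hM'
    refine ⟨M'', u ≫ u', h1, fun N hN x hx => ?_⟩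
    have hxu : x ≫ u = 0 := h2 N hN _ (by rw [Category.assoc]; exact hx)
    obtain ⟨y, hy⟩ := pd_lift2 hT x hxu
    rw [hy, hN y, zero_comp]

lemma pd_B2 (hE : PdCore E) (b : ℤ) (M : C) (hM : ∀ m : ℤ, b < m → PdHZ (E⟦m⟧) M) (k : ℕ) :
    ∃ (M' : C) (u : M ⟶ M'), (∀ m : ℤ, b - k < m → PdHZ (E⟦m⟧) M') ∧
      ∀ N : C, (∀ i : ℤ, i ≤ b → PdHZ N (E⟦i⟧)) → ∀ x : N ⟶ M, x ≫ u = 0 → x = 0 := by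
  induction k with
  | zero => exact ⟨M, 𝟙 M, by simpa using hM, fun N _ x hx => by simpa using hx⟩
  | succ k ih =>
    obtain ⟨M', u, h1, h2⟩ := ih
    obtain ⟨M'', u', h1', h2'⟩ := pd_B1 hE (b - k) _ M' rfl h1
    refine ⟨M'', u ≫ u', fun m hm => h1' m (by push_cast at hm; omega), fun N hN x hx => ?_⟩
    refine h2 N hN x (h2' N (hN _ (by omega)) _ ?_)
    rw [Category.assoc]; exact hx

/-- boundedness relative to `E` -/
def PdBd (E M : C) : Prop :=
  ∃ K : ℤ, ∀ L : C, (∀ m : ℤ, K < m → PdHZ (E⟦m⟧) L) → PdHZ M L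

lemma pd_VL (hE : PdCore E) {L N : C} (hL : PdBd E L) (b : ℤ)
    (h1 : ∀ m : ℤ, b < m → PdHZ (E⟦m⟧) L) (h2 : ∀ i : ℤ, i ≤ b → PdHZ N (E⟦i⟧)) : PdHZ N L := by
  obtain ⟨K, hK⟩ := hL
  obtain ⟨L', u, h3, h4⟩ := pd_B2 hE b L h1 (b - K).toNat
  have hu : u = 0 := hK L' (fun m hm => h3 m (by omega)) u
  intro x
  exact h4 N h2 x (by rw [hu, comp_zero])

lemma PdBd.shift {M : C} (h : PdBd E M) (k : ℤ) : PdBd E (M⟦k⟧) := by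
  obtain ⟨K, hK⟩ := h
  refine ⟨K + k, fun L hL => ?_⟩
  have h1 : PdHZ M (L⟦-k⟧) := hK _ (fun m hm =>
    ((hL (m + k) (by omega)).shift (-k)).iso (pdAdd E _ _ _ (by ring)) (Iso.refl _))
  exact (h1.shift k).iso (Iso.refl _) ((pdAdd L _ _ 0 (by ring)).trans (pdZero L))

lemma PdBd.self : PdBd E E :=
  ⟨-1, fun _ hL => (hL 0 (by omega)).iso (pdZero E) (Iso.refl _)⟩

lemma PdBd.iso {M M' : C} (h : PdBd E M) (e : M ≅ M') : PdBd E M' := by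
  obtain ⟨K, hK⟩ := h
  exact ⟨K, fun L hL => (hK L hL).iso e (Iso.refl _)⟩

lemma PdBd.ext {X Y Z : C} {f : X ⟶ Y} {g : Y ⟶ Z} {h : Z ⟶ X⟦(1 : ℤ)⟧}
    (hT : Triangle.mk f g h ∈ distTriang C) (hX : PdBd E X) (hZ : PdBd E Z) : PdBd E Y := by
  obtain ⟨K, hK⟩ := hX
  obtain ⟨K', hK'⟩ := hZ
  refine ⟨min K K', fun L hL x => ?_⟩
  obtain ⟨y, hy⟩ := pd_desc2 hT x (hK L (fun m hm => hL m (by omega)) _)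
  rw [hy, hK' L (fun m hm => hL m (by omega)) y, comp_zero]

lemma PdBd.biproduct {k : ℕ} (X : Fin k → C) (h : ∀ i, PdBd E (X i)) : PdBd E (biproduct X) := by
  choose K hK using h
  obtain ⟨K₀, hK₀⟩ : ∃ K₀ : ℤ, ∀ i, K₀ ≤ K i := by
    obtain ⟨B, hB⟩ := (Set.finite_range K).bddBelow
    exact ⟨B, fun i => hB ⟨i, rfl⟩⟩
  refine ⟨K₀, fun L hL x => ?_⟩
  apply biproduct.hom_ext'
  intro i
  have := hK i L (fun m hm => hL m (lt_of_le_of_lt (hK₀ i) hm)) (biproduct.ι X i ≫ x)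
  rw [this, comp_zero]

/-- Rigidity: an object of the same kind inside the span of `E` is a shift of `E`. -/
lemma pd_rigid (hE : PdCore E) {M : C} (hM : PdBd E M) (hM0 : ¬ IsZero M)
    (hdiv : ∀ f : M ⟶ M, f ≠ 0 → IsIso f)
    (hneg : ∀ m : ℤ, m < 0 → PdHZ M (M⟦m⟧))
    (hb : ∃ B : ℤ, ∀ m : ℤ, B < m → PdHZ (E⟦m⟧) M)
    (ha : ∃ A : ℤ, ∀ m : ℤ, m < A → PdHZ M (E⟦m⟧)) :
    ∃ a : ℤ, Nonempty (E⟦a⟧ ≅ M) := by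
  have hMM : ¬ PdHZ M M := fun h => hM0 (pdHZ_id h)
  obtain ⟨β, hβ, hβ'⟩ : ∃ β : ℤ, ¬ PdHZ (E⟦β⟧) M ∧ ∀ m : ℤ, ¬ PdHZ (E⟦m⟧) M → m ≤ β := by
    obtain ⟨B, hB⟩ := hb
    apply Int.exists_greatest_of_bdd
    · exact ⟨B, fun m hm => by by_contra h; exact hm (hB m (by omega))⟩
    · by_contra! h
      obtain ⟨K, hK⟩ := hM
      exact hMM (hK M (fun m _ => h m))
  obtain ⟨α, hα, hα'⟩ : ∃ α : ℤ, ¬ PdHZ M (E⟦α⟧) ∧ ∀ m : ℤ, ¬ PdHZ M (E⟦m⟧) → α ≤ m := by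
    obtain ⟨A, hA⟩ := ha
    apply Int.exists_least_of_bdd
    · exact ⟨A, fun m hm => by by_contra h; exact hm (hA m (by omega))⟩
    · by_contra! h
      exact hMM (pd_VL hE hM β (fun m hm => by by_contra h'; have := hβ' m h'; omega)
        (fun i _ => h i))
  have hβ2 : ∀ m : ℤ, β < m → PdHZ (E⟦m⟧) M := fun m hm => by
    by_contra h'; have := hβ' m h'; omega
  have hα2 : ∀ m : ℤ, m < α → PdHZ M (E⟦m⟧) := fun m hm => by
    by_contra h'; have := hα' m h'; omega
  have hle : α ≤ β := by
    by_contra hlt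
    exact hMM (pd_VL hE hM β hβ2 (fun i hi => hα2 i (by omega)))
  obtain ⟨f, hf⟩ : ∃ f : M ⟶ E⟦α⟧, f ≠ 0 := by simpa [PdHZ] using hα
  -- cone of f
  obtain ⟨N, w, v, hT⟩ := distinguished_cocone_triangle f
  have hN : ∀ i : ℤ, i ≤ α → PdHZ N (E⟦i⟧) := by
    intro i hi x
    have hwx : w ≫ x = 0 := by
      rcases hi.lt_or_eq with h | rfl
      · exact hE.neg _ _ h _
      · by_contra hne
        have := hE.div _ _ hne
        apply hf
        rw [← Preadditive.IsIso.comp_right_eq_zero f (w ≫ x), ← Category.assoc, pd_fg hT, zero_comp]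
    obtain ⟨y, hy⟩ := pd_desc3 hT x hwx
    have : PdHZ (M⟦(1 : ℤ)⟧) (E⟦i⟧) :=
      ((hα2 (i - 1) (by omega)).shift 1).iso (Iso.refl _) (pdAdd E _ _ _ (by ring))
    rw [hy, this y, comp_zero]
  have key : ∀ (L : C), PdBd E L → (∀ m : ℤ, α < m → PdHZ (E⟦m⟧) L) →
      ∀ g : E⟦α⟧ ⟶ L, g ≠ 0 → f ≫ g ≠ 0 := by
    intro L hL hL' g hg h0
    obtain ⟨y, hy⟩ := pd_desc2 hT g h0
    exact hg (by rw [hy, pd_VL hE hL α hL' hN y, comp_zero])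
  have hαβ : α = β := by
    by_contra hne
    have hL : ∀ m : ℤ, α < m → PdHZ (E⟦m⟧) (M⟦α - β⟧) := fun m hm =>
      ((hβ2 (m - (α - β)) (by omega)).shift (α - β)).iso (pdAdd E _ _ _ (by ring)) (Iso.refl _)
    have hL0 : ¬ PdHZ (E⟦α⟧) (M⟦α - β⟧) := by
      intro h
      apply hβ
      exact (h.shift (β - α)).iso (pdAdd E _ _ _ (by ring))
        ((pdAdd M _ _ 0 (by ring)).trans (pdZero M))
    obtain ⟨g, hg⟩ : ∃ g : E⟦α⟧ ⟶ M⟦α - β⟧, g ≠ 0 := by simpa [PdHZ] using hL0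
    exact key _ (hM.shift _) hL g hg (hneg _ (by omega) _)
  subst hαβ
  obtain ⟨g, hg⟩ : ∃ g : E⟦α⟧ ⟶ M, g ≠ 0 := by simpa [PdHZ] using hβ
  have h1 := hdiv _ (key M hM hβ2 g hg)
  have h2 : g ≫ f ≠ 0 := by
    intro h
    have : f ≫ g ≫ f ≫ g = 0 := by rw [← Category.assoc g, h, zero_comp, comp_zero]
    rw [← Category.assoc] at this
    exact key M hM hβ2 g hg ((Preadditive.IsIso.comp_left_eq_zero _ _).1 this)
  have h3 := hE.div _ _ h2
  have : IsIso g := by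
    refine ⟨f ≫ inv (g ≫ f), ?_, ?_⟩
    · rw [← Category.assoc, IsIso.hom_inv_id]
    · have hm : Mono (g ≫ f) := inferInstance
      have hmf : Mono f := by
        have : Mono (f ≫ g) := inferInstance
        exact mono_of_mono f g
      rw [← cancel_mono f]
      simp
  exact ⟨α, ⟨asIso g⟩⟩

end Core

/-- all endomorphisms are scalars -/
def PdSc (X : C) : Prop := ∀ f : X ⟶ X, ∃ c : ℂ, f = c • 𝟙 X

lemma PdSc.iso {X Y : C} (h : PdSc X) (e : X ≅ Y) : PdSc Y := by
  intro f
  obtain ⟨c, hc⟩ := h (e.hom ≫ f ≫ e.inv)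
  refine ⟨c, ?_⟩
  have h2 : f = e.inv ≫ (e.hom ≫ f ≫ e.inv) ≫ e.hom := by simp
  rw [h2, hc]; simp

lemma pd_sc {d : ℕ} (o : PdObject C d) : PdSc o.E := by
  have h1 := o.hom_rank_one 0 (by omega)
  have e : o.E⟦2 * ((0 : ℕ) : ℤ)⟧ ≅ o.E :=
    (shiftFunctorZero' C (2 * ((0 : ℕ) : ℤ)) (by simp)).app o.E
  rw [(Linear.homCongr ℂ (Iso.refl o.E) e).finrank_eq] at h1
  have hne : 𝟙 o.E ≠ 0 := fun h => o.nonzero ((IsZero.iff_id_eq_zero _).2 h)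
  intro f
  obtain ⟨c, hc⟩ := (finrank_eq_one_iff_of_nonzero' (𝟙 o.E) hne).1 h1 f
  exact ⟨c, hc.symm⟩

lemma PdSc.isIso {X : C} (h : PdSc X) (f : X ⟶ X) (hf : f ≠ 0) : IsIso f := by
  obtain ⟨c, rfl⟩ := h f
  have hc : c ≠ 0 := by rintro rfl; simp at hf
  refine ⟨c⁻¹ • 𝟙 X, ?_, ?_⟩ <;> simp [smul_smul, hc]

lemma pd_hz {d : ℕ} (o : PdObject C d) (n : ℤ) (hn : ¬ ∃ k : ℕ, k ≤ d ∧ n = 2 * (k : ℤ)) :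
    PdHZ (o.E⟦(0 : ℤ)⟧) (o.E⟦n⟧) :=
  PdHZ.iso (o.hom_rank_zero n hn) (pdZero o.E).symm (Iso.refl _)

lemma pd_core {d : ℕ} (o : PdObject C d) : PdCore o.E where
  neg m n h := (pd_hz o (n - m) (by rintro ⟨k, -, hk⟩; omega)).shift' (by ring)
  one m n h := (pd_hz o 1 (by rintro ⟨k, -, hk⟩; omega)).shift' (by rw [h]; ring)
  div m f hf := by
    obtain ⟨g, rfl⟩ := (shiftFunctor C m).map_surjective f
    have hg : g ≠ 0 := by rintro rfl; simp at hf
    have := (pd_sc o).isIso g hg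
    infer_instance

lemma pd_finrank_le {D : Type*} [Category D] [Preadditive D] [Linear ℂ D]
    [∀ X Y : D, Module.Finite ℂ (X ⟶ Y)] (Q : C ⥤ D) [Q.Full] [Q.Additive] {X Y : C}
    (hX : ∀ f : Q.obj X ⟶ Q.obj X, ∃ c : ℂ, f = c • 𝟙 (Q.obj X)) :
    Module.finrank ℂ (Q.obj X ⟶ Q.obj Y) ≤ Module.finrank ℂ (X ⟶ Y) := by
  let b := Module.finBasis ℂ (X ⟶ Y)
  have hspan : (⊤ : Submodule ℂ (Q.obj X ⟶ Q.obj Y)) ≤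
      Submodule.span ℂ (Set.range fun i => Q.map (b i)) := by
    rintro w -
    obtain ⟨v, rfl⟩ := Q.map_surjective w
    rw [← b.sum_repr v, Functor.map_sum]
    refine Submodule.sum_mem _ fun i _ => ?_
    obtain ⟨c, hc⟩ := hX (Q.map ((b.repr v i) • 𝟙 X))
    have : Q.map (b.repr v i • b i) = c • Q.map (b i) := by
      have h2 : b.repr v i • b i = (b.repr v i • 𝟙 X) ≫ b i := by simp
      rw [h2, Functor.map_comp, hc]; simp
    rw [this]
    exact Submodule.smul_mem _ _ (Submodule.subset_span ⟨i, rfl⟩)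
  have h := finrank_range_le_card (R := ℂ) (fun i => Q.map (b i))
  rw [Set.finrank, top_le_iff.1 hspan, finrank_top] at h
  simpa using h

lemma pd_count {k k' : ℕ} (ns : Fin k → ℤ) (ns' : Fin k' → ℤ) (a : ℤ)
    (h : ∀ n : ℤ, (Finset.univ.filter fun i => ns' i = -n).card ≤
      (Finset.univ.filter fun i => ns i = -(n + a)).card) : k' ≤ k := by
  have h1 := Finset.card_eq_sum_card_image ns' Finset.univ
  have h2 := Finset.sum_card_fiberwise_eq_card_filter (Finset.univ : Finset (Fin k))
    (Finset.univ.image ns') (fun i => ns i + a)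
  have h3 := Finset.card_filter_le (Finset.univ : Finset (Fin k))
    (fun i => ns i + a ∈ Finset.univ.image ns')
  rw [Finset.card_univ, Fintype.card_fin] at h1 h3
  rw [h1]
  refine le_trans ?_ h3
  rw [← h2]
  refine Finset.sum_le_sum fun m _ => ?_
  have := h (-m)
  rw [neg_neg] at this
  refine this.trans (le_of_eq ?_)
  congr 1
  ext i
  simp only [Finset.mem_filter, Finset.mem_univ, true_and]
  omega

lemma pd_bdd {d : ℕ} (tw : PdTwist C d) (F : C) :
    ∃ D : ℤ, ∀ n : ℤ, (n < -D ∨ D < n) → PdHZ tw.E (F⟦n⟧) := by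
  obtain ⟨k, ns, -, h⟩ := tw.H_iso F
  obtain ⟨D, hD⟩ : ∃ D : ℤ, ∀ i, |ns i| ≤ D := by
    obtain ⟨B, hB⟩ := (Set.finite_range fun i => |ns i|).bddAbove
    exact ⟨B, fun i => hB ⟨i, rfl⟩⟩
  refine ⟨D, fun n hn => ?_⟩
  have h0 : Module.finrank ℂ (tw.E ⟶ F⟦n⟧) = 0 := by
    rw [← h n, Finset.card_eq_zero, Finset.filter_eq_empty_iff]
    intro i _ hi
    have := abs_le.1 (hD i)
    omega
  rw [Module.finrank_zero_iff] at h0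
  exact fun f => Subsingleton.elim _ _

lemma pd_hb {d : ℕ} (tw : PdTwist C d) (M : C) :
    ∃ B : ℤ, ∀ m : ℤ, B < m → PdHZ (tw.E⟦m⟧) M := by
  obtain ⟨D, hD⟩ := pd_bdd tw M
  refine ⟨D, fun m hm => ?_⟩
  exact ((hD (-m) (by omega)).shift m).iso (Iso.refl _)
    ((pdAdd M _ _ 0 (by ring)).trans (pdZero M))

lemma pd_ha {d : ℕ} (tw : PdTwist C d) (M : C) :
    ∃ A : ℤ, ∀ m : ℤ, m < A → PdHZ M (tw.E⟦m⟧) := by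
  obtain ⟨D, hD⟩ := pd_bdd tw M
  refine ⟨2 * (d : ℤ) - D, fun m hm => ?_⟩
  have h1 := hD (2 * (d : ℤ) - m) (by omega)
  have h2 : PdHZ (M⟦2 * (d : ℤ) - m⟧) (tw.E⟦2 * (d : ℤ)⟧) := by
    intro f
    rw [← Module.forall_dual_apply_eq_zero_iff ℂ]
    intro φ
    obtain ⟨x, rfl⟩ := (tw.CY _).surjective φ
    rw [h1 x]; simp
  exact (h2.shift (m - 2 * (d : ℤ))).iso
    ((pdAdd M _ _ 0 (by ring)).trans (pdZero M)) (pdAdd tw.E _ _ _ (by ring))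

lemma pd_additive (P : C ≌ C) : P.functor.Additive :=
  Functor.additive_of_preserves_binary_products _

lemma pd_bdP {d : ℕ} (tw : PdTwist C d) {F : C} (hF : PdBd tw.E F) :
    PdBd tw.E (tw.P.functor.obj F) := by
  obtain ⟨k, ns, ⟨e⟩, -⟩ := tw.H_iso F
  have hH : PdBd tw.E (tw.H F) :=
    (PdBd.biproduct _ fun i => PdBd.self.shift (ns i)).iso e.symm
  have hT : PdBd tw.E (tw.T F) :=
    PdBd.ext (rot_of_distTriang _ (tw.innerTri F)) hH ((hH.shift _).shift _)
  exact PdBd.ext (rot_of_distTriang _ (tw.outerTri F)) hF (hT.shift _)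

lemma pd_PE {d : ℕ} (tw : PdTwist C d) :
    ∃ a : ℤ, Nonempty (tw.E⟦a⟧ ≅ tw.P.functor.obj tw.E) := by
  have := pd_additive tw.P
  haveI := tw.commShift
  refine pd_rigid (pd_core tw.toPdObject) (pd_bdP tw PdBd.self) ?_ ?_ ?_ (pd_hb tw _) (pd_ha tw _)
  · intro h
    rw [IsZero.iff_id_eq_zero, ← CategoryTheory.Functor.map_id, Functor.map_eq_zero_iff,
      ← IsZero.iff_id_eq_zero] at h
    exact tw.nonzero h
  · intro f hf
    obtain ⟨g, rfl⟩ := tw.P.functor.map_surjective f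
    have hg : g ≠ 0 := by rintro rfl; simp at hf
    have := (pd_sc tw.toPdObject).isIso g hg
    infer_instance
  · intro m hm
    have h1 : PdHZ tw.E (tw.E⟦m⟧) := tw.hom_rank_zero m (by rintro ⟨k, -, hk⟩; omega)
    have h2 : PdHZ (tw.P.functor.obj tw.E) (tw.P.functor.obj (tw.E⟦m⟧)) := by
      intro f
      obtain ⟨g, rfl⟩ := tw.P.functor.map_surjective f
      rw [h1 g]; simp
    exact h2.iso (Iso.refl _) ((tw.P.functor.commShiftIso m).app tw.E)

lemma pd_mult {d : ℕ} (tw : PdTwist C d) :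
    ∃ a : ℤ, ∀ (F : C) (n : ℤ), Module.finrank ℂ (tw.E ⟶ (tw.P.functor.obj F)⟦n⟧) ≤
      Module.finrank ℂ (tw.E ⟶ F⟦n + a⟧) := by
  obtain ⟨a, ⟨e⟩⟩ := pd_PE tw
  have := pd_additive tw.P
  haveI := tw.commShift
  refine ⟨a, fun F n => ?_⟩
  let Q : C ⥤ C := tw.P.functor ⋙ shiftFunctor C (-a)
  have e1 : Q.obj tw.E ≅ tw.E :=
    ((shiftFunctor C (-a)).mapIso e.symm).trans
      ((pdAdd tw.E _ _ 0 (by ring)).trans (pdZero tw.E))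
  have e2 : Q.obj (F⟦n + a⟧) ≅ (tw.P.functor.obj F)⟦n⟧ :=
    ((shiftFunctor C (-a)).mapIso ((tw.P.functor.commShiftIso (n + a)).app F)).trans
      (pdAdd (tw.P.functor.obj F) (n + a) (-a) n (by ring))
  have h := pd_finrank_le Q (X := tw.E) (Y := F⟦n + a⟧) ((pd_sc tw.toPdObject).iso e1.symm)
  rwa [(Linear.homCongr ℂ e1 e2).finrank_eq] at h

/-- total multiplicity bounded by `N` -/
def PdN {d : ℕ} (tw : PdTwist C d) (F : C) (N : ℕ) : Prop :=
  ∃ (k : ℕ) (ns : Fin k → ℤ), k ≤ N ∧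
    Nonempty (tw.H F ≅ biproduct (fun i => (shiftFunctor C (ns i)).obj tw.E)) ∧
    ∀ n : ℤ, (Finset.univ.filter fun i => ns i = -n).card
        = Module.finrank ℂ (tw.E ⟶ (shiftFunctor C n).obj F)

lemma PdN.next {d : ℕ} {tw : PdTwist C d} {F : C} {N : ℕ} (h : PdN tw F N) :
    PdN tw (tw.P.functor.obj F) N := by
  obtain ⟨k, ns, hk, -, h⟩ := h
  obtain ⟨k', ns', e', h'⟩ := tw.H_iso (tw.P.functor.obj F)
  obtain ⟨a, ha⟩ := pd_mult tw
  refine ⟨k', ns', le_trans (pd_count ns ns' a fun n => ?_) hk, e', h'⟩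
  rw [h', h]
  exact ha F n

lemma PdN.cost {d : ℕ} {tw : PdTwist C d} {G F : C} {N c x : ℕ} (h : PdN tw F N)
    (hc : PdRt G tw.E c) (hF : PdRt G F x) :
    ∃ y : ℕ, y ≤ x + 144 * c * N ∧ PdRt G (tw.P.functor.obj F) y := by
  obtain ⟨k, ns, hk, ⟨e⟩, -⟩ := h
  have hH : PdRt G (tw.H F) (2 * (2 * c) * k) := PdRt.finite_sum (fun n => hc.shift n) ns e
  have hT := PdRt.ext (rot_of_distTriang _ (tw.innerTri F)) hH ((hH.shift (-2)).shift 1)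
  have hP := PdRt.ext (rot_of_distTriang _ (tw.outerTri F)) hF (hT.shift 1)
  refine ⟨_, ?_, hP⟩
  have : c * k ≤ c * N := Nat.mul_le_mul_left _ hk
  nlinarith

lemma pd_growth {d : ℕ} (tw : PdTwist C d) {G : C} (hG : IsSplitGenerator C G) :
    ∃ A B : ℕ, ∀ n : ℕ, ∃ y : ℕ, y ≤ A + B * n ∧
      PdRt G ((fun X => tw.P.functor.obj X)^[n] G) y := by
  obtain ⟨r, hr⟩ := hG tw.E
  obtain ⟨c, -, hc⟩ := pd_of_mem hr
  obtain ⟨r', hr'⟩ := hG G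
  obtain ⟨x, -, hx⟩ := pd_of_mem hr'
  obtain ⟨N, ns, h⟩ := tw.H_iso G
  have hN : PdN tw G N := ⟨N, ns, le_rfl, h⟩
  refine ⟨x, 144 * c * N, fun n => ?_⟩
  have key : PdN tw ((fun X => tw.P.functor.obj X)^[n] G) N ∧ ∃ y : ℕ, y ≤ x + 144 * c * N * n ∧
      PdRt G ((fun X => tw.P.functor.obj X)^[n] G) y := by
    induction n with
    | zero => exact ⟨hN, x, by simp, hx⟩
    | succ n ih =>
      obtain ⟨h1, y, hy, h2⟩ := ih
      rw [Function.iterate_succ_apply']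
      obtain ⟨z, hz, h3⟩ := h1.cost hc h2
      exact ⟨h1.next, z, by rw [Nat.mul_succ]; omega, h3⟩
  exact key.2

lemma pd_lower {d : ℕ} (tw : PdTwist C d) {G : C} (hG : IsSplitGenerator C G) (n : ℕ) :
    ∀ r ∈ complexitySet C G ((fun X => tw.P.functor.obj X)^[n] G) 0, 1 ≤ r := by
  have := pd_additive tw.P
  have hG0 : ¬ IsZero G := by
    intro h
    obtain ⟨r, B, F', hB, ⟨e⟩⟩ := hG tw.E
    obtain ⟨k, -, -, h'⟩ := pd_build_nat hB
    apply tw.nonzero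
    have hz : IsZero (tw.E ⊞ F') := (h' h).of_iso e.symm
    rw [IsZero.iff_id_eq_zero]
    have h1 : 𝟙 tw.E = biprod.inl ≫ 𝟙 (tw.E ⊞ F') ≫ biprod.fst := by simp
    rw [h1, (IsZero.iff_id_eq_zero _).1 hz]; simp
  have hn : ¬ IsZero ((fun X => tw.P.functor.obj X)^[n] G) := by
    induction n with
    | zero => exact hG0
    | succ n ih =>
      rw [Function.iterate_succ_apply']
      intro h
      rw [IsZero.iff_id_eq_zero, ← CategoryTheory.Functor.map_id, Functor.map_eq_zero_iff,
        ← IsZero.iff_id_eq_zero] at h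
      exact ih h
  rintro r ⟨B, F', hB, ⟨e⟩⟩
  obtain ⟨k, rfl, hk, -⟩ := pd_build_nat hB
  have : k ≠ 0 := by
    intro h
    apply hn
    have hz : IsZero (((fun X => tw.P.functor.obj X)^[n] G) ⊞ F') := (hk h).of_iso e.symm
    rw [IsZero.iff_id_eq_zero]
    have h1 : 𝟙 ((fun X => tw.P.functor.obj X)^[n] G) =
      biprod.inl ≫ 𝟙 (((fun X => tw.P.functor.obj X)^[n] G) ⊞ F') ≫ biprod.fst := by simp
    rw [h1, (IsZero.iff_id_eq_zero _).1 hz]; simp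
  exact_mod_cast Nat.one_le_iff_ne_zero.2 this

lemma pd_log_lim {a : ℕ → ℝ} (A B : ℕ) (h1 : ∀ n, 1 ≤ a n) (h2 : ∀ n : ℕ, a n ≤ A + B * n) :
    Tendsto (fun n : ℕ => Real.log (a n) / n) atTop (nhds 0) := by
  have hlim : Tendsto (fun n : ℕ => Real.log (A + B) / (n : ℝ) + Real.log n / n) atTop
      (nhds 0) := by
    have t1 : Tendsto (fun n : ℕ => Real.log (A + B) / (n : ℝ)) atTop (nhds 0) :=
      tendsto_const_div_atTop_nhds_zero_nat _
    have t2 : Tendsto (fun n : ℕ => Real.log n / (n : ℝ)) atTop (nhds 0) :=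
      (Real.isLittleO_log_id_atTop.tendsto_div_nhds_zero).comp tendsto_natCast_atTop_atTop
    simpa using t1.add t2
  refine tendsto_of_tendsto_of_tendsto_of_le_of_le' tendsto_const_nhds hlim ?_ ?_
  · exact Eventually.of_forall fun n => div_nonneg (Real.log_nonneg (h1 n)) (Nat.cast_nonneg n)
  · filter_upwards [eventually_ge_atTop 1] with n hn
    have hn' : (1 : ℝ) ≤ n := by exact_mod_cast hn
    rw [← add_div]
    gcongr
    have hA : (0 : ℝ) ≤ A := Nat.cast_nonneg A
    have h3 : a n ≤ (A + B) * n := by nlinarith [h2 n]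
    have h4 : (0 : ℝ) < (A + B) * n := lt_of_lt_of_le one_pos ((h1 n).trans h3)
    have h5 : (0 : ℝ) < A + B := by
      by_contra h
      nlinarith
    rw [← Real.log_mul h5.ne' (by positivity)]
    exact Real.log_le_log (by linarith [h1 n]) h3

lemma pd_radius (V : Type) [NormedAddCommGroup V] [NormedSpace ℂ V] :
    (0 : ℝ) = Real.log (spectralRadius ℂ (1 : V →L[ℂ] V)).toReal := by
  rcases subsingleton_or_nontrivial V with h | h
  · simp
  · simp [spectralRadius, spectrum.one_eq]

end Aux

/-- Gromov–Yomdin / Kikuta–Takahashi conjecture for `ℙ^d`-twists.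
`h_0(P_ℰ) = 0 = log ρ((P_ℰ)_{H^*})`. Here `V` models the total cohomology `H^*(X; ℂ)` and
`act` models the induced Fourier–Mukai action `(P_ℰ)_{H^*}`, which is the identity
(Huybrechts–Thomas); `ρ` is the spectral radius. -/
theorem GY_conjecture_for_PdTwist (d : ℕ) (tw : PdTwist C d)
    (hgen : ∃ G : C, IsSplitGenerator C G)
    (V : Type) [NormedAddCommGroup V] [NormedSpace ℂ V] [FiniteDimensional ℂ V]
    (act : V →L[ℂ] V) (hact : act = ContinuousLinearMap.id ℂ V) :
    (∀ G : C, IsSplitGenerator C G →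
      Tendsto (fun n : ℕ =>
          Real.log (complexity C G ((fun X => tw.P.functor.obj X)^[n] G) 0) / n)
        atTop (nhds 0)) ∧
    (0 : ℝ) = Real.log (spectralRadius ℂ act).toReal := by
  refine ⟨fun G hG => ?_, ?_⟩
  · obtain ⟨A, B, hAB⟩ := pd_growth tw hG
    refine pd_log_lim A B (fun n => ?_) (fun n => ?_)
    · obtain ⟨y, -, hy⟩ := hAB n
      exact le_csInf ⟨_, hy.mem⟩ (pd_lower tw hG n)
    · obtain ⟨y, hle, hy⟩ := hAB n
      refine (csInf_le ⟨1, pd_lower tw hG n⟩ hy.mem).trans ?_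
      exact_mod_cast hle
  · subst hact
    exact pd_radius V
end

section
/- Let 𝒟 be a triangulated category with split generator G, and let A → B → C → A[1] be a distinguished triangle of nonzero objects in 𝒟. Then for every t ∈ ℝ, δ_t(G, B) ≤ δ_t(G, A) + δ_t(G, C). -/
open CategoryTheory CategoryTheory.Limits CategoryTheory.Pretriangulated Filter

universe v u

variable (C : Type u) [Category.{v} C] [Preadditive C] [HasZeroObject C]
  [HasShift C ℤ] [∀ n : ℤ, (shiftFunctor C n).Additive] [Pretriangulated C]
  [HasFiniteBiproducts C] [CategoryTheory.Linear ℂ C]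
  [∀ X Y : C, Module.Finite ℂ (X ⟶ Y)]

theorem sr1_end {V : Type*} [AddCommGroup V] [Module ℂ V] [Module.Finite ℂ V]
    (a x b : Module.End ℂ V) (h : a * x + b = 1) : ∃ t, IsUnit (a + b * t) := by
  obtain ⟨L, hL⟩ := Submodule.exists_isCompl (LinearMap.range a)
  obtain ⟨K, hK⟩ := Submodule.exists_isCompl (LinearMap.ker a)
  have hd : Module.finrank ℂ (LinearMap.ker a) = Module.finrank ℂ L := by
    have h1 := LinearMap.finrank_range_add_finrank_ker a
    have h2 := Submodule.finrank_add_eq_of_isCompl hL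
    omega
  let e := LinearEquiv.ofFinrankEq _ _ hd
  let pr := Submodule.projectionOnto _ _ hK
  refine ⟨L.subtype ∘ₗ e.toLinearMap ∘ₗ pr, ?_⟩
  rw [LinearMap.isUnit_iff_ker_eq_bot, LinearMap.ker_eq_bot']
  intro v hv
  have hb : b = 1 - a * x := eq_sub_of_add_eq' h
  have hv' : a v + ((e (pr v) : V) - a (x (e (pr v) : V))) = 0 := by
    rw [hb] at hv; simpa using hv
  have h1 : ((e (pr v)) : V) ∈ LinearMap.range a :=
    ⟨x (e (pr v) : V) - v, by
      rw [map_sub, ← sub_eq_zero, ← neg_eq_zero, ← hv']; abel⟩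
  have h2 : ((e (pr v)) : V) = 0 := by
    have := Submodule.disjoint_def.1 hL.disjoint _ h1 (e (pr v)).2
    exact this
  have h3 : pr v = 0 := by
    apply e.injective; ext; simpa using h2
  have h4 : a v = 0 := by simpa [h2] using hv'
  have h5 := Submodule.projectionOnto_apply_left hK ⟨v, h4⟩
  have : pr v = ⟨v, h4⟩ := h5
  rw [h3] at this
  exact (congrArg Subtype.val this).symm

theorem sr1_matrix {n : ℕ} (a x b : Matrix (Fin n) (Fin n) ℂ) (h : a * x + b = 1) :
    ∃ t, IsUnit (a + b * t) := by
  let e := Matrix.toLinAlgEquiv' (R := ℂ) (n := Fin n)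
  obtain ⟨t, ht⟩ := sr1_end (e a) (e x) (e b) (by rw [← map_mul, ← map_add, h, map_one])
  refine ⟨e.symm t, ?_⟩
  have := ht.map e.symm
  simpa using this

theorem sr1 {A : Type*} [Ring A] [Algebra ℂ A] [Module.Finite ℂ A]
    (a x b : A) (h : a * x + b = 1) : ∃ t, IsUnit (a + b * t) := by
  have : IsArtinianRing A := IsArtinianRing.of_finite ℂ A
  obtain ⟨n, d, _, ⟨e⟩⟩ := IsSemisimpleRing.exists_algEquiv_pi_matrix_of_isAlgClosed ℂ (A ⧸ Ring.jacobson A)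
  let q : A →+* (A ⧸ Ring.jacobson A) := Ideal.Quotient.mk (Ring.jacobson A)
  have hq : Function.Surjective q := Ideal.Quotient.mk_surjective
  have key := fun i => sr1_matrix (e (q a) i) (e (q x) i) (e (q b) i) (by
    have := congrArg (fun z => e (q z) i) h
    simpa using this)
  choose t ht using key
  obtain ⟨s, hs⟩ := hq (e.symm t)
  refine ⟨s, ?_⟩
  have hu : IsUnit (e (q (a + b * s))) := by
    rw [Pi.isUnit_iff]
    intro i
    have := ht i
    rw [map_add, map_mul, hs]
    simpa using this
  have hu' : IsUnit (q (a + b * s)) := by simpa using hu.map e.symm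
  obtain ⟨y, hy⟩ := hu'.exists_left_inv
  obtain ⟨y, rfl⟩ := hq y
  have : y * (a + b * s) - 1 ∈ Ideal.jacobson (⊥ : Ideal A) := by
    rw [Ideal.jacobson_bot]
    rw [← Ideal.Quotient.eq]
    simpa using hy
  obtain ⟨z, hz⟩ := Ideal.exists_mul_sub_mem_of_sub_one_mem_jacobson _ this
  rw [Ideal.mem_bot, sub_eq_zero, ← mul_assoc] at hz
  exact IsUnit.of_mul_eq_one_right _ hz

variable {C}

/-- Exactness at the shift of the second object. -/
theorem coyoneda_exact_shift₂ {A B D V : C} {f : A ⟶ B} {g : B ⟶ D} {h : D ⟶ A⟦(1 : ℤ)⟧}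
    (hT : Triangle.mk f g h ∈ distTriang C) (b : V ⟶ B⟦(1 : ℤ)⟧) (hb : b ≫ g⟦(1 : ℤ)⟧' = 0) :
    ∃ a : V ⟶ A⟦(1 : ℤ)⟧, b = a ≫ f⟦(1 : ℤ)⟧' := by
  obtain ⟨a, ha⟩ := Triangle.coyoneda_exact₃ _
    (rot_of_distTriang _ (rot_of_distTriang _ hT)) b (by
      change b ≫ (-g⟦(1 : ℤ)⟧') = 0
      rw [Preadditive.comp_neg, hb, neg_zero])
  change V ⟶ A⟦(1 : ℤ)⟧ at a
  change b = a ≫ (-f⟦(1 : ℤ)⟧') at ha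
  exact ⟨-a, by rw [ha, Preadditive.comp_neg, Preadditive.neg_comp]⟩

/-- The axiom TR3 when the first vertical morphism is the identity. -/
theorem tr3_id {A B B' D D' : C} {f : A ⟶ B} {g : B ⟶ D} {h : D ⟶ A⟦(1 : ℤ)⟧}
    (hT : Triangle.mk f g h ∈ distTriang C) {f' : A ⟶ B'} {g' : B' ⟶ D'} {h' : D' ⟶ A⟦(1 : ℤ)⟧}
    (hT' : Triangle.mk f' g' h' ∈ distTriang C) (b : B ⟶ B') (hb : f ≫ b = f') :
    ∃ u : D ⟶ D', g ≫ u = b ≫ g' ∧ h = u ≫ h' := by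
  obtain ⟨u, h1, h2⟩ := complete_distinguished_triangle_morphism _ _ hT hT' (𝟙 A) b
    (hb.trans (Category.id_comp f').symm)
  change h ≫ (𝟙 A)⟦(1 : ℤ)⟧' = u ≫ h' at h2
  rw [CategoryTheory.Functor.map_id, Category.comp_id] at h2
  exact ⟨u, h1, h2⟩

/-- An exact candidate triangle `(α, β, γ)` can be made distinguished by changing only `γ`. -/
theorem exists_distTriang_of_exact {B M Y : C} (α : B ⟶ M) (β : M ⟶ Y) (γ : Y ⟶ B⟦(1 : ℤ)⟧)
    (hαβ : α ≫ β = 0) (hβγ : β ≫ γ = 0) (hγα : γ ≫ α⟦(1 : ℤ)⟧' = 0)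
    (eY : ∀ (V : C) (w : V ⟶ Y), w ≫ γ = 0 → ∃ m : V ⟶ M, w = m ≫ β)
    (eQ : ∀ (V : C) (b : V ⟶ B⟦(1 : ℤ)⟧), b ≫ α⟦(1 : ℤ)⟧' = 0 → ∃ y : V ⟶ Y, b = y ≫ γ)
    (eM : ∀ (V : C) (m : V ⟶ M), m ≫ β = 0 → ∃ b : V ⟶ B, m = b ≫ α)
    (eM' : ∀ (V : C) (m : M ⟶ V), α ≫ m = 0 → ∃ y : Y ⟶ V, m = β ≫ y) :
    ∃ γ' : Y ⟶ B⟦(1 : ℤ)⟧, Triangle.mk α β γ' ∈ distTriang C := by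
  obtain ⟨W, β₀, γ₀, hT⟩ := distinguished_cocone_triangle α
  have z12 : α ≫ β₀ = 0 := comp_distTriang_mor_zero₁₂ _ hT
  have z23 : β₀ ≫ γ₀ = 0 := comp_distTriang_mor_zero₂₃ _ hT
  have z31 : γ₀ ≫ α⟦(1 : ℤ)⟧' = 0 := comp_distTriang_mor_zero₃₁ _ hT
  obtain ⟨φ, hφ⟩ : ∃ φ : W ⟶ Y, β = β₀ ≫ φ := Triangle.yoneda_exact₂ _ hT β hαβ
  obtain ⟨ψ, hψ⟩ : ∃ ψ : Y ⟶ W, β₀ = β ≫ ψ := eM' _ β₀ z12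
  obtain ⟨s, hs⟩ : ∃ s : B⟦(1 : ℤ)⟧ ⟶ W, 𝟙 W - φ ≫ ψ = γ₀ ≫ s :=
    Triangle.yoneda_exact₃ _ hT (𝟙 W - φ ≫ ψ) (by
      change β₀ ≫ _ = 0
      rw [Preadditive.comp_sub, ← Category.assoc, ← hφ, ← hψ, Category.comp_id, sub_self])
  obtain ⟨φ', hφ'⟩ := eQ _ γ₀ z31
  obtain ⟨g', hg'⟩ : ∃ g' : Y ⟶ W, γ = g' ≫ γ₀ := Triangle.coyoneda_exact₁ _ hT γ hγα
  obtain ⟨a, ha⟩ := eQ _ (ψ ≫ γ₀) (by rw [Category.assoc, z31, comp_zero])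
  let S : Subalgebra ℂ (End Y) :=
    { carrier := {T | β ≫ (show Y ⟶ Y from T) ≫ γ = 0}
      mul_mem' := by
        intro T T' hT₁ hT₂
        change β ≫ ((show Y ⟶ Y from T') ≫ (show Y ⟶ Y from T)) ≫ γ = 0
        obtain ⟨m, hm⟩ := eY _ (β ≫ (show Y ⟶ Y from T')) (by
          rw [Category.assoc]; exact hT₂)
        rw [Category.assoc, ← Category.assoc, hm, Category.assoc]
        have : β ≫ (show Y ⟶ Y from T) ≫ γ = 0 := hT₁
        rw [this, comp_zero]
      add_mem' := by
        intro T T' hT₁ hT₂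
        change β ≫ ((show Y ⟶ Y from T) + (show Y ⟶ Y from T')) ≫ γ = 0
        have h1 : β ≫ (show Y ⟶ Y from T) ≫ γ = 0 := hT₁
        have h2 : β ≫ (show Y ⟶ Y from T') ≫ γ = 0 := hT₂
        rw [Preadditive.add_comp, Preadditive.comp_add, h1, h2, add_zero]
      algebraMap_mem' := by
        intro r
        change β ≫ (r • 𝟙 Y) ≫ γ = 0
        rw [Linear.smul_comp, Category.id_comp, Linear.comp_smul, hβγ, smul_zero] }
  have hfin : Module.Finite ℂ (End Y) := inferInstanceAs (Module.Finite ℂ (Y ⟶ Y))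
  have hfinS : Module.Finite ℂ S := by
    change Module.Finite ℂ (Subalgebra.toSubmodule S)
    infer_instance
  have hk0 : ((g' ≫ φ) ≫ a + γ ≫ s ≫ φ') ≫ γ = γ := by
    have h1 : φ ≫ ψ = 𝟙 W - γ₀ ≫ s := by rw [← hs]; abel
    rw [Preadditive.add_comp, Category.assoc, Category.assoc, ← ha]
    rw [Category.assoc, Category.assoc, ← hφ', ← Category.assoc φ, h1]
    rw [Preadditive.sub_comp, Preadditive.comp_sub, Category.id_comp, Category.assoc,
      ← Category.assoc g', ← hg']
    abel
  let k : Y ⟶ Y := 𝟙 Y - (g' ≫ φ) ≫ a - γ ≫ s ≫ φ'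
  have hk : k ≫ γ = 0 := by
    have : k = 𝟙 Y - ((g' ≫ φ) ≫ a + γ ≫ s ≫ φ') := by simp only [k]; abel
    rw [this, Preadditive.sub_comp, hk0, Category.id_comp, sub_self]
  have maS : β ≫ a ≫ γ = 0 := by rw [← ha, ← Category.assoc, ← hψ, z23]
  have mxS : β ≫ (g' ≫ φ) ≫ γ = 0 := by
    obtain ⟨m, hm⟩ : ∃ m : M ⟶ M, β ≫ g' = m ≫ β₀ :=
      Triangle.coyoneda_exact₃ _ hT (β ≫ g') (by
        change (β ≫ g') ≫ γ₀ = 0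
        rw [Category.assoc, ← hg', hβγ])
    rw [Category.assoc, ← Category.assoc, hm, Category.assoc, ← Category.assoc β₀, ← hφ, hβγ,
      comp_zero]
  have mbS : β ≫ (γ ≫ s ≫ φ' + k) ≫ γ = 0 := by
    rw [Preadditive.add_comp, hk, add_zero, Category.assoc, ← Category.assoc, hβγ, zero_comp]
  obtain ⟨t, ht⟩ := sr1 (A := S) ⟨a, maS⟩ ⟨g' ≫ φ, mxS⟩ ⟨γ ≫ s ≫ φ' + k, mbS⟩ (by
    apply Subtype.ext
    change (g' ≫ φ) ≫ a + (γ ≫ s ≫ φ' + k) = 𝟙 Y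
    simp only [k]; abel)
  obtain ⟨⟨t, mtS⟩, rfl⟩ : ∃ t' : S, t' = t := ⟨t, rfl⟩
  change Y ⟶ Y at t
  change β ≫ t ≫ γ = 0 at mtS
  obtain ⟨⟨⟨v, mv⟩, ⟨v', mv'⟩, hvv', hv'v⟩, hv⟩ := ht
  change Y ⟶ Y at v
  change Y ⟶ Y at v'
  change β ≫ v' ≫ γ = 0 at mv'
  replace hvv' : v' ≫ v = 𝟙 Y := congrArg Subtype.val hvv'
  replace hv'v : v ≫ v' = 𝟙 Y := congrArg Subtype.val hv'v
  replace hv : v = a + t ≫ (γ ≫ s ≫ φ' + k) := congrArg Subtype.val hv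
  let p : Y ⟶ W := ψ + t ≫ γ ≫ s
  have hp1 : β ≫ p = β₀ := by
    simp only [p]
    rw [Preadditive.comp_add, ← hψ]
    have : β ≫ t ≫ γ ≫ s = (β ≫ t ≫ γ) ≫ s := by simp only [Category.assoc]
    rw [this, mtS, zero_comp, add_zero]
  have hp2 : p ≫ γ₀ = v ≫ γ := by
    rw [hv]
    simp only [p, Preadditive.add_comp, Preadditive.comp_add, Category.assoc, hk, comp_zero,
      add_zero, ← ha, ← hφ']
  have hmono : ∀ (V : C) (y : V ⟶ Y), y ≫ p = 0 → y = 0 := by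
    intro V y hy
    obtain ⟨m, hm⟩ := eY _ (y ≫ v) (by
      rw [Category.assoc, ← hp2, ← Category.assoc, hy, zero_comp])
    have hy2 : y = m ≫ β ≫ v' := by
      rw [← Category.assoc, ← hm, Category.assoc, hv'v, Category.comp_id]
    obtain ⟨m', hm'⟩ := eY _ y (by
      rw [hy2, Category.assoc, Category.assoc, mv', comp_zero])
    obtain ⟨b, hb⟩ : ∃ b : V ⟶ B, m' = b ≫ α := Triangle.coyoneda_exact₂ _ hT m' (by
      change m' ≫ β₀ = 0
      rw [← hp1, ← Category.assoc, ← hm', hy])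
    rw [hm', hb, Category.assoc, hαβ, comp_zero]
  obtain ⟨r, hr⟩ : ∃ r : W ⟶ Y, r ≫ p = 𝟙 W := by
    obtain ⟨m, hm⟩ : ∃ m : W ⟶ M, 𝟙 W - (φ' ≫ v') ≫ p = m ≫ β₀ :=
      Triangle.coyoneda_exact₃ _ hT _ (by
        change (𝟙 W - (φ' ≫ v') ≫ p) ≫ γ₀ = 0
        rw [Preadditive.sub_comp, Category.id_comp, Category.assoc, hp2, Category.assoc,
          ← Category.assoc v', hvv', Category.id_comp, ← hφ', sub_self])
    refine ⟨φ' ≫ v' + m ≫ β, ?_⟩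
    rw [Preadditive.add_comp, Category.assoc m, hp1, ← hm]
    abel
  have hpr : p ≫ r = 𝟙 Y := by
    rw [← sub_eq_zero]
    apply hmono
    rw [Preadditive.sub_comp, Category.assoc, hr, Category.comp_id, Category.id_comp, sub_self]
  refine ⟨p ≫ γ₀, isomorphic_distinguished _ hT _ ?_⟩
  exact Triangle.isoMk _ _ (Iso.refl _) (Iso.refl _) ⟨p, r, hpr, hr⟩ 
    ((Category.comp_id α).trans (Category.id_comp α).symm)
    (hp1.trans (Category.id_comp β₀).symm) (by
      change (p ≫ γ₀) ≫ (𝟙 B)⟦(1 : ℤ)⟧' = p ≫ γ₀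
      rw [CategoryTheory.Functor.map_id, Category.comp_id])

/-- The octahedral axiom, up to the third morphism and the naturality: this holds in any Hom-finite
pretriangulated category. -/
theorem weak_octahedron {A B D X Y Z : C} (f : A ⟶ B) (g : B ⟶ D)
    (x₀ : B ⟶ X) (x₁ : X ⟶ A⟦(1 : ℤ)⟧) (hX : Triangle.mk f x₀ x₁ ∈ distTriang C)
    (y₀ : D ⟶ Y) (y₁ : Y ⟶ A⟦(1 : ℤ)⟧) (hY : Triangle.mk (f ≫ g) y₀ y₁ ∈ distTriang C)
    (z₀ : D ⟶ Z) (z₁ : Z ⟶ B⟦(1 : ℤ)⟧) (hZ : Triangle.mk g z₀ z₁ ∈ distTriang C) :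
    ∃ (u : X ⟶ Y) (z : Y ⟶ Z) (θ : Z ⟶ X⟦(1 : ℤ)⟧), Triangle.mk u z θ ∈ distTriang C := by
  have X12 : f ≫ x₀ = 0 := comp_distTriang_mor_zero₁₂ _ hX
  have X23 : x₀ ≫ x₁ = 0 := comp_distTriang_mor_zero₂₃ _ hX
  have X31 : x₁ ≫ f⟦(1 : ℤ)⟧' = 0 := comp_distTriang_mor_zero₃₁ _ hX
  have Y12 : (f ≫ g) ≫ y₀ = 0 := comp_distTriang_mor_zero₁₂ _ hY
  have Y23 : y₀ ≫ y₁ = 0 := comp_distTriang_mor_zero₂₃ _ hY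
  have Y31 : y₁ ≫ (f ≫ g)⟦(1 : ℤ)⟧' = 0 := comp_distTriang_mor_zero₃₁ _ hY
  have Z12 : g ≫ z₀ = 0 := comp_distTriang_mor_zero₁₂ _ hZ
  have Z23 : z₀ ≫ z₁ = 0 := comp_distTriang_mor_zero₂₃ _ hZ
  have Z31 : z₁ ≫ g⟦(1 : ℤ)⟧' = 0 := comp_distTriang_mor_zero₃₁ _ hZ
  obtain ⟨u, hu1, hu2⟩ : ∃ u : X ⟶ Y, x₀ ≫ u = g ≫ y₀ ∧ x₁ = u ≫ y₁ :=
    tr3_id hX hY g rfl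
  let α : B ⟶ D ⊞ X := biprod.lift g x₀
  let β : D ⊞ X ⟶ Y := biprod.desc y₀ (-u)
  obtain ⟨γ', hγ'⟩ := exists_distTriang_of_exact α β (y₁ ≫ f⟦(1 : ℤ)⟧')
    (by simp [α, β, hu1])
    (by
      ext
      · simp [β, reassoc_of% Y23]
      · simp [β, ← reassoc_of% hu2, X31])
    (by
      have e1 : (y₁ ≫ f⟦(1 : ℤ)⟧') ≫ g⟦(1 : ℤ)⟧' = 0 := by
        rw [Category.assoc, ← Functor.map_comp, Y31]
      have e2 : (y₁ ≫ f⟦(1 : ℤ)⟧') ≫ x₀⟦(1 : ℤ)⟧' = 0 := by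
        rw [Category.assoc, ← Functor.map_comp, X12, Functor.map_zero, comp_zero]
      have : α = g ≫ biprod.inl + x₀ ≫ biprod.inr := by ext <;> simp [α]
      rw [this, Functor.map_add, Functor.map_comp, Functor.map_comp, Preadditive.comp_add,
        ← Category.assoc, e1, ← Category.assoc, e2]
      simp)
    (by
      intro V w hw
      obtain ⟨v, hv⟩ : ∃ v : V ⟶ X, w ≫ y₁ = v ≫ x₁ :=
        Triangle.coyoneda_exact₁ _ hX (w ≫ y₁) ((Category.assoc _ _ _).trans hw)
      obtain ⟨c, hc⟩ : ∃ c : V ⟶ D, w - v ≫ u = c ≫ y₀ :=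
        Triangle.coyoneda_exact₃ _ hY (w - v ≫ u) (by
          change (w - v ≫ u) ≫ y₁ = 0
          rw [Preadditive.sub_comp, Category.assoc, ← hu2, hv, sub_self])
      refine ⟨biprod.lift c (-v), ?_⟩
      simp only [β, biprod.lift_desc, Preadditive.neg_comp, Preadditive.comp_neg, neg_neg, ← hc]
      abel)
    (by
      intro V b hb
      have hb1 : b ≫ g⟦(1 : ℤ)⟧' = 0 := by
        have : g = α ≫ biprod.fst := by simp [α]
        rw [this, Functor.map_comp, ← Category.assoc, hb, zero_comp]
      have hb2 : b ≫ x₀⟦(1 : ℤ)⟧' = 0 := by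
        have : x₀ = α ≫ biprod.snd := by simp [α]
        rw [this, Functor.map_comp, ← Category.assoc, hb, zero_comp]
      obtain ⟨a, ha⟩ : ∃ a : V ⟶ A⟦(1 : ℤ)⟧, b = a ≫ f⟦(1 : ℤ)⟧' :=
        coyoneda_exact_shift₂ hX b hb2
      obtain ⟨w, hw⟩ : ∃ w : V ⟶ Y, a = w ≫ y₁ :=
        Triangle.coyoneda_exact₁ _ hY a (by
          change a ≫ (f ≫ g)⟦(1 : ℤ)⟧' = 0
          rw [Functor.map_comp, ← Category.assoc, ← ha, hb1])
      refine ⟨w, ?_⟩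
      rw [← Category.assoc, ← hw, ha])
    (by
      intro V m hm
      have hm' : (m ≫ biprod.fst) ≫ y₀ = (m ≫ biprod.snd) ≫ u := by
        have : β = biprod.fst ≫ y₀ - biprod.snd ≫ u := by ext <;> simp [β]
        rw [this, Preadditive.comp_sub, sub_eq_zero] at hm
        simpa using hm
      obtain ⟨b, hb⟩ : ∃ b : V ⟶ B, m ≫ biprod.snd = b ≫ x₀ :=
        Triangle.coyoneda_exact₃ _ hX (m ≫ biprod.snd) (by
          change (m ≫ biprod.snd) ≫ x₁ = 0
          rw [hu2, ← Category.assoc, ← hm', Category.assoc, Y23, comp_zero])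
      obtain ⟨a, ha⟩ : ∃ a : V ⟶ A, m ≫ biprod.fst - b ≫ g = a ≫ f ≫ g :=
        Triangle.coyoneda_exact₂ _ hY (m ≫ biprod.fst - b ≫ g) (by
          change (m ≫ biprod.fst - b ≫ g) ≫ y₀ = 0
          rw [Preadditive.sub_comp, hm', hb, Category.assoc, Category.assoc, hu1, sub_self])
      refine ⟨b + a ≫ f, ?_⟩
      ext
      · simp only [α, Category.assoc, biprod.lift_fst, Preadditive.add_comp, ← ha]
        abel
      · simp [α, hb, X12])
    (by
      intro V m hm
      have hm' : g ≫ biprod.inl ≫ m + x₀ ≫ biprod.inr ≫ m = 0 := by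
        have : α = g ≫ biprod.inl + x₀ ≫ biprod.inr := by ext <;> simp [α]
        rw [this, Preadditive.add_comp] at hm
        simpa using hm
      obtain ⟨y', hy'⟩ : ∃ y' : Y ⟶ V, biprod.inl ≫ m = y₀ ≫ y' :=
        Triangle.yoneda_exact₂ _ hY (biprod.inl ≫ m) (by
          change (f ≫ g) ≫ biprod.inl ≫ m = 0
          rw [Category.assoc, eq_neg_of_add_eq_zero_left hm', Preadditive.comp_neg,
            ← Category.assoc, X12, zero_comp, neg_zero])
      obtain ⟨l, hl⟩ : ∃ l : A⟦(1 : ℤ)⟧ ⟶ V, biprod.inr ≫ m + u ≫ y' = x₁ ≫ l :=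
        Triangle.yoneda_exact₃ _ hX (biprod.inr ≫ m + u ≫ y') (by
          change x₀ ≫ (biprod.inr ≫ m + u ≫ y') = 0
          rw [Preadditive.comp_add, ← Category.assoc x₀ u, hu1, Category.assoc, ← hy', add_comm,
            hm'])
      refine ⟨y' - y₁ ≫ l, ?_⟩
      ext
      · simp [β, hy', reassoc_of% Y23]
      · simp only [β, biprod.inr_desc_assoc, Preadditive.neg_comp, Preadditive.comp_sub,
          ← reassoc_of% hu2, ← hl]
        abel)
  have G12 : α ≫ β = 0 := comp_distTriang_mor_zero₁₂ _ hγ'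
  have G31 : γ' ≫ α⟦(1 : ℤ)⟧' = 0 := comp_distTriang_mor_zero₃₁ _ hγ'
  obtain ⟨z, hz1, hz2⟩ : ∃ z : Y ⟶ Z, β ≫ z = biprod.fst ≫ z₀ ∧ γ' = z ≫ z₁ :=
    tr3_id hγ' hZ biprod.fst (by simp [α])
  have hyz : y₀ ≫ z = z₀ := by
    have := congrArg (fun e => biprod.inl ≫ e) hz1
    simpa [β] using this
  have huz : u ≫ z = 0 := by
    have := congrArg (fun e => biprod.inr ≫ e) hz1
    simpa [β] using this
  have hα1 : α = g ≫ biprod.inl + x₀ ≫ biprod.inr := by ext <;> simp [α]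
  obtain ⟨θ, hθ⟩ := exists_distTriang_of_exact u z (z₁ ≫ x₀⟦(1 : ℤ)⟧') huz
    (by
      have : x₀ = α ≫ biprod.snd := by simp [α]
      rw [← Category.assoc, ← hz2, this, Functor.map_comp, ← Category.assoc, G31, zero_comp])
    (by
      rw [Category.assoc, ← Functor.map_comp, hu1, Functor.map_comp, ← Category.assoc, Z31,
        zero_comp])
    (by
      intro V w hw
      obtain ⟨y, hy⟩ : ∃ y : V ⟶ Y, w ≫ z₁ = y ≫ γ' :=
        Triangle.coyoneda_exact₁ _ hγ' (w ≫ z₁) (by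
          change (w ≫ z₁) ≫ α⟦(1 : ℤ)⟧' = 0
          rw [← Category.assoc] at hw
          rw [hα1, Functor.map_add, Functor.map_comp, Functor.map_comp, Preadditive.comp_add,
            ← Category.assoc, ← Category.assoc _ (x₀⟦(1 : ℤ)⟧'), hw, Category.assoc w, Z31]
          simp)
      obtain ⟨c, hc⟩ : ∃ c : V ⟶ D, w - y ≫ z = c ≫ z₀ :=
        Triangle.coyoneda_exact₃ _ hZ (w - y ≫ z) (by
          change (w - y ≫ z) ≫ z₁ = 0
          rw [Preadditive.sub_comp, Category.assoc, ← hz2, hy, sub_self])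
      refine ⟨y + c ≫ y₀, ?_⟩
      rw [Preadditive.add_comp, Category.assoc, hyz, ← hc]
      abel)
    (by
      intro V v hv
      obtain ⟨b, hb⟩ : ∃ b : V ⟶ B⟦(1 : ℤ)⟧,
          v ≫ (biprod.inr : X ⟶ D ⊞ X)⟦(1 : ℤ)⟧' = b ≫ α⟦(1 : ℤ)⟧' :=
        coyoneda_exact_shift₂ hγ' _ (by
          rw [Category.assoc, ← Functor.map_comp]
          simp only [β, biprod.inr_desc, Functor.map_neg, Preadditive.comp_neg, hv, neg_zero])
      have hb1 : b ≫ g⟦(1 : ℤ)⟧' = 0 := by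
        have := congrArg (fun e => e ≫ (biprod.fst : D ⊞ X ⟶ D)⟦(1 : ℤ)⟧') hb
        simp only [Category.assoc, ← Functor.map_comp, α, biprod.lift_fst, biprod.inr_fst,
          Functor.map_zero, comp_zero] at this
        exact this.symm
      have hb2 : v = b ≫ x₀⟦(1 : ℤ)⟧' := by
        have := congrArg (fun e => e ≫ (biprod.snd : D ⊞ X ⟶ X)⟦(1 : ℤ)⟧') hb
        simpa only [Category.assoc, ← Functor.map_comp, α, biprod.lift_snd, biprod.inr_snd,
          CategoryTheory.Functor.map_id, Category.comp_id] using this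
      obtain ⟨w, hw⟩ : ∃ w : V ⟶ Z, b = w ≫ z₁ := Triangle.coyoneda_exact₁ _ hZ b hb1
      refine ⟨w, ?_⟩
      rw [hb2, hw, Category.assoc])
    (by
      intro V y hy
      obtain ⟨m, hm⟩ : ∃ m : V ⟶ D ⊞ X, y = m ≫ β :=
        Triangle.coyoneda_exact₃ _ hγ' y (by
          change y ≫ γ' = 0
          rw [hz2, ← Category.assoc, hy, zero_comp])
      obtain ⟨b, hb⟩ : ∃ b : V ⟶ B, m ≫ biprod.fst = b ≫ g :=
        Triangle.coyoneda_exact₂ _ hZ (m ≫ biprod.fst) (by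
          change (m ≫ biprod.fst) ≫ z₀ = 0
          rw [Category.assoc, ← hz1, ← Category.assoc, ← hm, hy])
      refine ⟨b ≫ x₀ - m ≫ biprod.snd, ?_⟩
      have : β = biprod.fst ≫ y₀ - biprod.snd ≫ u := by ext <;> simp [β]
      rw [hm, this, Preadditive.comp_sub, ← Category.assoc, hb, Preadditive.sub_comp,
        Category.assoc, Category.assoc, Category.assoc, hu1])
    (by
      intro V m hm
      obtain ⟨k₀, hk₀⟩ : ∃ k₀ : Z ⟶ V, y₀ ≫ m = z₀ ≫ k₀ :=
        Triangle.yoneda_exact₂ _ hZ (y₀ ≫ m) (by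
          change g ≫ y₀ ≫ m = 0
          rw [← Category.assoc, ← hu1, Category.assoc, hm, comp_zero])
      obtain ⟨l, hl⟩ : ∃ l : B⟦(1 : ℤ)⟧ ⟶ V, m - z ≫ k₀ = γ' ≫ l :=
        Triangle.yoneda_exact₃ _ hγ' (m - z ≫ k₀) (by
          change β ≫ (m - z ≫ k₀) = 0
          ext
          · simp [β, hk₀, reassoc_of% hyz]
          · simp [β, hm, reassoc_of% huz])
      refine ⟨k₀ + z₁ ≫ l, ?_⟩
      rw [Preadditive.comp_add, ← Category.assoc, ← hz2, ← hl]
      abel)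
  exact ⟨u, z, θ, hθ⟩

/-- Transport of a distinguished triangle along isomorphisms of its objects. -/
theorem distTriang_transport (T : Triangle C) (hT : T ∈ distTriang C) {X Y Z : C}
    (eX : T.obj₁ ≅ X) (eY : T.obj₂ ≅ Y) (eZ : T.obj₃ ≅ Z) :
    ∃ (f : X ⟶ Y) (g : Y ⟶ Z) (h : Z ⟶ X⟦(1 : ℤ)⟧), Triangle.mk f g h ∈ distTriang C := by
  refine ⟨eX.inv ≫ T.mor₁ ≫ eY.hom, eY.inv ≫ T.mor₂ ≫ eZ.hom,
    eZ.inv ≫ T.mor₃ ≫ eX.hom⟦(1 : ℤ)⟧', isomorphic_distinguished _ hT _ ?_⟩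
  refine Triangle.isoMk _ _ eX.symm eY.symm eZ.symm ?_ ?_ ?_
  · change (eX.inv ≫ T.mor₁ ≫ eY.hom) ≫ eY.inv = eX.inv ≫ T.mor₁
    simp
  · change (eY.inv ≫ T.mor₂ ≫ eZ.hom) ≫ eZ.inv = eY.inv ≫ T.mor₂
    simp
  · change (eZ.inv ≫ T.mor₃ ≫ eX.hom⟦(1 : ℤ)⟧') ≫ eX.inv⟦(1 : ℤ)⟧' = eZ.inv ≫ T.mor₃
    simp only [Category.assoc, ← Functor.map_comp, Iso.hom_inv_id, CategoryTheory.Functor.map_id,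
      Category.comp_id]

theorem distTriang_unshift {X Y Z : C} (u : X⟦(1 : ℤ)⟧ ⟶ Y⟦(1 : ℤ)⟧)
    (z : Y⟦(1 : ℤ)⟧ ⟶ Z⟦(1 : ℤ)⟧) (θ : Z⟦(1 : ℤ)⟧ ⟶ (X⟦(1 : ℤ)⟧)⟦(1 : ℤ)⟧)
    (hT : Triangle.mk u z θ ∈ distTriang C) :
    ∃ (f : X ⟶ Y) (g : Y ⟶ Z) (h : Z ⟶ X⟦(1 : ℤ)⟧), Triangle.mk f g h ∈ distTriang C :=
  distTriang_transport _ (Triangle.shift_distinguished _ hT (-1))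
    ((shiftFunctorCompIsoId C (1 : ℤ) (-1) (by norm_num)).app X)
    ((shiftFunctorCompIsoId C (1 : ℤ) (-1) (by norm_num)).app Y)
    ((shiftFunctorCompIsoId C (1 : ℤ) (-1) (by norm_num)).app Z)

theorem BuildVal.of_iso {G : C} {t : ℝ} {B B' : C} {r : ℝ} (hB : BuildVal C G t B r)
    (e : B ≅ B') : BuildVal C G t B' r := by
  cases hB with
  | zero _ hZ => exact BuildVal.zero _ (hZ.of_iso e.symm)
  | step A _ n r f g h hT hA =>
    obtain ⟨f', g', h', hT'⟩ := distTriang_transport _ hT (Iso.refl A) e (Iso.refl _)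
    exact BuildVal.step A B' n r f' g' h' hT' hA

theorem BuildVal.extension {G : C} {t : ℝ} {A : C} {r : ℝ} (hA : BuildVal C G t A r)
    {Z : C} {s : ℝ} (hZ : BuildVal C G t Z s) :
    ∀ (B : C) (f : A ⟶ B) (g : B ⟶ Z) (h : Z ⟶ A⟦(1 : ℤ)⟧),
      Triangle.mk f g h ∈ distTriang C → BuildVal C G t B (r + s) := by
  induction hZ with
  | zero Z hZ =>
    intro B f g h hT
    have : IsIso f := (Triangle.isZero₃_iff_isIso₁ _ hT).1 hZ
    rw [add_zero]
    exact hA.of_iso (asIso f)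
  | step Z' Z n s i p q hT' hZ' ih =>
    intro B f g h hT
    obtain ⟨B', j, k, hB'⟩ := distinguished_cocone_triangle₁ (g ≫ p)
    obtain ⟨u, z, θ, hO⟩ := weak_octahedron g p _ _ (rot_of_distTriang _ hT) _ _
      (rot_of_distTriang _ hB') _ _ (rot_of_distTriang _ hT')
    obtain ⟨f', g', h', hO'⟩ := distTriang_unshift _ _ _ hO
    rw [← add_assoc]
    exact BuildVal.step B' B n _ j (g ≫ p) k hB' (ih B' f' g' h' hO')

theorem BuildVal.change_param {G : C} {t : ℝ} {B : C} {r : ℝ} (hB : BuildVal C G t B r)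
    (t' : ℝ) : ∃ r', BuildVal C G t' B r' := by
  induction hB with
  | zero Z hZ => exact ⟨0, BuildVal.zero Z hZ⟩
  | step A B n r f g h hT hA ih =>
    obtain ⟨r', hr'⟩ := ih
    exact ⟨_, BuildVal.step A B n r' f g h hT hr'⟩

theorem BuildVal.nonneg {G : C} {t : ℝ} {B : C} {r : ℝ} (hB : BuildVal C G t B r) : 0 ≤ r := by
  induction hB with
  | zero Z hZ => exact le_rfl
  | step A B n r f g h hT hA ih => positivity

theorem complexitySet_bddBelow (G F : C) (t : ℝ) : BddBelow (complexitySet C G F t) :=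
  ⟨0, by rintro r ⟨B, F', hB, _⟩; exact hB.nonneg⟩

theorem complexitySet_nonempty {G : C} (hG : IsSplitGenerator C G) (F : C) (t : ℝ) :
    (complexitySet C G F t).Nonempty := by
  obtain ⟨r, B, F', hB, e⟩ := hG F
  obtain ⟨r', hr'⟩ := hB.change_param t
  exact ⟨r', B, F', hr', e⟩

theorem add_mem_complexitySet {G : C} {t : ℝ} {A B Z : C}
    (f : A ⟶ B) (g : B ⟶ Z) (h : Z ⟶ A⟦(1 : ℤ)⟧) (hT : Triangle.mk f g h ∈ distTriang C)
    {r s : ℝ} (hr : r ∈ complexitySet C G A t) (hs : s ∈ complexitySet C G Z t) :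
    r + s ∈ complexitySet C G B t := by
  obtain ⟨A', A'', hA', ⟨eA⟩⟩ := hr
  obtain ⟨Z', Z'', hZ', ⟨eZ⟩⟩ := hs
  obtain ⟨iA, pA, hA⟩ : ∃ (i : A ⟶ A') (p : A' ⟶ A), i ≫ p = 𝟙 A :=
    ⟨biprod.inl ≫ eA.inv, eA.hom ≫ biprod.fst, by simp⟩
  obtain ⟨iZ, pZ, hZ⟩ : ∃ (i : Z ⟶ Z') (p : Z' ⟶ Z), i ≫ p = 𝟙 Z :=
    ⟨biprod.inl ≫ eZ.inv, eZ.hom ≫ biprod.fst, by simp⟩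
  obtain ⟨D, f', g', hD⟩ := distinguished_cocone_triangle₂ (pZ ≫ h ≫ iA⟦(1 : ℤ)⟧')
  obtain ⟨i, hi1, hi2⟩ : ∃ i : B ⟶ D, f ≫ i = iA ≫ f' ∧ g ≫ iZ = i ≫ g' :=
    complete_distinguished_triangle_morphism₂ _ _ hT hD iA iZ (by
      change h ≫ iA⟦(1 : ℤ)⟧' = iZ ≫ pZ ≫ h ≫ iA⟦(1 : ℤ)⟧'
      rw [reassoc_of% hZ])
  obtain ⟨p, hp1, hp2⟩ : ∃ p : D ⟶ B, f' ≫ p = pA ≫ f ∧ g' ≫ pZ = p ≫ g :=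
    complete_distinguished_triangle_morphism₂ _ _ hD hT pA pZ (by
      change (pZ ≫ h ≫ iA⟦(1 : ℤ)⟧') ≫ pA⟦(1 : ℤ)⟧' = pZ ≫ h
      rw [Category.assoc, Category.assoc, ← Functor.map_comp, hA, CategoryTheory.Functor.map_id,
        Category.comp_id])
  let φ : Triangle.mk f g h ⟶ Triangle.mk f g h :=
    { hom₁ := 𝟙 A
      hom₂ := i ≫ p
      hom₃ := 𝟙 Z
      comm₁ := by
        change f ≫ i ≫ p = 𝟙 A ≫ f
        rw [← Category.assoc, hi1, Category.assoc, hp1, ← Category.assoc, hA]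
      comm₂ := by
        change g ≫ 𝟙 Z = (i ≫ p) ≫ g
        rw [Category.assoc, ← hp2, ← Category.assoc, ← hi2, Category.assoc, hZ]
      comm₃ := by
        change h ≫ (𝟙 A)⟦(1 : ℤ)⟧' = 𝟙 Z ≫ h
        rw [CategoryTheory.Functor.map_id, Category.comp_id, Category.id_comp] }
  have hφ : IsIso (i ≫ p) := isIso₂_of_isIso₁₃ φ hT hT
    (inferInstanceAs (IsIso (𝟙 A))) (inferInstanceAs (IsIso (𝟙 Z)))
  have hmono : Mono i := mono_of_mono i p
  obtain ⟨F, a, b, hF⟩ := distinguished_cocone_triangle i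
  obtain ⟨e, -⟩ := exists_iso_binaryBiproduct_of_distTriang _ hF
    (Triangle.mor₃_eq_zero_of_mono₁ _ hF hmono)
  exact ⟨D, F, hA'.extension hZ' D f' g' _ hD, ⟨e⟩⟩

variable (C)

/-- For a distinguished triangle `A → B → C → A[1]` of nonzero objects,
`δ_t(G, B) ≤ δ_t(G, A) + δ_t(G, C)`. -/
theorem complexity_le_of_distTriang (G : C) (hG : IsSplitGenerator C G)
    (A B Z : C) (hA : ¬ IsZero A) (hB : ¬ IsZero B) (hZ : ¬ IsZero Z)
    (f : A ⟶ B) (g : B ⟶ Z) (h : Z ⟶ (shiftFunctor C (1 : ℤ)).obj A)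
    (hT : Triangle.mk f g h ∈ distTriang C) (t : ℝ) :
    complexity C G B t ≤ complexity C G A t + complexity C G Z t := by
  have key : ∀ r ∈ complexitySet C G A t, ∀ s ∈ complexitySet C G Z t,
      complexity C G B t ≤ r + s := fun r hr s hs =>
    csInf_le (complexitySet_bddBelow G B t) (add_mem_complexitySet f g h hT hr hs)
  have h1 : ∀ r ∈ complexitySet C G A t, complexity C G B t - r ≤ complexity C G Z t :=
    fun r hr => le_csInf (complexitySet_nonempty hG Z t) fun s hs => by
      linarith [key r hr s hs]
  have h2 : complexity C G B t - complexity C G Z t ≤ complexity C G A t :=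
    le_csInf (complexitySet_nonempty hG A t) fun r hr => by linarith [h1 r hr]
  linarith
end

section
/- Let X be a smooth projective variety over ℂ and let ℰ ∈ D^b(X) be a ℙ^d-object with associated ℙ^d-twist P_ℰ. Then P_ℰ(ℰ) ≅ ℰ[-2d]. -/
open CategoryTheory CategoryTheory.Limits CategoryTheory.Pretriangulated Filter

universe v u

variable (C : Type u) [Category.{v} C] [Preadditive C] [HasZeroObject C]
  [HasShift C ℤ] [∀ n : ℤ, (shiftFunctor C n).Additive] [Pretriangulated C]
  [HasFiniteBiproducts C] [CategoryTheory.Linear ℂ C]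
  [∀ X Y : C, Module.Finite ℂ (X ⟶ Y)]

namespace PdAux

variable {C}

/-- Hom-vanishing is insensitive to shifting both sides. -/
theorem vanish_shift {A Y : C} {m : ℤ} (hV : ∀ g : (shiftFunctor C m).obj A ⟶ Y, g = 0)
    (n s : ℤ) (hs : m + n = s) (g : (shiftFunctor C s).obj A ⟶ (shiftFunctor C n).obj Y) :
    g = 0 := by
  let e := (shiftFunctorAdd' C m n s hs).app A
  obtain ⟨g', hg'⟩ := (shiftFunctor C n).map_surjective (e.inv ≫ g)
  have h0 : e.inv ≫ g = 0 := by
    rw [← hg', hV g', Functor.map_zero]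
  rw [← cancel_epi e.inv, h0, comp_zero]

/-- Vanishing of maps out of an object isomorphic to a finite biproduct. -/
theorem vanish_from {k : ℕ} {B : Fin k → C} {A Z : C} (e : A ≅ biproduct B)
    (hV : ∀ i, ∀ g : B i ⟶ Z, g = 0) (g : A ⟶ Z) : g = 0 := by
  rw [← cancel_epi e.inv, comp_zero]
  apply biproduct.hom_ext'
  intro i
  rw [hV i (biproduct.ι B i ≫ e.inv ≫ g), comp_zero]

/-- Vanishing of maps into an object isomorphic to a finite biproduct. -/
theorem vanish_to {k : ℕ} {B : Fin k → C} {A Z : C} (e : A ≅ biproduct B)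
    (hV : ∀ i, ∀ g : Z ⟶ B i, g = 0) (g : Z ⟶ A) : g = 0 := by
  rw [← cancel_mono e.hom, zero_comp]
  apply biproduct.hom_ext
  intro i
  rw [hV i ((g ≫ e.hom) ≫ biproduct.π B i), zero_comp]

/-- Shifting a finite direct sum of shifts of `E`. -/
theorem shift_biprod {k : ℕ} {ns : Fin k → ℤ} {E A : C}
    (e : A ≅ biproduct (fun i => (shiftFunctor C (ns i)).obj E)) (n : ℤ) :
    Nonempty ((shiftFunctor C n).obj A ≅
      biproduct (fun i => (shiftFunctor C (ns i + n)).obj E)) :=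
  ⟨(shiftFunctor C n).mapIso e ≪≫ (shiftFunctor C n).mapBiproduct _ ≪≫
    biproduct.mapIso (fun i => ((shiftFunctorAdd C (ns i) n).app E).symm)⟩

theorem homE_zero {d : ℕ} (tw : PdTwist C d) (m n : ℤ)
    (h : ¬ ∃ k : ℕ, k ≤ d ∧ n - m = 2 * (k : ℤ))
    (g : (shiftFunctor C m).obj tw.E ⟶ (shiftFunctor C n).obj tw.E) : g = 0 := by
  let e := (shiftFunctorAdd' C (n - m) m n (by ring)).app tw.E
  obtain ⟨g', hg'⟩ := (shiftFunctor C m).map_surjective (g ≫ e.hom)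
  rw [← cancel_mono e.hom, ← hg', tw.hom_rank_zero _ h g', Functor.map_zero, zero_comp]

theorem end_scalar {d : ℕ} (tw : PdTwist C d) (t : tw.E ⟶ tw.E) : ∃ c : ℂ, t = c • 𝟙 tw.E := by
  have h1 := tw.hom_rank_one 0 (Nat.zero_le _)
  have e : tw.E ≅ (shiftFunctor C (2 * ((0 : ℕ) : ℤ))).obj tw.E :=
    ((shiftFunctorZero' C (2 * ((0 : ℕ) : ℤ)) (by simp)).app tw.E).symm
  have h2 : Module.finrank ℂ (tw.E ⟶ tw.E) = 1 := by
    rw [← h1]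
    exact (CategoryTheory.Linear.homCongr ℂ (Iso.refl _) e).finrank_eq
  have hne : 𝟙 tw.E ≠ 0 := fun h0 => tw.nonzero ((IsZero.iff_id_eq_zero _).2 h0)
  obtain ⟨c, hc⟩ := (finrank_eq_one_iff_of_nonzero' (𝟙 tw.E) hne).1 h2 t
  exact ⟨c, hc.symm⟩

theorem end_idem {d : ℕ} (tw : PdTwist C d) (t : tw.E ⟶ tw.E) (ht : t ≫ t = t) :
    t = 0 ∨ t = 𝟙 _ := by
  obtain ⟨c, rfl⟩ := end_scalar tw t
  have hne : 𝟙 tw.E ≠ 0 := fun h0 => tw.nonzero ((IsZero.iff_id_eq_zero _).2 h0)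
  have h3 : (c * c - c) • 𝟙 tw.E = 0 := by
    rw [sub_smul, mul_smul, sub_eq_zero]
    simpa using ht
  have h4 : c * (c - 1) = 0 := by
    have := (smul_eq_zero.1 h3).resolve_right hne
    linear_combination this
  rcases mul_eq_zero.1 h4 with h | h
  · left; rw [h, zero_smul]
  · right; rw [sub_eq_zero.1 h, one_smul]

theorem functor_idem {d : ℕ} (tw : PdTwist C d) (F : C ⥤ C) [F.Full] [F.Faithful]
    [F.PreservesZeroMorphisms] (t : F.obj tw.E ⟶ F.obj tw.E) (ht : t ≫ t = t) :
    t = 0 ∨ t = 𝟙 _ := by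
  obtain ⟨t, rfl⟩ := F.map_surjective t
  rw [← F.map_comp] at ht
  rcases end_idem tw t (F.map_injective ht) with h | h
  · left; rw [h, F.map_zero]
  · right; rw [h, F.map_id]

/-- Negative self-extensions of `P(E)` vanish. -/
theorem homX_zero {d : ℕ} (tw : PdTwist C d) (n : ℤ) (hn : n < 0)
    (g : tw.P.functor.obj tw.E ⟶ (shiftFunctor C n).obj (tw.P.functor.obj tw.E)) : g = 0 := by
  letI := tw.commShift
  let e := (tw.P.functor.commShiftIso n).app tw.E
  obtain ⟨g', hg'⟩ := tw.P.functor.map_surjective (g ≫ e.inv)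
  have h0 : g' = 0 := tw.hom_rank_zero n (by rintro ⟨k, -, hk⟩; omega) g'
  have h1 : g ≫ e.inv = 0 := by rw [← hg', h0, Functor.map_zero]
  rw [← cancel_mono e.inv, h1, zero_comp]

theorem main {d : ℕ} (tw : PdTwist C d) :
    Nonempty (tw.P.functor.obj tw.E ≅ (shiftFunctor C (-(2 * (d : ℤ)))).obj tw.E) := by
  obtain ⟨k, ns, ⟨eH⟩, hcard⟩ := tw.H_iso tw.E
  have hout := tw.outerTri tw.E
  have hin := Triangle.shift_distinguished _ (tw.innerTri tw.E) 1
  set X := tw.P.functor.obj tw.E with hX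
  have hXne : 𝟙 X ≠ 0 := by
    intro h0
    apply tw.nonzero
    rw [IsZero.iff_id_eq_zero]
    apply tw.P.functor.map_injective
    rw [CategoryTheory.Functor.map_id, Functor.map_zero]
    exact h0
  -- the shifts occurring in `H`
  have hns : ∀ i, ∃ m : ℕ, m ≤ d ∧ ns i = -(2 * (m : ℤ)) := by
    intro i
    by_contra hcon
    have h1 := hcard (-ns i)
    have h2 : Module.finrank ℂ (tw.E ⟶ (shiftFunctor C (-ns i)).obj tw.E) = 0 := by
      have : Subsingleton (tw.E ⟶ (shiftFunctor C (-ns i)).obj tw.E) := by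
        have hz := tw.hom_rank_zero (-ns i) (by
          rintro ⟨m, hm, h⟩
          exact hcon ⟨m, hm, by omega⟩)
        exact ⟨fun a b => by rw [hz a, hz b]⟩
      exact Module.finrank_zero_of_subsingleton
    rw [h2, Finset.card_eq_zero] at h1
    have : i ∈ (Finset.univ.filter fun j => ns j = - -ns i) := by simp
    rw [h1] at this
    simp at this
  have htop : ∃ i0, ns i0 = -(2 * (d : ℤ)) ∧ ∀ i, i ≠ i0 → -(2 * (d : ℤ)) < ns i := by
    have h1 := hcard (2 * (d : ℤ))
    rw [tw.hom_rank_one d le_rfl, Finset.card_eq_one] at h1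
    obtain ⟨i0, h1⟩ := h1
    have h2 : ∀ i, ns i = -(2 * (d : ℤ)) ↔ i = i0 := by
      intro i
      have : i ∈ (Finset.univ.filter fun j => ns j = -(2 * (d : ℤ))) ↔ i ∈ ({i0} : Finset _) := by
        rw [h1]
      simpa using this
    refine ⟨i0, (h2 i0).2 rfl, fun i hi => ?_⟩
    obtain ⟨m, hm, h⟩ := hns i
    have : ns i ≠ -(2 * (d : ℤ)) := fun h' => hi ((h2 i).1 h')
    omega
  obtain ⟨i0, hi0, hi0'⟩ := htop
  -- the pieces of the inner triangle, shifted
  obtain ⟨eH1⟩ := shift_biprod eH 1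
  obtain ⟨eH2⟩ := shift_biprod eH1 1
  obtain ⟨eHm2⟩ := shift_biprod eH (-2)
  obtain ⟨eHm1⟩ := shift_biprod eHm2 1
  obtain ⟨eG'⟩ := shift_biprod eHm1 1
  have hsh : ∀ i, ns i + -2 + 1 + 1 = ns i := fun i => by ring
  simp only [hsh] at eG'
  let G := (shiftFunctor C (1 : ℤ)).obj ((shiftFunctor C (1 : ℤ)).obj
    ((shiftFunctor C (-2 : ℤ)).obj (tw.H tw.E)))
  let eG : G ≅ biproduct (fun i => (shiftFunctor C (ns i)).obj tw.E) := eG'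
  set Tri := (Triangle.shiftFunctor C 1).obj
    (Triangle.mk (tw.θ tw.E) (tw.ι tw.E) (tw.π tw.E)) with hTri
  let μ : (shiftFunctor C (1 : ℤ)).obj (tw.T tw.E) ⟶ G := Tri.mor₃
  let q : X ⟶ G := tw.dl tw.E ≫ μ
  -- maps out of `X` and `G`
  have K1 : ∀ (Z : C) (v : G ⟶ Z), q ≫ v = 0 →
      (∀ g : (shiftFunctor C (1 : ℤ)).obj tw.E ⟶ Z, g = 0) →
      (∀ i, ∀ g : (shiftFunctor C (ns i + 1 + 1)).obj tw.E ⟶ Z, g = 0) → v = 0 := by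
    intro Z v hv h1 h2
    have hu : μ ≫ v = 0 := by
      obtain ⟨w, hw⟩ := Triangle.yoneda_exact₃ _ (rot_of_distTriang _ hout) (μ ≫ v)
        ((Category.assoc _ _ _).symm.trans hv)
      have hw0 : w = 0 := h1 w
      exact hw.trans (by rw [hw0]; exact comp_zero)
    obtain ⟨w, hw⟩ := Triangle.yoneda_exact₃ _ (rot_of_distTriang _ hin) v hu
    have hw0 : w = 0 := vanish_from eH2 h2 w
    exact hw.trans (by rw [hw0]; exact comp_zero)
  have K2 : ∀ (Z : C) (g : X ⟶ Z), tw.η tw.E ≫ g = 0 →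
      (∀ i, ∀ g : (shiftFunctor C (ns i + 1)).obj tw.E ⟶ Z, g = 0) →
      ∃ g' : G ⟶ Z, g = q ≫ g' := by
    intro Z g hg h1
    obtain ⟨w, hw⟩ := Triangle.yoneda_exact₃ _ hout g hg
    obtain ⟨w', hw'⟩ := Triangle.yoneda_exact₃ _ hin w (vanish_from eH1 h1 _)
    refine ⟨w', ?_⟩
    rw [hw, hw']
    exact (Category.assoc _ _ _).symm
  -- base case
  have base : ∀ m : ℤ, 2 ≤ m → ∀ g : (shiftFunctor C m).obj tw.E ⟶ X, g = 0 := by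
    intro m hm g
    have h1 : g ≫ tw.dl tw.E = 0 := by
      obtain ⟨w, hw⟩ := Triangle.coyoneda_exact₃ _ hin (g ≫ tw.dl tw.E)
        (vanish_to eG (fun i f => homE_zero tw m (ns i) (by
          rintro ⟨l, hl, h⟩
          obtain ⟨r, hr, h'⟩ := hns i
          omega) f) _)
      have hw0 : w = 0 := vanish_to eH1 (fun i f => homE_zero tw m (ns i + 1) (by
          rintro ⟨l, hl, h⟩
          obtain ⟨r, hr, h'⟩ := hns i
          omega) f) _
      exact hw.trans (by rw [hw0]; exact zero_comp)
    obtain ⟨w, hw⟩ := Triangle.coyoneda_exact₃ _ hout g h1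
    have hw0 : w = 0 := by
      let e := (shiftFunctorZero C ℤ).app tw.E
      have h2 := homE_zero tw m 0 (by rintro ⟨l, hl, h⟩; omega) (w ≫ e.inv)
      exact (cancel_mono e.inv).1 (h2.trans zero_comp.symm)
    exact hw.trans (by rw [hw0]; exact zero_comp)
  -- downward induction
  have step : ∀ m : ℤ, -(2 * (d : ℤ)) < m →
      (∀ m', m < m' → ∀ g : (shiftFunctor C m').obj tw.E ⟶ X, g = 0) →
      ∀ g : (shiftFunctor C m).obj tw.E ⟶ X, g = 0 := by
    intro m hm ih j
    let n : ℤ := ns i0 - m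
    have hn : n < 0 := by omega
    let e := (shiftFunctorAdd' C m n (ns i0) (by simp [n])).app tw.E
    let v0 : (shiftFunctor C (ns i0)).obj tw.E ⟶ (shiftFunctor C n).obj X :=
      e.hom ≫ (shiftFunctor C n).map j
    let v : G ⟶ (shiftFunctor C n).obj X := eG.hom ≫ biproduct.π _ i0 ≫ v0
    have hs : ∀ s : ℤ, -(2 * (d : ℤ)) < s →
        ∀ g : (shiftFunctor C s).obj tw.E ⟶ (shiftFunctor C n).obj X, g = 0 := by
      intro s hs g
      exact vanish_shift (ih (s - n) (by omega)) n s (by ring) g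
    have hv : v = 0 := K1 _ v (homX_zero tw n hn _) (hs 1 (by omega)) (fun i => hs _ (by
      obtain ⟨r, hr, h'⟩ := hns i
      omega))
    have hv0 : v0 = 0 := by
      have : biproduct.ι (fun i => (shiftFunctor C (ns i)).obj tw.E) i0 ≫ eG.inv ≫ v = v0 := by simp [v]
      rw [← this, hv, comp_zero, comp_zero]
    have hj : (shiftFunctor C n).map j = 0 := by
      rw [← cancel_epi e.hom, comp_zero]; exact hv0
    exact (Functor.map_eq_zero_iff _).1 hj
  have van : ∀ (r : ℕ) (m : ℤ), -(2 * (d : ℤ)) < m → 2 - (r : ℤ) ≤ m →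
      ∀ g : (shiftFunctor C m).obj tw.E ⟶ X, g = 0 := by
    intro r
    induction r with
    | zero => intro m _ h; exact base m (by simpa using h)
    | succ r ih =>
      intro m h h'
      exact step m h (fun m' hm' => ih m' (by omega) (by push_cast at h'; omega))
  have van' : ∀ m : ℤ, -(2 * (d : ℤ)) < m →
      ∀ g : (shiftFunctor C m).obj tw.E ⟶ X, g = 0 :=
    fun m h => van (2 + 2 * d) m h (by push_cast; omega)
  let e0 := (shiftFunctorZero C ℤ).app tw.E
  -- the case where `η` vanishes
  by_cases hη : tw.η tw.E = 0
  · obtain ⟨g, hg⟩ := K2 X (𝟙 X) (by rw [hη, zero_comp]) (fun i => van' _ (by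
      obtain ⟨r, hr, h'⟩ := hns i
      omega))
    let f : X ⟶ (shiftFunctor C (ns i0)).obj tw.E := q ≫ eG.hom ≫ biproduct.π _ i0
    let s : (shiftFunctor C (ns i0)).obj tw.E ⟶ X :=
      biproduct.ι (fun i => (shiftFunctor C (ns i)).obj tw.E) i0 ≫ eG.inv ≫ g
    have hgs : g = (eG.hom ≫ biproduct.π _ i0) ≫ s := by
      rw [← cancel_epi eG.inv]
      apply biproduct.hom_ext'
      intro i
      by_cases hi : i = i0
      · subst hi
        simp [s]
      · rw [van' _ (hi0' i hi) (biproduct.ι (fun i => (shiftFunctor C (ns i)).obj tw.E) i ≫ eG.inv ≫ g)]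
        simp [biproduct.ι_π_ne_assoc _ hi]
    have hfs : f ≫ s = 𝟙 X := by
      rw [hg]
      conv_rhs => rw [hgs]
      simp [f]
    have hsf : s ≫ f = 𝟙 _ := by
      have hid : (s ≫ f) ≫ (s ≫ f) = s ≫ f := by
        rw [Category.assoc, reassoc_of% hfs]
      rcases functor_idem tw (shiftFunctor C (ns i0)) _ hid with h | h
      · exfalso
        apply hXne
        have : 𝟙 X = f ≫ (s ≫ f) ≫ s := by
          rw [Category.assoc s f s, reassoc_of% hfs, hfs]
        rw [this, h, zero_comp, comp_zero]
      · exact h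
    rw [← hi0]
    exact ⟨⟨f, s, hfs, hsf⟩⟩
  · -- otherwise `d = 0`
    have hd : d = 0 := by
      by_contra hd
      apply hη
      rw [← cancel_epi e0.hom, comp_zero]
      exact van' 0 (by omega) (e0.hom ≫ tw.η tw.E)
    have hns0 : ∀ i, ns i = 0 := by
      intro i
      obtain ⟨r, hr, h'⟩ := hns i
      omega
    have hcomp : tw.ev tw.E ≫ tw.η tw.E = 0 := comp_distTriang_mor_zero₁₂ _ hout
    -- a nonzero endomorphism of `E` does not kill `η`
    have hw : ∀ w : tw.E ⟶ tw.E, w ≫ tw.η tw.E = 0 → w = 0 := by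
      intro w hw
      obtain ⟨c, rfl⟩ := end_scalar tw w
      rw [CategoryTheory.Linear.smul_comp, Category.id_comp] at hw
      rw [(smul_eq_zero.1 hw).resolve_right hη, zero_smul]
    have hιev : tw.ι tw.E ≫ tw.ev tw.E = 0 := by
      rw [← cancel_epi eH.inv, comp_zero]
      apply biproduct.hom_ext'
      intro i
      rw [comp_zero]
      let e := (shiftFunctorZero' C (ns i) (hns0 i)).app tw.E
      rw [← cancel_epi e.inv, comp_zero]
      apply hw
      simp only [Category.assoc, hcomp, comp_zero]
    have hev : tw.ev tw.E = 0 := by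
      obtain ⟨w, hw'⟩ := Triangle.yoneda_exact₃ _ (tw.innerTri tw.E) (tw.ev tw.E) hιev
      have hw0 : w = 0 := vanish_from eHm1 (fun i f => by
        rw [← cancel_mono e0.inv, zero_comp]
        exact homE_zero tw _ 0 (by
          rintro ⟨l, hl, h⟩
          have := hns0 i
          omega) _) w
      exact hw'.trans (by rw [hw0]; exact comp_zero)
    obtain ⟨(r : X ⟶ tw.E), hr⟩ := Triangle.yoneda_exact₂ _ hout (𝟙 tw.E) (by
      change tw.ev tw.E ≫ _ = 0
      rw [hev]; exact zero_comp)
    have hr' : tw.η tw.E ≫ r = 𝟙 tw.E := hr.symm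
    have hrη : r ≫ tw.η tw.E = 𝟙 X := by
      have hid : (r ≫ tw.η tw.E) ≫ (r ≫ tw.η tw.E) = r ≫ tw.η tw.E := by
        rw [Category.assoc, reassoc_of% hr']
      rcases functor_idem tw tw.P.functor _ hid with h | h
      · exfalso
        apply hη
        have : tw.η tw.E = tw.η tw.E ≫ r ≫ tw.η tw.E := by rw [reassoc_of% hr']
        rw [this, h, comp_zero]
      · exact h
    have hd' : -(2 * (d : ℤ)) = 0 := by omega
    exact ⟨(Iso.mk r (tw.η tw.E) hrη hr') ≪≫
      ((shiftFunctorZero' C (-(2 * (d : ℤ))) hd').app tw.E).symm⟩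

end PdAux

/-- Huybrechts–Thomas. For a `ℙ^d`-object `ℰ` with `ℙ^d`-twist `P_ℰ`,
`P_ℰ(ℰ) ≅ ℰ[-2d]`. -/
theorem PdTwist_obj_self (d : ℕ) (tw : PdTwist C d) :
    Nonempty (tw.P.functor.obj tw.E ≅ (shiftFunctor C (-(2 * (d : ℤ)))).obj tw.E) := by
  exact PdAux.main tw
end
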